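/- arXiv:2310.02244 — 2 statements merged into one kernel-verified Lean document; each statement's English description precedes it below -/
import Mathlib

section
/- With Γ^L and C^L as defined in the context, there exist a constant c > 0 and an integer k₀ such that for every L = 2^k with k ≥ k₀ + 1, every admissible index (t, r, a, b) with r < t, every p ∈ {0, 1/L, 2/L, …, 1} (p > 0 for C) and every q ∈ (0,1]: |Γ^{L/2}_{t,r,a,b}(p, q) − Γ^L_{t,r,a,b}(p, q)| ≤ c/L and |C^{L/2}_{t,r,a}(p) − C^L_{t,r,a}(p)| ≤ c/L. In particular the dyadic sequences (Γ^{2^k}(p,q))_k and (C^{2^k}(p))_k converge at geometric rate. -/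
open MeasureTheory Set Finset Filter Topology

/-- The defining recursion (from the Tensor-Program analysis of a depth-`L` linear residual
network `x^l = x^{l−1} + L^{−1/2} W^l x^{l−1}` trained for `T` SGD steps under Depth-μP)
for the coefficient functions `Γ^L_{t,r,a,b}(p,q)` and covariance functions `C^L_{t,s,a}(p)`,
together with the output values `f̊_t` and loss derivatives `χ̊_t = ℓ'_t(f̊_t)`.

Conventions: Booleans encode the indices `a, b ∈ {0,1}` (`false = 0`, `true = 1`); the
time index `r, s = −1` refers to the input/output layers `U, V`; `C_{−1,−1,·} ≡ 1`;
`C_{t,s,·} ≡ 0` if exactly one of `t, s` is `−1`; `C` is symmetric; `Γ_{s,r,·,·} ≡ 0` for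
`r > s`; `Γ^L` is constant in `p` on each interval `((l−1)/L, l/L]`. -/
structure IsLinearTP (T L : ℕ) (ξ : ℕ → ℝ) (ℓ' : ℕ → ℝ → ℝ)
    (Γ : ℕ → ℤ → Bool → Bool → ℝ → ℝ → ℝ)
    (C : ℤ → ℤ → Bool → ℝ → ℝ)
    (f χ : ℕ → ℝ) : Prop where
  C_symm : ∀ (t s : ℤ) (b : Bool) (p : ℝ), C t s b p = C s t b p
  C_base : ∀ (b : Bool) (p : ℝ), C (-1) (-1) b p = 1
  C_mixed : ∀ t : ℤ, 0 ≤ t → ∀ (b : Bool) (p : ℝ), C t (-1) b p = 0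
  Γ_vanish : ∀ (t : ℕ) (r : ℤ), (t : ℤ) < r → ∀ (a b : Bool) (p q : ℝ), Γ t r a b p q = 0
  Γ_const : ∀ t : ℕ, t < T → ∀ r : ℤ, -1 ≤ r → r ≤ (t : ℤ) → ∀ a b : Bool,
    ∀ l : ℕ, 1 ≤ l → l ≤ L → ∀ p q : ℝ, ((l : ℝ) - 1) / L < p → p ≤ (l : ℝ) / L →
      0 < q → q ≤ 1 → Γ t r a b p q = Γ t r a b ((l : ℝ) / L) q
  fwd_init : ∀ t : ℕ, t < T → ∀ r : ℤ, -1 ≤ r → r ≤ (t : ℤ) → ∀ b : Bool,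
    ∀ q : ℝ, 0 < q → q ≤ 1 →
      Γ t r false b 0 q = if r = -1 ∧ b = false then ξ t else 0
  fwd_step : ∀ t : ℕ, t < T → ∀ l : ℕ, 1 ≤ l → l ≤ L → ∀ r : ℤ, -1 ≤ r → r ≤ (t : ℤ) →
    ∀ b : Bool, ∀ p q : ℝ, ((l : ℝ) - 1) / L < p → p ≤ (l : ℝ) / L → 0 < q → q ≤ 1 →
      Γ t r false b p q =
        Γ t r false b (((l : ℝ) - 1) / L) q
          + (if (t : ℤ) = r ∧ b = false ∧ (l : ℤ) = ⌈(L : ℝ) * q⌉ then 1 else 0)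
          + (1 / (L : ℝ)) * ∑ s ∈ Finset.range t,
              Γ s r true b ((l : ℝ) / L) q *
                (Γ t (s : ℤ) false true (((l : ℝ) - 1) / L) ((l : ℝ) / L)
                  - C (t : ℤ) (s : ℤ) false ((l : ℝ) / L))
  fwd_C : ∀ t : ℕ, t < T → ∀ s : ℕ, s ≤ t → ∀ l : ℕ, 1 ≤ l → l ≤ L →
    ∀ p : ℝ, ((l : ℝ) - 1) / L < p → p ≤ (l : ℝ) / L →
      C (t : ℤ) (s : ℤ) false p =
        ∑ t' ∈ Finset.Icc (-1 : ℤ) (t : ℤ), ∑ s' ∈ Finset.Icc (-1 : ℤ) (s : ℤ), ∑ b : Bool,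
          ∫ q in Ioc (0 : ℝ) 1,
            Γ t t' false b (((l : ℝ) - 1) / L) q * C t' s' b q *
              Γ s s' false b (((l : ℝ) - 1) / L) q
  f_def : ∀ t : ℕ, t < T → f t = Γ t (-1) false true 1 1
  χ_def : ∀ t : ℕ, t < T → χ t = ℓ' t (f t)
  bwd_init : ∀ t : ℕ, t < T → ∀ r : ℤ, -1 ≤ r → r ≤ (t : ℤ) → ∀ b : Bool,
    ∀ q : ℝ, 0 < q → q ≤ 1 →
      Γ t r true b 1 q = if r = -1 ∧ b = true then χ t else 0
  bwd_step : ∀ t : ℕ, t < T → ∀ l : ℕ, 1 ≤ l → l ≤ L → ∀ r : ℤ, -1 ≤ r → r ≤ (t : ℤ) →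
    ∀ b : Bool, ∀ p q : ℝ, ((l : ℝ) - 2) / L < p → p ≤ ((l : ℝ) - 1) / L → 0 ≤ p →
      0 < q → q ≤ 1 →
      Γ t r true b p q =
        Γ t r true b ((l : ℝ) / L) q
          + (if (t : ℤ) = r ∧ b = true ∧ (l : ℤ) = ⌈(L : ℝ) * q⌉ then 1 else 0)
          + (1 / (L : ℝ)) * ∑ s ∈ Finset.range t,
              Γ s r false b (((l : ℝ) - 1) / L) q *
                (Γ t (s : ℤ) true false ((l : ℝ) / L) ((l : ℝ) / L)
                  - C (t : ℤ) (s : ℤ) true ((l : ℝ) / L))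
  bwd_C : ∀ t : ℕ, t < T → ∀ s : ℕ, s ≤ t → ∀ l : ℕ, 1 ≤ l → l ≤ L →
    ∀ p : ℝ, ((l : ℝ) - 1) / L < p → p ≤ (l : ℝ) / L →
      C (t : ℤ) (s : ℤ) true p =
        ∑ t' ∈ Finset.Icc (-1 : ℤ) (t : ℤ), ∑ s' ∈ Finset.Icc (-1 : ℤ) (s : ℤ), ∑ b : Bool,
          ∫ q in Ioc (0 : ℝ) 1,
            Γ t t' true b ((l : ℝ) / L) q * C t' s' b q * Γ s s' true b ((l : ℝ) / L) q

/-!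
Number the layers, and the cells `((m - 1) / L, m / L]` of the variable `q`, in the order in which a
sweep visits them. Then the forward and the backward sweep obey one and the same recursion, each of
them with the sweeps of the earlier time steps as data. In that recursion the unknown `Γ_{t,r}` with
`r < t` and `C_{t,s}` with `s < t` satisfy a coupled discrete Gronwall inequality whose constants do
not depend on the depth. Applied to the values themselves it bounds them uniformly in the depth.

Applied to the difference between depths `N` and `2 * N` it gives the estimate `O(1 / N)`, because
replacing one coarse layer by two fine ones makes an error of that order in total. The only
coefficients that do not differ by `O(1 / N)` are the indicators `Γ_{t,t}`: they differ by `1`, but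
only on the boundedly many cells next to the current layer, and they enter only through averages
over all cells. The sweeps are treated one after the other, time step by time step; since `ℓ'_t` is
Lipschitz on the bounded range of the outputs, the input `χ_t` of the backward sweep is controlled
by the forward sweep.
-/

/-! ### Finite sums -/

lemma abs_sum_le_card_mul {ι : Type*} {S : Finset ι} {f : ι → ℝ} {B : ℝ}
    (h : ∀ x ∈ S, |f x| ≤ B) : |∑ x ∈ S, f x| ≤ S.card * B :=
  (S.abs_sum_le_sum_abs f).trans ((S.sum_le_card_nsmul _ B h).trans_eq (nsmul_eq_mul _ _))

lemma abs_sum_sub_sum_le {ι : Type*} {S : Finset ι} {f g E : ι → ℝ}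
    (h : ∀ x ∈ S, |f x - g x| ≤ E x) : |∑ x ∈ S, f x - ∑ x ∈ S, g x| ≤ ∑ x ∈ S, E x := by
  rw [← Finset.sum_sub_distrib]
  exact (S.abs_sum_le_sum_abs _).trans (Finset.sum_le_sum h)

lemma abs_mul_le_mul {x y A B : ℝ} (hx : |x| ≤ A) (hy : |y| ≤ B) : |x * y| ≤ A * B := by
  rw [abs_mul]
  exact mul_le_mul hx hy (abs_nonneg y) ((abs_nonneg x).trans hx)

lemma abs_mul_sub_mul_le {x y x' y' A B u v : ℝ} (hxx' : |x - x'| ≤ u) (hyy' : |y - y'| ≤ v)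
    (hx' : |x'| ≤ A) (hy : |y| ≤ B) : |x * y - x' * y'| ≤ u * B + A * v :=
  calc |x * y - x' * y'| = |(x - x') * y + x' * (y - y')| := by ring_nf
    _ ≤ |(x - x') * y| + |x' * (y - y')| := abs_add_le _ _
    _ ≤ u * B + A * v := add_le_add (abs_mul_le_mul hxx' hy) (abs_mul_le_mul hx' hyy')

lemma sum_range_two_mul_half (F : ℕ → ℝ) (j : ℕ) :
    ∑ l ∈ Finset.range (2 * j), F (l / 2) = 2 * ∑ l ∈ Finset.range j, F l := by
  induction j with
  | zero => simp
  | succ n ih =>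
    rw [Nat.mul_succ, Finset.sum_range_succ, Finset.sum_range_succ, Finset.sum_range_succ, ih,
      show (2 * n + 1) / 2 = n by omega, show 2 * n / 2 = n by omega]
    ring

lemma average_half (N : ℕ) (F : ℕ → ℝ) (j : ℕ) :
    1 / (N : ℝ) * ∑ l ∈ Finset.range j, F l =
      1 / ((2 * N : ℕ) : ℝ) * ∑ l ∈ Finset.range (2 * j), F (l / 2) := by
  rw [sum_range_two_mul_half, Nat.cast_mul, Nat.cast_ofNat, one_div_mul_eq_div, one_div_mul_eq_div,
    mul_div_mul_left _ _ two_ne_zero]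

lemma abs_average_le {L : ℕ} {f : ℕ → ℝ} {B : ℝ} (hB : 0 ≤ B) (h : ∀ m < L, |f m| ≤ B) :
    |1 / (L : ℝ) * ∑ m ∈ Finset.range L, f m| ≤ B := by
  have hsum := abs_sum_le_card_mul fun m hm => h m (Finset.mem_range.mp hm)
  rw [Finset.card_range] at hsum
  rw [one_div_mul_eq_div, abs_div, Nat.abs_cast]
  exact div_le_of_le_mul₀ (by positivity) hB (by linarith)

lemma abs_one_div_mul_sum_le {L i : ℕ} {f g : ℕ → ℝ} {c : ℝ} (h : ∀ l < i, |f l| ≤ c * g l) :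
    |1 / (L : ℝ) * ∑ l ∈ Finset.range i, f l| ≤ c / L * ∑ l ∈ Finset.range i, g l := by
  rw [one_div_mul_eq_div, abs_div, Nat.abs_cast, div_mul_eq_mul_div, Finset.mul_sum]
  gcongr
  exact (Finset.abs_sum_le_sum_abs _ _).trans
    (Finset.sum_le_sum fun l hl => h l (Finset.mem_range.mp hl))

lemma abs_sum_range_sub_sum_range_le {p i : ℕ} (hpi : p ≤ i + 1) (hip : i ≤ p + 1)
    {f g E : ℕ → ℝ} {Z : ℝ} (hf : ∀ l < p, |f l| ≤ Z) (hg : ∀ l < i, |g l| ≤ Z) (hZ : 0 ≤ Z)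
    (hE : ∀ l < i, 0 ≤ E l) (hfg : ∀ l < i, l < p → |f l - g l| ≤ E l) :
    |∑ l ∈ Finset.range p, f l - ∑ l ∈ Finset.range i, g l| ≤
      Z + ∑ l ∈ Finset.range i, E l := by
  have common {n : ℕ} (hni : n ≤ i) (hnp : n ≤ p) :=
    abs_sum_sub_sum_le (S := Finset.range n) fun l hl =>
      hfg l ((Finset.mem_range.mp hl).trans_le hni) ((Finset.mem_range.mp hl).trans_le hnp)
  obtain rfl | rfl | rfl : i = p + 1 ∨ p = i ∨ p = i + 1 := by omega
  · rw [Finset.sum_range_succ g, Finset.sum_range_succ E, ← sub_sub]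
    linarith [abs_sub (∑ l ∈ Finset.range p, f l - ∑ l ∈ Finset.range p, g l) (g p),
      common (Nat.le_succ p) le_rfl, hg p p.lt_succ_self, hE p p.lt_succ_self]
  · linarith [common le_rfl le_rfl]
  · rw [Finset.sum_range_succ f, add_sub_right_comm]
    linarith [abs_add_le (∑ l ∈ Finset.range i, f l - ∑ l ∈ Finset.range i, g l) (f i),
      common le_rfl (Nat.le_succ i), hf i i.lt_succ_self]

/-- The indicator of the cells `m` that touch the grid point `i`, that is of `m = i` and
`m = i - 1`. It records where the coefficient arrays of two depths may differ by `O(1)`. -/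
def nearDiag (i m : ℕ) : ℝ := if m = i ∨ m + 1 = i then 1 else 0

lemma nearDiag_nonneg (i m : ℕ) : 0 ≤ nearDiag i m := by
  unfold nearDiag
  split_ifs <;> norm_num

lemma nearDiag_reflect {L l m : ℕ} (hl : l < L) (hm : m < L) :
    nearDiag (L - 1 - l) (L - 1 - m) = nearDiag m l := by
  unfold nearDiag
  congr 1
  exact propext (by omega)

lemma sum_nearDiag_le (i n : ℕ) : ∑ m ∈ Finset.range n, nearDiag i m ≤ 2 := by
  have hsub : {m ∈ Finset.range n | m = i ∨ m + 1 = i} ⊆ {i, i - 1} := fun m hm => by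
    simp only [Finset.mem_filter, Finset.mem_insert, Finset.mem_singleton] at hm ⊢
    omega
  simp only [nearDiag, Finset.sum_boole]
  exact_mod_cast (Finset.card_le_card hsub).trans Finset.card_le_two

/-! ### Discrete Gronwall inequalities -/

lemma add_mul_sum_le_mul_exp {n : ℕ} {A θ : ℝ} {u : ℕ → ℝ} (hA : 0 ≤ A) (hθ : 0 ≤ θ)
    (h : ∀ i < n, u i ≤ A + θ * ∑ l ∈ Finset.range i, u l) :
    A + θ * ∑ l ∈ Finset.range n, u l ≤ A * Real.exp (n * θ) := by
  have hpow : ∀ i ≤ n, A + θ * ∑ l ∈ Finset.range i, u l ≤ A * (1 + θ) ^ i := by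
    intro i hi
    induction i with
    | zero => simp
    | succ i ih =>
      have ih := ih (Nat.le_of_succ_le hi)
      rw [Finset.sum_range_succ, pow_succ]
      linarith [mul_le_mul_of_nonneg_left ((h i hi).trans ih) hθ]
  refine (hpow n le_rfl).trans (mul_le_mul_of_nonneg_left ?_ hA)
  rw [Real.exp_nat_mul, add_comm]
  exact pow_le_pow_left₀ (by positivity) (Real.add_one_le_exp θ) n

/-- The amplification factor of the coupled Gronwall inequality on a grid of mesh `1 / L`. It
depends on the coupling strength `K` but not on `L`. -/
noncomputable def gronwallConst (K : ℝ) : ℝ := (2 + K) * Real.exp (K * (K + 2))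

lemma one_le_gronwallConst {K : ℝ} (hK : 0 ≤ K) : 1 ≤ gronwallConst K :=
  one_le_mul_of_one_le_of_one_le (by linarith) (Real.one_le_exp (by positivity))

section CoupledGronwall

variable {L : ℕ} {A K : ℝ} {w v : ℕ → ℝ}

lemma mul_exp_le_gronwallConst_mul {i : ℕ} (hA : 0 ≤ A) (hK : 0 ≤ K) (hi : i ≤ L) :
    (2 + K) * A * Real.exp (i * (K * (K + 2) / L)) ≤ gronwallConst K * A := by
  have hexp : (i : ℝ) * (K * (K + 2) / L) ≤ K * (K + 2) :=
    calc (i : ℝ) * (K * (K + 2) / L) ≤ L * (K * (K + 2) / L) := by gcongr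
      _ = K * (K + 2) * (L / L) := by ring
      _ ≤ K * (K + 2) := mul_le_of_le_one_right (by positivity) (div_self_le_one _)
  rw [gronwallConst, mul_right_comm]
  gcongr

lemma coupled_gronwall (hA : 0 ≤ A) (hK : 0 ≤ K) (hw : ∀ i, 0 ≤ w i) (hv : ∀ i, 0 ≤ v i)
    (hw_le : ∀ i < L, w i ≤ A + K / L * ∑ l ∈ Finset.range i, (w l + v l))
    (hv_le : ∀ i < L, v i ≤ A + K * w i + K / L * ∑ l ∈ Finset.range i, v l) :
    (∀ i ≤ L, A + K / L * ∑ l ∈ Finset.range i, (w l + v l) ≤ gronwallConst K * A) ∧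
      ∀ i < L, v i ≤ gronwallConst K * A := by
  have hsum_nonneg (i : ℕ) : 0 ≤ ∑ l ∈ Finset.range i, (w l + v l) :=
    Finset.sum_nonneg fun l _ => add_nonneg (hw l) (hv l)
  have hstep : ∀ i < L, w i + v i ≤
      (2 + K) * A + K * (K + 2) / L * ∑ l ∈ Finset.range i, (w l + v l) := by
    intro i hi
    have hvsum : K / L * ∑ l ∈ Finset.range i, v l ≤
        K / L * ∑ l ∈ Finset.range i, (w l + v l) :=
      mul_le_mul_of_nonneg_left (Finset.sum_le_sum fun l _ => le_add_of_nonneg_left (hw l))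
        (by positivity)
    calc w i + v i ≤ (2 + K) * A + (2 + K) * (K / L * ∑ l ∈ Finset.range i, (w l + v l)) := by
          linarith [hw_le i hi, hv_le i hi, mul_le_mul_of_nonneg_left (hw_le i hi) hK]
      _ = _ := by ring
  have hbound : ∀ i ≤ L, (2 + K) * A + K * (K + 2) / L * ∑ l ∈ Finset.range i, (w l + v l) ≤
      gronwallConst K * A := fun i hi =>
    (add_mul_sum_le_mul_exp (by positivity) (by positivity)
      fun l hl => hstep l (hl.trans_le hi)).trans (mul_exp_le_gronwallConst_mul hA hK hi)
  constructor
  · refine fun i hi => le_trans ?_ (hbound i hi)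
    refine add_le_add (le_mul_of_one_le_left hA (by linarith))
      (mul_le_mul_of_nonneg_right ?_ (hsum_nonneg i))
    gcongr
    exact le_mul_of_one_le_right hK (by linarith)
  · exact fun i hi => (le_add_of_nonneg_left (hw i)).trans ((hstep i hi).trans (hbound i hi.le))

lemma gronwall_of_le_add_sum_add {B : ℝ} (hA : 0 ≤ A) (hB : 0 ≤ B) (hK : 0 ≤ K) (hv : ∀ i, 0 ≤ v i)
    (hv_le : ∀ i < L, v i ≤ A + K / L * ∑ l ∈ Finset.range i, (B + v l)) :
    ∀ i < L, v i ≤ gronwallConst K * (A + K * B) := by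
  have hshift : ∀ i < L, v i ≤ A + K * B + K / L * ∑ l ∈ Finset.range i, v l := by
    intro i hi
    have hiL : K * B * (i / L) ≤ K * B :=
      mul_le_of_le_one_right (by positivity) (div_le_one_of_le₀ (by exact_mod_cast hi.le)
        (Nat.cast_nonneg L))
    calc v i ≤ A + K / L * ∑ l ∈ Finset.range i, (B + v l) := hv_le i hi
      _ = A + K * B * (i / L) + K / L * ∑ l ∈ Finset.range i, v l := by
        rw [Finset.sum_add_distrib, Finset.sum_const, Finset.card_range, nsmul_eq_mul]
        ring
      _ ≤ _ := by gcongr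
  have hsum_nonneg (i : ℕ) : 0 ≤ K / L * ∑ l ∈ Finset.range i, v l :=
    mul_nonneg (by positivity) (Finset.sum_nonneg fun l _ => hv l)
  refine (coupled_gronwall (w := 0) (by positivity) hK (fun _ => le_rfl) hv (fun i _ => ?_)
    fun i hi => ?_).2
  · simpa using add_nonneg (by positivity : 0 ≤ A + K * B) (hsum_nonneg i)
  · simpa using hshift i hi

end CoupledGronwall

/-- The largest absolute value of `f` on the finite set `S`, which is `0` when `S` is empty. It
turns estimates on a family of unknowns into estimates on a single real sequence. -/
noncomputable def supAbs {ι : Type*} (S : Finset ι) (f : ι → ℝ) : ℝ := ↑(S.sup fun x => ‖f x‖₊)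

section SupAbs

variable {ι : Type*} {S : Finset ι} {f : ι → ℝ}

lemma supAbs_nonneg : 0 ≤ supAbs S f := NNReal.coe_nonneg _

lemma abs_le_supAbs {x : ι} (hx : x ∈ S) : |f x| ≤ supAbs S f :=
  NNReal.coe_le_coe.mpr (Finset.le_sup (f := fun x => ‖f x‖₊) hx)

lemma supAbs_le {B : ℝ} (hB : 0 ≤ B) (h : ∀ x ∈ S, |f x| ≤ B) : supAbs S f ≤ B := by
  lift B to NNReal using hB
  exact NNReal.coe_le_coe.mpr (Finset.sup_le h)

end SupAbs

/-! ### The recursion on the grid -/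

/-- The values of the recursion on the grid of a depth-`L` network, in coordinates that do not
distinguish the two sweeps. The forward sweep (`a = false`) and the backward sweep (`a = true`) each
number the layers `0, …, L - 1` in the order in which they visit them, and
* `input t a` is what the sweep starts from: `ξ_t` forward and `χ̊_t` backward;
* `gamma t r a b i m` is `Γ_{t,r,a,b}(p, q)` after the first `i` layers of sweep `a`, for `q` in the
  `m`-th cell visited by sweep `a`;
* `cov t s a m` is `C_{t,s,a}` on the `m`-th cell visited by sweep `a`. -/
structure SweepData where
  input : ℕ → Bool → ℝ
  gamma : ℕ → ℤ → Bool → Bool → ℕ → ℕ → ℝ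
  cov : ℤ → ℤ → Bool → ℕ → ℝ

namespace SweepData

/-- The covariance of sweep `b` on the `m`-th cell visited by sweep `a`. -/
def orientedCov (S : SweepData) (L : ℕ) (a : Bool) (t s : ℤ) (b : Bool) (m : ℕ) : ℝ :=
  S.cov t s b (if b = a then m else L - 1 - m)

/-- The recursion of a depth-`L` network on its grid, for the time steps before `T`. -/
structure IsSolution (S : SweepData) (T L : ℕ) (ξ : ℕ → ℝ) (ℓ' : ℕ → ℝ → ℝ) : Prop where
  input_false : ∀ t < T, S.input t false = ξ t
  input_true : ∀ t < T, S.input t true = ℓ' t (S.gamma t (-1) false true L (L - 1))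
  cov_symm : ∀ (t s : ℤ) (a : Bool) (m : ℕ), S.cov t s a m = S.cov s t a m
  cov_base : ∀ (a : Bool) (m : ℕ), S.cov (-1) (-1) a m = 1
  cov_mixed : ∀ t : ℤ, 0 ≤ t → ∀ (a : Bool) (m : ℕ), S.cov t (-1) a m = 0
  gamma_of_lt : ∀ (t : ℕ) (r : ℤ), (t : ℤ) < r → ∀ (a b : Bool) (i m : ℕ),
    S.gamma t r a b i m = 0
  gamma_zero : ∀ t < T, ∀ r : ℤ, -1 ≤ r → r ≤ t → ∀ (a b : Bool), ∀ m < L,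
    S.gamma t r a b 0 m = if r = -1 ∧ b = a then S.input t a else 0
  gamma_succ : ∀ t < T, ∀ r : ℤ, -1 ≤ r → r ≤ t → ∀ (a b : Bool), ∀ i < L, ∀ m < L,
    S.gamma t r a b (i + 1) m = S.gamma t r a b i m
      + (if (t : ℤ) = r ∧ b = a ∧ m = i then 1 else 0)
      + 1 / (L : ℝ) * ∑ s ∈ Finset.range t, S.gamma s r (!a) b (L - 1 - i) (L - 1 - m) *
          (S.gamma t s a (!a) i i - S.cov t s a i)
  cov_eq : ∀ t < T, ∀ s ≤ t, ∀ (a : Bool), ∀ i < L,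
    S.cov t s a i = ∑ t' ∈ Finset.Icc (-1 : ℤ) t, ∑ s' ∈ Finset.Icc (-1 : ℤ) s, ∑ b : Bool,
      1 / (L : ℝ) * ∑ m ∈ Finset.range L,
        S.gamma t t' a b i m * S.orientedCov L a t' s' b m * S.gamma s s' a b i m

/-- `L` times the change of `gamma t r a b · m` across layer `l`, for `r < t`. -/
def increment (S : SweepData) (L t : ℕ) (r : ℤ) (a b : Bool) (l m : ℕ) : ℝ :=
  ∑ s ∈ Finset.range t, S.gamma s r (!a) b (L - 1 - l) (L - 1 - m) *
    (S.gamma t s a (!a) l l - S.cov t s a l)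

/-- The factor that multiplies `gamma t t' a b i m` in the recursion for `cov t s a i`. -/
def covWeight (S : SweepData) (L : ℕ) (t' : ℤ) (s : ℕ) (s' : ℤ) (a b : Bool) (i m : ℕ) : ℝ :=
  S.orientedCov L a t' s' b m * S.gamma s s' a b i m

/-- The summand of the recursion for `cov t s a i` at a past time `t' < t`. -/
noncomputable def covPast (S : SweepData) (L t : ℕ) (t' : ℤ) (s : ℕ) (s' : ℤ) (a b : Bool)
    (i : ℕ) : ℝ :=
  1 / (L : ℝ) * ∑ m ∈ Finset.range L, S.gamma t t' a b i m * S.covWeight L t' s s' a b i m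

/-- The summand of the recursion for `cov t s a i` at the present time `t' = t`, where
`gamma t t` is an indicator and only the cells `m < i` already visited contribute. -/
noncomputable def covPresent (S : SweepData) (L t s : ℕ) (s' : ℤ) (a : Bool) (i : ℕ) : ℝ :=
  1 / (L : ℝ) * ∑ m ∈ Finset.range i, S.cov t s' a m * S.gamma s s' a a i m

namespace IsSolution

variable {S : SweepData} {T L t s : ℕ} {ξ : ℕ → ℝ} {ℓ' : ℕ → ℝ → ℝ} {a b : Bool} {i m : ℕ}

lemma gamma_self (h : S.IsSolution T L ξ ℓ') (ht : t < T) (hi : i ≤ L) (hm : m < L) :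
    S.gamma t t a b i m = if b = a ∧ m < i then 1 else 0 := by
  induction i with
  | zero =>
    rw [h.gamma_zero t ht t (by omega) le_rfl a b m hm, if_neg (by omega), if_neg (by omega)]
  | succ i ih =>
    have hpast : ∀ s ∈ Finset.range t, S.gamma s t (!a) b (L - 1 - i) (L - 1 - m) *
        (S.gamma t s a (!a) i i - S.cov t s a i) = 0 := fun s hs => by
      rw [h.gamma_of_lt s t (by exact_mod_cast Finset.mem_range.mp hs), zero_mul]
    rw [h.gamma_succ t ht t (by omega) le_rfl a b i hi m hm, ih (Nat.le_of_succ_le hi),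
      Finset.sum_eq_zero hpast]
    grind

lemma gamma_eq_add_sum_increment (h : S.IsSolution T L ξ ℓ') (ht : t < T) {r : ℤ}
    (hr : r ∈ Finset.Ico (-1 : ℤ) t) (hi : i ≤ L) (hm : m < L) :
    S.gamma t r a b i m = (if r = -1 ∧ b = a then S.input t a else 0) +
      1 / (L : ℝ) * ∑ l ∈ Finset.range i, S.increment L t r a b l m := by
  obtain ⟨hr, hrt⟩ := Finset.mem_Ico.mp hr
  induction i with
  | zero => rw [h.gamma_zero t ht r hr hrt.le a b m hm, Finset.sum_range_zero, mul_zero, add_zero]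
  | succ i ih =>
    have hnot_self : ¬((t : ℤ) = r ∧ b = a ∧ m = i) := fun hc => hrt.ne' hc.1
    rw [h.gamma_succ t ht r hr hrt.le a b i hi m hm, ih (Nat.le_of_succ_le hi), if_neg hnot_self,
      Finset.sum_range_succ, mul_add, increment]
    ring

lemma cov_eq_sum_covPast_add_sum_covPresent (h : S.IsSolution T L ξ ℓ') (ht : t < T) (hs : s ≤ t)
    (hi : i < L) :
    S.cov t s a i =
      ∑ t' ∈ Finset.Ico (-1 : ℤ) t, ∑ s' ∈ Finset.Icc (-1 : ℤ) s, ∑ b : Bool,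
        S.covPast L t t' s s' a b i +
      ∑ s' ∈ Finset.Icc (-1 : ℤ) s, S.covPresent L t s s' a i := by
  have hpresent (s' : ℤ) : ∑ b : Bool, 1 / (L : ℝ) * ∑ m ∈ Finset.range L,
      S.gamma t t a b i m * S.orientedCov L a t s' b m * S.gamma s s' a b i m =
        S.covPresent L t s s' a i := by
    have hterm : ∀ b : Bool, ∀ m ∈ Finset.range L,
        S.gamma t t a b i m * S.orientedCov L a t s' b m * S.gamma s s' a b i m =
          if b = a ∧ m < i then S.cov t s' a m * S.gamma s s' a a i m else 0 := by
      intro b m hm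
      rw [h.gamma_self ht hi.le (Finset.mem_range.mp hm), orientedCov]
      split_ifs with hb <;> simp_all
    have hvisited : {m ∈ Finset.range L | m < i} = Finset.range i := by
      ext m
      simp only [Finset.mem_filter, Finset.mem_range]
      omega
    rw [Fintype.sum_congr _ _ fun b => congrArg _ (Finset.sum_congr rfl (hterm b)),
      Fintype.sum_eq_single a fun b hb => by simp [hb]]
    simp only [true_and, ← Finset.sum_filter, hvisited, covPresent]
  rw [h.cov_eq t ht s hs a i hi, ← Finset.Ico_insert_right (by omega : (-1 : ℤ) ≤ t),
    Finset.sum_insert Finset.right_notMem_Ico, add_comm]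
  refine congrArg₂ (· + ·) ?_ (Finset.sum_congr rfl fun s' _ => hpresent s')
  simp only [covPast, covWeight, mul_assoc]

end IsSolution

end SweepData

lemma eq_neg_one_or_natCast {s : ℤ} (hs : -1 ≤ s) : s = -1 ∨ ∃ n : ℕ, s = n := by
  rcases hs.eq_or_lt with hs | hs
  · exact Or.inl hs.symm
  · exact Or.inr (Int.eq_ofNat_of_zero_le (by omega))

lemma abs_le_of_symm_of_past {C : ℤ → ℤ → ℝ} {t : ℕ} {B : ℝ} (hsymm : ∀ t' s', C t' s' = C s' t')
    (hbase : |C (-1) (-1)| ≤ B) (hpast : ∀ u < t, ∀ s : ℤ, -1 ≤ s → s ≤ u → |C u s| ≤ B)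
    {t' s' : ℤ} (ht' : t' ∈ Finset.Ico (-1 : ℤ) t) (hs' : s' ∈ Finset.Ico (-1 : ℤ) t) :
    |C t' s'| ≤ B := by
  wlog hle : s' ≤ t' generalizing t' s'
  · rw [hsymm]
    exact this hs' ht' (le_of_not_ge hle)
  obtain ⟨ht', htt⟩ := Finset.mem_Ico.mp ht'
  obtain ⟨hs', -⟩ := Finset.mem_Ico.mp hs'
  obtain rfl | ⟨u, rfl⟩ := eq_neg_one_or_natCast ht'
  · rwa [le_antisymm hle hs']
  · exact hpast u (by exact_mod_cast htt) s' hs' hle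

namespace SweepData

/-! ### Bounds uniform in the depth -/

/-- All quantities computed by sweep `a` of time step `t` are bounded by `K`. -/
structure BoundedAt (S : SweepData) (L : ℕ) (K : ℝ) (t : ℕ) (a : Bool) : Prop where
  gamma_le : ∀ r : ℤ, -1 ≤ r → ∀ (b : Bool), ∀ i ≤ L, ∀ m < L, |S.gamma t r a b i m| ≤ K
  cov_le : ∀ s : ℤ, -1 ≤ s → s ≤ t → ∀ m < L, |S.cov t s a m| ≤ K

lemma BoundedAt.mono {S : SweepData} {L t : ℕ} {K K' : ℝ} {a : Bool}
    (h : S.BoundedAt L K t a) (hK : K ≤ K') : S.BoundedAt L K' t a :=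
  ⟨fun r hr b i hi m hm => (h.gamma_le r hr b i hi m hm).trans hK,
    fun s hs hst m hm => (h.cov_le s hs hst m hm).trans hK⟩

lemma abs_history_sum_le {s t : ℕ} (hs : s ≤ t) {F : ℤ → ℤ → Bool → ℝ} {G : ℤ → ℝ} {B₁ B₂ : ℝ}
    (hB₁ : 0 ≤ B₁) (hB₂ : 0 ≤ B₂)
    (hF : ∀ t' ∈ Finset.Ico (-1 : ℤ) t, ∀ s' ∈ Finset.Icc (-1 : ℤ) s, ∀ b, |F t' s' b| ≤ B₁)
    (hG : ∀ s' ∈ Finset.Icc (-1 : ℤ) s, |G s'| ≤ B₂) :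
    |∑ t' ∈ Finset.Ico (-1 : ℤ) t, ∑ s' ∈ Finset.Icc (-1 : ℤ) s, ∑ b : Bool, F t' s' b +
      ∑ s' ∈ Finset.Icc (-1 : ℤ) s, G s'| ≤ 2 * (t + 2) ^ 2 * (B₁ + B₂) := by
  have hpast := abs_sum_le_card_mul fun t' ht' => abs_sum_le_card_mul fun s' hs' =>
    abs_sum_le_card_mul (S := Finset.univ) fun b _ => hF t' ht' s' hs' b
  have hpresent := abs_sum_le_card_mul hG
  have hcard_past : ((Finset.Ico (-1 : ℤ) t).card : ℝ) = t + 1 := by simp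
  have hcard_present : ((Finset.Icc (-1 : ℤ) s).card : ℝ) = s + 2 := by
    rw [Int.card_Icc]
    norm_cast
  rw [hcard_past, hcard_present, Finset.card_univ, Fintype.card_bool, Nat.cast_ofNat] at hpast
  rw [hcard_present] at hpresent
  have hst : (s : ℝ) ≤ t := Nat.cast_le.mpr hs
  refine (abs_add_le _ _).trans ((add_le_add hpast hpresent).trans ?_)
  rw [mul_add]
  refine add_le_add ?_ ?_
  · calc (t + 1 : ℝ) * ((s + 2) * (2 * B₁)) ≤ (t + 2) * ((t + 2) * (2 * B₁)) := by
          gcongr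
          norm_num
      _ = 2 * (t + 2) ^ 2 * B₁ := by ring
  · gcongr
    nlinarith

section Bounds

variable {S : SweepData} {T L t s : ℕ} {ξ : ℕ → ℝ} {ℓ' : ℕ → ℝ → ℝ} {a b : Bool} {i l m : ℕ}
  {K : ℝ}

lemma abs_increment_le {r : ℤ} {B : ℝ} (hr : -1 ≤ r) (hm : m < L)
    (hpast : ∀ s < t, S.BoundedAt L K s (!a))
    (hB : ∀ s < t, |S.gamma t s a (!a) l l - S.cov t s a l| ≤ B) :
    |S.increment L t r a b l m| ≤ t * (K * B) := by
  have hterms := abs_sum_le_card_mul fun s hs =>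
    abs_mul_le_mul ((hpast s (Finset.mem_range.mp hs)).gamma_le r hr b (L - 1 - l) (by omega)
      (L - 1 - m) (by omega)) (hB s (Finset.mem_range.mp hs))
  rwa [Finset.card_range] at hterms

namespace IsSolution

lemma abs_cov_le_of_past (h : S.IsSolution T L ξ ℓ') (hK : 1 ≤ K)
    (hpast : ∀ u < t, ∀ a, S.BoundedAt L K u a) {t' s' : ℤ} (ht' : t' ∈ Finset.Ico (-1 : ℤ) t)
    (hs' : s' ∈ Finset.Ico (-1 : ℤ) t) (hm : m < L) : |S.cov t' s' a m| ≤ K :=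
  abs_le_of_symm_of_past (C := fun t' s' => S.cov t' s' a m) (fun t' s' => h.cov_symm t' s' a m)
    (by rwa [h.cov_base, abs_one]) (fun u hu s' hs' hle => (hpast u hu a).cov_le s' hs' hle m hm)
    ht' hs'

lemma abs_covWeight_le (h : S.IsSolution T L ξ ℓ') (ht : t < T) (hK : 1 ≤ K) (hs : s ≤ t)
    (hi : i ≤ L) (hm : m < L) (hpast : ∀ u < t, ∀ a, S.BoundedAt L K u a)
    (hγ : ∀ s' ∈ Finset.Icc (-1 : ℤ) s, |S.gamma s s' a b i m| ≤ K)
    (hpresent : s = t → ∀ t' ∈ Finset.Ico (-1 : ℤ) t, |S.cov t t' a m| ≤ K)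
    {t' s' : ℤ} (ht' : t' ∈ Finset.Ico (-1 : ℤ) t) (hs' : s' ∈ Finset.Icc (-1 : ℤ) s) :
    |S.covWeight L t' s s' a b i m| ≤ K ^ 2 := by
  rw [covWeight, sq]
  obtain ⟨hs'₁, hs's⟩ := Finset.mem_Icc.mp hs'
  obtain hs't | hs't : s' < t ∨ s' = t := by omega
  · refine abs_mul_le_mul ?_ (hγ s' hs')
    exact h.abs_cov_le_of_past hK hpast ht' (Finset.mem_Ico.mpr ⟨hs'₁, hs't⟩)
      (by split_ifs <;> omega)
  obtain rfl : s = t := by omega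
  subst hs't
  by_cases hb : b = a
  · subst hb
    refine abs_mul_le_mul ?_ (hγ s hs')
    rw [orientedCov, if_pos rfl, h.cov_symm]
    exact hpresent rfl t' ht'
  · rw [h.gamma_self ht hi hm, if_neg (fun hc => hb hc.1), mul_zero, abs_zero]
    positivity

lemma abs_cov_le (h : S.IsSolution T L ξ ℓ') (ht : t < T) (hs : s ≤ t) (hi : i < L) {w M : ℝ}
    {v : ℕ → ℝ} (hw0 : 0 ≤ w) (hM0 : 0 ≤ M) (hv0 : ∀ m, 0 ≤ v m)
    (hw : ∀ t' ∈ Finset.Ico (-1 : ℤ) t, ∀ b, ∀ m < L, |S.gamma t t' a b i m| ≤ w)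
    (hM : ∀ t' ∈ Finset.Ico (-1 : ℤ) t, ∀ s' ∈ Finset.Icc (-1 : ℤ) s, ∀ b, ∀ m < L,
      |S.covWeight L t' s s' a b i m| ≤ M)
    (hγ : ∀ s' ∈ Finset.Icc (-1 : ℤ) s, ∀ m < L, |S.gamma s s' a a i m| ≤ M)
    (hv : ∀ s' ∈ Finset.Icc (-1 : ℤ) s, ∀ m < i, |S.cov t s' a m| ≤ v m) :
    |S.cov t s a i| ≤
      2 * (t + 2) ^ 2 * (M * w + M / L * ∑ m ∈ Finset.range i, v m) := by
  have hvsum : 0 ≤ ∑ m ∈ Finset.range i, v m := Finset.sum_nonneg fun m _ => hv0 m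
  rw [h.cov_eq_sum_covPast_add_sum_covPresent ht hs hi]
  refine abs_history_sum_le hs (by positivity) (by positivity)
    (fun t' ht' s' hs' b => abs_average_le (by positivity) fun m hm => ?_) (fun s' hs' => ?_)
  · rw [mul_comm M]
    exact abs_mul_le_mul (hw t' ht' b m hm) (hM t' ht' s' hs' b m hm)
  · refine abs_one_div_mul_sum_le fun m hm => ?_
    rw [mul_comm M]
    exact abs_mul_le_mul (hv s' hs' m hm) (hγ s' hs' m (hm.trans hi))

end IsSolution

/-- The strength with which the unknowns of time step `t` act on each other when all earlier time
steps are bounded by `K`: at most `2 * (t + 2) ^ 2` terms, each with coefficients at most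
`K ^ 2`. -/
def coupling (t : ℕ) (K : ℝ) : ℝ := 2 * (t + 2) ^ 2 * K ^ 2

/-- The largest coefficient `gamma t r a b i m` over `r < t`. -/
noncomputable def gammaSup (S : SweepData) (L t : ℕ) (a : Bool) (i : ℕ) : ℝ :=
  supAbs (Finset.Ico (-1 : ℤ) t ×ˢ (Finset.univ : Finset Bool) ×ˢ Finset.range L) fun x =>
    S.gamma t x.1 a x.2.1 i x.2.2

/-- The largest covariance `cov t s a i` over `s < t`. -/
noncomputable def covSup (S : SweepData) (t : ℕ) (a : Bool) (i : ℕ) : ℝ :=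
  supAbs (Finset.Ico (-1 : ℤ) t) fun s => S.cov t s a i

lemma abs_gamma_le_gammaSup {r : ℤ} (hr : r ∈ Finset.Ico (-1 : ℤ) t) (hm : m < L) :
    |S.gamma t r a b i m| ≤ S.gammaSup L t a i :=
  abs_le_supAbs (f := fun x : ℤ × Bool × ℕ => S.gamma t x.1 a x.2.1 i x.2.2) (x := (r, b, m))
    (by simpa [hm] using hr)

lemma abs_cov_le_covSup {s : ℤ} (hs : s ∈ Finset.Ico (-1 : ℤ) t) :
    |S.cov t s a i| ≤ S.covSup t a i :=
  abs_le_supAbs (f := fun s => S.cov t s a i) hs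

lemma gammaSup_nonneg : 0 ≤ S.gammaSup L t a i := supAbs_nonneg

lemma covSup_nonneg : 0 ≤ S.covSup t a i := supAbs_nonneg

lemma one_le_coupling (hK : 1 ≤ K) : 1 ≤ coupling t K := by
  have hK2 : 1 ≤ K ^ 2 := one_le_pow₀ hK
  unfold coupling
  nlinarith [(Nat.cast_nonneg t : (0 : ℝ) ≤ t)]

lemma mul_sq_le_coupling : t * K ^ 2 ≤ coupling t K := by
  unfold coupling
  gcongr
  nlinarith [(Nat.cast_nonneg t : (0 : ℝ) ≤ t)]

lemma gronwall_gammaSup_covSup {A : ℝ} (hA : 0 ≤ A) (hK : 0 ≤ K)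
    (hγ : ∀ r ∈ Finset.Ico (-1 : ℤ) t, ∀ b, ∀ i < L, ∀ m < L, |S.gamma t r a b i m| ≤
      A + K / L * ∑ l ∈ Finset.range i, (S.gammaSup L t a l + S.covSup t a l))
    (hc : ∀ s ∈ Finset.Ico (-1 : ℤ) t, ∀ i < L, |S.cov t s a i| ≤
      A + K * S.gammaSup L t a i + K / L * ∑ l ∈ Finset.range i, S.covSup t a l) :
    (∀ i ≤ L, A + K / L * ∑ l ∈ Finset.range i, (S.gammaSup L t a l + S.covSup t a l) ≤
      gronwallConst K * A) ∧
    ∀ s ∈ Finset.Ico (-1 : ℤ) t, ∀ i < L, |S.cov t s a i| ≤ gronwallConst K * A := by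
  have hsum_nonneg (i : ℕ) :
      0 ≤ ∑ l ∈ Finset.range i, (S.gammaSup L t a l + S.covSup t a l) :=
    Finset.sum_nonneg fun l _ => add_nonneg gammaSup_nonneg covSup_nonneg
  have hcsum_nonneg (i : ℕ) : 0 ≤ ∑ l ∈ Finset.range i, S.covSup t a l :=
    Finset.sum_nonneg fun l _ => covSup_nonneg
  have hγsup : ∀ i < L, S.gammaSup L t a i ≤
      A + K / L * ∑ l ∈ Finset.range i, (S.gammaSup L t a l + S.covSup t a l) := by
    refine fun i hi => supAbs_le (add_nonneg hA (mul_nonneg (by positivity) (hsum_nonneg i)))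
      fun x hx => ?_
    simp only [Finset.mem_product, Finset.mem_univ, Finset.mem_range, true_and] at hx
    exact hγ x.1 hx.1 x.2.1 i hi x.2.2 hx.2
  have hcsup : ∀ i < L, S.covSup t a i ≤
      A + K * S.gammaSup L t a i + K / L * ∑ l ∈ Finset.range i, S.covSup t a l :=
    fun i hi => supAbs_le (add_nonneg (add_nonneg hA (mul_nonneg hK gammaSup_nonneg))
      (mul_nonneg (by positivity) (hcsum_nonneg i))) fun s hs => hc s hs i hi
  obtain ⟨hsum, hcov⟩ := coupled_gronwall hA hK (fun _ => gammaSup_nonneg) (fun _ => covSup_nonneg)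
    hγsup hcsup
  exact ⟨hsum, fun s hs i hi => (abs_cov_le_covSup hs).trans (hcov i hi)⟩

namespace IsSolution

lemma abs_gamma_le_of_abs_input_le (h : S.IsSolution T L ξ ℓ') (ht : t < T)
    (hpast : ∀ u < t, ∀ a, S.BoundedAt L K u a) (hK : 1 ≤ K) (hin : |S.input t a| ≤ K) {r : ℤ}
    (hr : r ∈ Finset.Ico (-1 : ℤ) t) (hi : i ≤ L) (hm : m < L) :
    |S.gamma t r a b i m| ≤ K + coupling t K / L *
      ∑ l ∈ Finset.range i, (S.gammaSup L t a l + S.covSup t a l) := by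
  have hinit : |if r = -1 ∧ b = a then S.input t a else 0| ≤ K := by
    split_ifs
    · exact hin
    · simpa using zero_le_one.trans hK
  rw [h.gamma_eq_add_sum_increment ht hr hi hm]
  refine (abs_add_le _ _).trans (add_le_add hinit (abs_one_div_mul_sum_le fun l hl => ?_))
  refine (abs_increment_le (Finset.mem_Ico.mp hr).1 hm (fun s hs => hpast s hs _)
    (B := S.gammaSup L t a l + S.covSup t a l) fun s hs => ?_).trans ?_
  · have hs : (s : ℤ) ∈ Finset.Ico (-1 : ℤ) t := Finset.mem_Ico.mpr (by omega)
    exact (abs_sub _ _).trans (add_le_add (abs_gamma_le_gammaSup hs (hl.trans_le hi))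
      (abs_cov_le_covSup hs))
  · rw [← mul_assoc]
    refine mul_le_mul_of_nonneg_right ((mul_le_mul_of_nonneg_left ?_ t.cast_nonneg).trans
      mul_sq_le_coupling) (add_nonneg gammaSup_nonneg covSup_nonneg)
    exact le_self_pow₀ hK two_ne_zero

lemma abs_gamma_le_of_forall_lt (h : S.IsSolution T L ξ ℓ') (ht : t < T) (hK : 1 ≤ K)
    (hi : i ≤ L) (hm : m < L)
    (hγ : ∀ r ∈ Finset.Ico (-1 : ℤ) t, |S.gamma t r a b i m| ≤ K) {r : ℤ} (hr : -1 ≤ r) :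
    |S.gamma t r a b i m| ≤ K := by
  rcases lt_trichotomy r t with hrt | rfl | hrt
  · exact hγ r (Finset.mem_Ico.mpr ⟨hr, hrt⟩)
  · rw [h.gamma_self ht hi hm]
    split_ifs
    · simpa using hK
    · simpa using zero_le_one.trans hK
  · rw [h.gamma_of_lt t r hrt, abs_zero]
    exact zero_le_one.trans hK

lemma abs_cov_le_of_past_of_gamma (h : S.IsSolution T L ξ ℓ') (ht : t < T) (hs : s < t) (hi : i < L)
    (hpast : ∀ u < t, ∀ a, S.BoundedAt L K u a) (hK : 1 ≤ K) :
    |S.cov t s a i| ≤ coupling t K * S.gammaSup L t a i +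
      coupling t K / L * ∑ l ∈ Finset.range i, S.covSup t a l := by
  have hγ (b : Bool) (m : ℕ) (hm : m < L) (s' : ℤ) (hs' : s' ∈ Finset.Icc (-1 : ℤ) s) :
      |S.gamma s s' a b i m| ≤ K :=
    (hpast s hs a).gamma_le s' (Finset.mem_Icc.mp hs').1 b i hi.le m hm
  refine (h.abs_cov_le ht hs.le hi (M := K ^ 2) gammaSup_nonneg (by positivity)
    (fun _ => covSup_nonneg) (fun t' ht' b m hm => abs_gamma_le_gammaSup ht' hm)
    (fun t' ht' s' hs' b m hm => h.abs_covWeight_le ht hK hs.le hi.le hm hpast (hγ b m hm)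
      (fun hst => absurd hst hs.ne) ht' hs')
    (fun s' hs' m hm => (hγ a m hm s' hs').trans (le_self_pow₀ hK two_ne_zero))
    (fun s' hs' m hm => abs_cov_le_covSup ?_)).trans_eq ?_
  · rw [Finset.mem_Icc] at hs'
    exact Finset.mem_Ico.mpr (by omega)
  · rw [coupling]
    ring

lemma abs_gamma_le_and_abs_cov_le_of_lt (h : S.IsSolution T L ξ ℓ') (ht : t < T)
    (hpast : ∀ u < t, ∀ a, S.BoundedAt L K u a) (hK : 1 ≤ K) (hin : |S.input t a| ≤ K) :
    (∀ r : ℤ, -1 ≤ r → ∀ b, ∀ i ≤ L, ∀ m < L,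
      |S.gamma t r a b i m| ≤ gronwallConst (coupling t K) * K) ∧
    ∀ s ∈ Finset.Ico (-1 : ℤ) t, ∀ i < L, |S.cov t s a i| ≤ gronwallConst (coupling t K) * K := by
  have hK0 : 0 ≤ K := zero_le_one.trans hK
  have hcpl : 0 ≤ coupling t K := zero_le_one.trans (one_le_coupling hK)
  obtain ⟨hsum, hcov⟩ := gronwall_gammaSup_covSup (S := S) (t := t) (a := a) (L := L) hK0 hcpl
    (fun r hr b i hi m hm => h.abs_gamma_le_of_abs_input_le ht hpast hK hin hr hi.le hm)
    fun s hs i hi => by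
      obtain ⟨hs₁, hst⟩ := Finset.mem_Ico.mp hs
      obtain rfl | ⟨s, rfl⟩ := eq_neg_one_or_natCast hs₁
      · rw [h.cov_mixed t t.cast_nonneg, abs_zero]
        exact add_nonneg (add_nonneg hK0 (mul_nonneg hcpl gammaSup_nonneg))
          (mul_nonneg (by positivity) (Finset.sum_nonneg fun _ _ => covSup_nonneg))
      · rw [add_assoc]
        exact le_add_of_nonneg_of_le hK0
          (h.abs_cov_le_of_past_of_gamma ht (by exact_mod_cast hst) hi hpast hK)
  refine ⟨fun r hr b i hi m hm => h.abs_gamma_le_of_forall_lt ht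
    (one_le_mul_of_one_le_of_one_le (one_le_gronwallConst hcpl) hK) hi hm (fun r hr => ?_) hr, hcov⟩
  exact (h.abs_gamma_le_of_abs_input_le ht hpast hK hin hr hi hm).trans (hsum i hi)

lemma abs_cov_self_le (h : S.IsSolution T L ξ ℓ') (ht : t < T) (hK : 1 ≤ K)
    (hpast : ∀ u < t, ∀ a, S.BoundedAt L K u a)
    (hγ : ∀ r : ℤ, -1 ≤ r → ∀ b, ∀ i ≤ L, ∀ m < L, |S.gamma t r a b i m| ≤ K)
    (hcov : ∀ s ∈ Finset.Ico (-1 : ℤ) t, ∀ i < L, |S.cov t s a i| ≤ K) (hi : i < L) :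
    |S.cov t t a i| ≤ gronwallConst (coupling t K) * (coupling t K * K + coupling t K * K) := by
  have hK0 : 0 ≤ K := zero_le_one.trans hK
  have hcpl : 0 ≤ coupling t K := zero_le_one.trans (one_le_coupling hK)
  refine gronwall_of_le_add_sum_add (v := fun i => |S.cov t t a i|) (by positivity) hK0 hcpl
    (fun _ => abs_nonneg _) (fun i hi => ?_) i hi
  refine (h.abs_cov_le ht le_rfl hi (w := K) (M := K ^ 2) (v := fun l => K + |S.cov t t a l|) hK0
    (by positivity) (fun _ => by positivity)
    (fun t' ht' b => hγ t' (Finset.mem_Ico.mp ht').1 b i hi.le)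
    (fun t' ht' s' hs' b m hm => h.abs_covWeight_le ht hK le_rfl hi.le hm hpast
      (fun s' hs' => hγ s' (Finset.mem_Icc.mp hs').1 b i hi.le m hm)
      (fun _ t' ht' => hcov t' ht' m hm) ht' hs')
    (fun s' hs' m hm => (hγ s' (Finset.mem_Icc.mp hs').1 a i hi.le m hm).trans
      (le_self_pow₀ hK two_ne_zero))
    (fun s' hs' m hm => ?_)).trans_eq ?_
  · obtain ⟨hs', hs't⟩ := Finset.mem_Icc.mp hs'
    rcases hs't.eq_or_lt with rfl | hs't
    · exact le_add_of_nonneg_left hK0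
    · exact le_add_of_le_of_nonneg (hcov s' (Finset.mem_Ico.mpr ⟨hs', hs't⟩) m (hm.trans hi))
        (abs_nonneg _)
  · rw [coupling]
    ring

end IsSolution

lemma exists_boundedAt (t : ℕ) (hK : 1 ≤ K) : ∃ K' : ℝ, K ≤ K' ∧
    ∀ {S : SweepData} {T L : ℕ} {ξ : ℕ → ℝ} {ℓ' : ℕ → ℝ → ℝ} {a : Bool},
      S.IsSolution T L ξ ℓ' → t < T → (∀ u < t, ∀ a, S.BoundedAt L K u a) → |S.input t a| ≤ K →
      S.BoundedAt L K' t a := by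
  set K₁ := gronwallConst (coupling t K) * K
  have hKK₁ : K ≤ K₁ := le_mul_of_one_le_left (zero_le_one.trans hK)
    (one_le_gronwallConst (zero_le_one.trans (one_le_coupling hK)))
  have hK₁ : 1 ≤ K₁ := hK.trans hKK₁
  set K₂ := gronwallConst (coupling t K₁) * (coupling t K₁ * K₁ + coupling t K₁ * K₁)
  refine ⟨max K₁ K₂, hKK₁.trans (le_max_left _ _), fun {S T L ξ ℓ' a} h ht hpast hin => ?_⟩
  obtain ⟨hγ, hcov⟩ := h.abs_gamma_le_and_abs_cov_le_of_lt ht hpast hK hin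
  refine ⟨fun r hr b i hi m hm => (hγ r hr b i hi m hm).trans (le_max_left _ _),
    fun s hs hst m hm => ?_⟩
  rcases hst.eq_or_lt with rfl | hst
  · exact (h.abs_cov_self_le ht hK₁ (fun u hu a => (hpast u hu a).mono hKK₁) hγ hcov hm).trans
      (le_max_right _ _)
  · exact (hcov s (Finset.mem_Ico.mpr ⟨hs, hst⟩) m hm).trans (le_max_left _ _)

end Bounds

end SweepData

/-! ### Comparison of depths `N` and `2 * N` -/

lemma sum_mesh_add_nearDiag_le {L i n : ℕ} (hn : n ≤ L) :
    ∑ m ∈ Finset.range n, (1 / (L : ℝ) + nearDiag i m) ≤ 3 := by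
  have hmesh : (n : ℝ) / L ≤ 1 := div_le_one_of_le₀ (by exact_mod_cast hn) L.cast_nonneg
  rw [Finset.sum_add_distrib, Finset.sum_const, Finset.card_range, nsmul_eq_mul, mul_one_div]
  linarith [sum_nearDiag_le i n]

namespace SweepData

/-- The coarse level `j` lies within one fine layer of the fine level `i`. -/
def NearLevel (i j : ℕ) : Prop := i ≤ 2 * j + 1 ∧ 2 * j ≤ i + 1

lemma nearLevel_half (i : ℕ) : NearLevel i (i / 2) := by
  unfold NearLevel
  omega

/-- Sweep `a` of time step `t` gives `K / (2 * N)`-close values at depths `N` and `2 * N`. The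
coefficients are compared at any two levels within one fine layer of each other. -/
structure CloseAt (S' S : SweepData) (N : ℕ) (K : ℝ) (t : ℕ) (a : Bool) : Prop where
  gamma_sub_le : ∀ r ∈ Finset.Ico (-1 : ℤ) t, ∀ (b : Bool), ∀ i ≤ 2 * N, ∀ j ≤ N, NearLevel i j →
    ∀ m < 2 * N, |S'.gamma t r a b j (m / 2) - S.gamma t r a b i m| ≤ K / ((2 * N : ℕ) : ℝ)
  cov_sub_le : ∀ s : ℤ, -1 ≤ s → s ≤ t → ∀ m < 2 * N,
    |S'.cov t s a (m / 2) - S.cov t s a m| ≤ K / ((2 * N : ℕ) : ℝ)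

lemma CloseAt.mono {S' S : SweepData} {N t : ℕ} {K K' : ℝ} {a : Bool}
    (h : CloseAt S' S N K t a) (hK : K ≤ K') : CloseAt S' S N K' t a :=
  have hdiv : K / ((2 * N : ℕ) : ℝ) ≤ K' / ((2 * N : ℕ) : ℝ) := by gcongr
  ⟨fun r hr b i hi j hj hij m hm => (h.gamma_sub_le r hr b i hi j hj hij m hm).trans hdiv,
    fun s hs hst m hm => (h.cov_sub_le s hs hst m hm).trans hdiv⟩

/-- The difference of coarse and fine values at the layers and cells of the fine depth. -/
def compare (S' S : SweepData) : SweepData where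
  input t a := S'.input t a - S.input t a
  gamma t r a b i m := S'.gamma t r a b (i / 2) (m / 2) - S.gamma t r a b i m
  cov t s a m := S'.cov t s a (m / 2) - S.cov t s a m

section Compare

variable {S' S : SweepData} {T N t s : ℕ} {ξ : ℕ → ℝ} {ℓ' : ℕ → ℝ → ℝ} {a b : Bool}
  {i j l m : ℕ} {K : ℝ}

lemma abs_gamma_sub_le_nearDiag (h' : S'.IsSolution T N ξ ℓ') (h : S.IsSolution T (2 * N) ξ ℓ')
    (ht : t < T) (hK : 1 ≤ K) (hi : i ≤ 2 * N) (hj : j ≤ N) (hij : NearLevel i j) (hm : m < 2 * N)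
    (hγ : ∀ r ∈ Finset.Ico (-1 : ℤ) t,
      |S'.gamma t r a b j (m / 2) - S.gamma t r a b i m| ≤ K / ((2 * N : ℕ) : ℝ))
    {r : ℤ} (hr : -1 ≤ r) :
    |S'.gamma t r a b j (m / 2) - S.gamma t r a b i m| ≤
      K * (1 / ((2 * N : ℕ) : ℝ) + nearDiag i m) := by
  have hnear := nearDiag_nonneg i m
  rcases lt_trichotomy r t with hrt | rfl | hrt
  · refine (hγ r (Finset.mem_Ico.mpr ⟨hr, hrt⟩)).trans ?_
    rw [mul_add, mul_one_div]
    exact le_add_of_nonneg_right (by positivity)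
  · have hself : |S'.gamma t t a b j (m / 2) - S.gamma t t a b i m| ≤ nearDiag i m := by
      rw [h'.gamma_self ht hj (by omega), h.gamma_self ht hi hm, nearDiag]
      obtain ⟨hij, hji⟩ := hij
      by_cases hb : b = a <;> simp only [hb, true_and, false_and] <;> split_ifs <;>
        first | omega | norm_num
    refine hself.trans ((le_mul_of_one_le_left hnear hK).trans ?_)
    gcongr
    exact le_add_of_nonneg_left (by positivity)
  · rw [h'.gamma_of_lt t r hrt, h.gamma_of_lt t r hrt, sub_zero, abs_zero]
    positivity

lemma CloseAt.abs_gamma_sub_le (hclose : CloseAt S' S N K t a) (h' : S'.IsSolution T N ξ ℓ')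
    (h : S.IsSolution T (2 * N) ξ ℓ') (ht : t < T) (hK : 1 ≤ K) (hi : i ≤ 2 * N) (hj : j ≤ N)
    (hij : NearLevel i j) (hm : m < 2 * N) {r : ℤ} (hr : -1 ≤ r) :
    |S'.gamma t r a b j (m / 2) - S.gamma t r a b i m| ≤
      K * (1 / ((2 * N : ℕ) : ℝ) + nearDiag i m) :=
  abs_gamma_sub_le_nearDiag h' h ht hK hi hj hij hm
    (fun r hr => hclose.gamma_sub_le r hr b i hi j hj hij m hm) hr

lemma BoundedAt.abs_gamma_sub_cov_le {L : ℕ} (hS : S.BoundedAt L K t a) (hst : s < t)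
    (hl : l < L) : |S.gamma t s a (!a) l l - S.cov t s a l| ≤ K + K :=
  (abs_sub _ _).trans (add_le_add (hS.gamma_le s (by omega) _ l hl.le l hl)
    (hS.cov_le s (by omega) (by omega) l hl))

lemma abs_increment_sub_le (h' : S'.IsSolution T N ξ ℓ') (h : S.IsSolution T (2 * N) ξ ℓ')
    (ht : t < T) (hK : 1 ≤ K) (hS' : ∀ u < T, ∀ a, S'.BoundedAt N K u a)
    (hS : ∀ u < T, ∀ a, S.BoundedAt (2 * N) K u a) (hpast : ∀ u < t, ∀ a, CloseAt S' S N K u a)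
    {r : ℤ} (hr : -1 ≤ r) (hl : l < 2 * N) (hm : m < 2 * N) :
    |S'.increment N t r a b (l / 2) (m / 2) - S.increment (2 * N) t r a b l m| ≤
      t * (2 * K ^ 2 * (1 / ((2 * N : ℕ) : ℝ) + nearDiag m l) +
        K * ((compare S' S).gammaSup (2 * N) t a l + (compare S' S).covSup t a l)) := by
  have hindex : ∀ n < 2 * N, N - 1 - n / 2 = (2 * N - 1 - n) / 2 := by omega
  rw [increment, increment, ← Finset.sum_sub_distrib, hindex l hl, hindex m hm]
  refine (abs_sum_le_card_mul fun s hs => ?_).trans_eq (by rw [Finset.card_range])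
  have hst := Finset.mem_range.mp hs
  have hs : (s : ℤ) ∈ Finset.Ico (-1 : ℤ) t := Finset.mem_Ico.mpr (by omega)
  have hfactor_sub : |(S'.gamma t s a (!a) (l / 2) (l / 2) - S'.cov t s a (l / 2)) -
      (S.gamma t s a (!a) l l - S.cov t s a l)| ≤
        (compare S' S).gammaSup (2 * N) t a l + (compare S' S).covSup t a l := by
    rw [sub_sub_sub_comm]
    exact (abs_sub _ _).trans (add_le_add (abs_gamma_le_gammaSup (S := compare S' S) hs hl)
      (abs_cov_le_covSup (S := compare S' S) hs))
  have hgamma_sub := (hpast s hst (!a)).abs_gamma_sub_le (b := b) h' h (hst.trans ht) hK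
    (by omega : 2 * N - 1 - l ≤ 2 * N) (by omega : (2 * N - 1 - l) / 2 ≤ N) (nearLevel_half _)
    (by omega : 2 * N - 1 - m < 2 * N) hr
  rw [nearDiag_reflect hl hm] at hgamma_sub
  refine (abs_mul_sub_mul_le hgamma_sub hfactor_sub ((hS s (hst.trans ht) _).gamma_le r hr _ _
    (by omega) _ (by omega)) ((hS' t ht a).abs_gamma_sub_cov_le hst (by omega))).trans_eq (by ring)

lemma abs_sum_increment_sub_le (h' : S'.IsSolution T N ξ ℓ') (h : S.IsSolution T (2 * N) ξ ℓ')
    (ht : t < T) (hK : 1 ≤ K) (hS' : ∀ u < T, ∀ a, S'.BoundedAt N K u a)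
    (hS : ∀ u < T, ∀ a, S.BoundedAt (2 * N) K u a) (hpast : ∀ u < t, ∀ a, CloseAt S' S N K u a)
    {r : ℤ} (hr : -1 ≤ r) (hi : i ≤ 2 * N) (hj : j ≤ N) (hij : NearLevel i j) (hm : m < 2 * N) :
    |∑ l ∈ Finset.range (2 * j), S'.increment N t r a b (l / 2) (m / 2) -
        ∑ l ∈ Finset.range i, S.increment (2 * N) t r a b l m| ≤
      coupling t K * (8 + ∑ l ∈ Finset.range i,
        ((compare S' S).gammaSup (2 * N) t a l + (compare S' S).covSup t a l)) := by
  set v := fun l => (compare S' S).gammaSup (2 * N) t a l + (compare S' S).covSup t a l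
  have hv (l : ℕ) : 0 ≤ v l := add_nonneg gammaSup_nonneg covSup_nonneg
  have hsum := abs_sum_range_sub_sum_range_le (p := 2 * j) (i := i) hij.2 hij.1
    (f := fun l => S'.increment N t r a b (l / 2) (m / 2))
    (g := fun l => S.increment (2 * N) t r a b l m) (Z := t * (K * (K + K)))
    (E := fun l => t * (2 * K ^ 2 * (1 / ((2 * N : ℕ) : ℝ) + nearDiag m l) + K * v l))
    (fun l hl => abs_increment_le hr (by omega) (fun u hu => hS' u (hu.trans ht) _)
      fun u hu => (hS' t ht a).abs_gamma_sub_cov_le hu (by omega))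
    (fun l hl => abs_increment_le hr hm (fun u hu => hS u (hu.trans ht) _)
      fun u hu => (hS t ht a).abs_gamma_sub_cov_le hu (by omega))
    (by positivity)
    (fun l _ => by
      have := nearDiag_nonneg m l
      have := hv l
      positivity)
    (fun l hl _ => abs_increment_sub_le h' h ht hK hS' hS hpast hr (by omega) hm)
  rw [← Finset.mul_sum, Finset.sum_add_distrib, ← Finset.mul_sum, ← Finset.mul_sum] at hsum
  have hvsum : 0 ≤ ∑ l ∈ Finset.range i, v l := Finset.sum_nonneg fun l _ => hv l
  calc _ ≤ t * (K * (K + K)) + t * (2 * K ^ 2 * 3 + K * ∑ l ∈ Finset.range i, v l) := by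
        refine hsum.trans ?_
        gcongr
        exact sum_mesh_add_nearDiag_le hi
    _ ≤ t * (K * (K + K)) + t * (2 * K ^ 2 * 3 + K ^ 2 * ∑ l ∈ Finset.range i, v l) := by
        gcongr
        exact le_self_pow₀ hK two_ne_zero
    _ = t * K ^ 2 * (8 + ∑ l ∈ Finset.range i, v l) := by ring
    _ ≤ coupling t K * (8 + ∑ l ∈ Finset.range i, v l) := by
        gcongr
        exact mul_sq_le_coupling

lemma abs_gamma_sub_le_add_sum (h' : S'.IsSolution T N ξ ℓ') (h : S.IsSolution T (2 * N) ξ ℓ')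
    (ht : t < T) (hK : 1 ≤ K) (hS' : ∀ u < T, ∀ a, S'.BoundedAt N K u a)
    (hS : ∀ u < T, ∀ a, S.BoundedAt (2 * N) K u a) (hpast : ∀ u < t, ∀ a, CloseAt S' S N K u a)
    (hin : |S'.input t a - S.input t a| ≤ K / ((2 * N : ℕ) : ℝ)) {r : ℤ}
    (hr : r ∈ Finset.Ico (-1 : ℤ) t) (hi : i ≤ 2 * N) (hj : j ≤ N) (hij : NearLevel i j)
    (hm : m < 2 * N) :
    |S'.gamma t r a b j (m / 2) - S.gamma t r a b i m| ≤
      10 * K * coupling t K / ((2 * N : ℕ) : ℝ) + coupling t K / ((2 * N : ℕ) : ℝ) *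
        ∑ l ∈ Finset.range i,
          ((compare S' S).gammaSup (2 * N) t a l + (compare S' S).covSup t a l) := by
  have hinit : |(if r = -1 ∧ b = a then S'.input t a else 0) -
      (if r = -1 ∧ b = a then S.input t a else 0)| ≤ K / ((2 * N : ℕ) : ℝ) := by
    split_ifs
    · exact hin
    · rw [sub_zero, abs_zero]
      positivity
  have hsum := abs_sum_increment_sub_le (a := a) (b := b) h' h ht hK hS' hS hpast
    (Finset.mem_Ico.mp hr).1 hi hj hij hm
  have hcpl := one_le_coupling (t := t) hK
  rw [h'.gamma_eq_add_sum_increment ht hr hj (by omega), h.gamma_eq_add_sum_increment ht hr hi hm,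
    average_half, add_sub_add_comm, ← mul_sub]
  refine (abs_add_le _ _).trans ?_
  rw [abs_mul, abs_of_nonneg (by positivity : (0 : ℝ) ≤ 1 / ((2 * N : ℕ) : ℝ)), one_div_mul_eq_div,
    div_mul_eq_mul_div, ← add_div]
  refine (add_le_add hinit (div_le_div_of_nonneg_right hsum (by positivity))).trans ?_
  rw [← add_div]
  refine div_le_div_of_nonneg_right ?_ (by positivity)
  nlinarith

lemma orientedCov_half (S' : SweepData) (t s : ℤ) (hm : m < 2 * N) :
    S'.orientedCov N a t s b (m / 2) =
      S'.cov t s b ((if b = a then m else 2 * N - 1 - m) / 2) := by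
  rw [orientedCov]
  congr 1
  split_ifs <;> omega

lemma abs_cov_sub_le_of_past (h' : S'.IsSolution T N ξ ℓ') (h : S.IsSolution T (2 * N) ξ ℓ')
    (hK : 1 ≤ K) (hpast : ∀ u < t, ∀ a, CloseAt S' S N K u a) {t' s' : ℤ}
    (ht' : t' ∈ Finset.Ico (-1 : ℤ) t) (hs' : s' ∈ Finset.Ico (-1 : ℤ) t) (hm : m < 2 * N) :
    |S'.cov t' s' a (m / 2) - S.cov t' s' a m| ≤ K / ((2 * N : ℕ) : ℝ) :=
  abs_le_of_symm_of_past (C := fun t' s' => S'.cov t' s' a (m / 2) - S.cov t' s' a m)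
    (fun t' s' => by rw [h'.cov_symm, h.cov_symm])
    (by rw [h'.cov_base, h.cov_base, sub_self, abs_zero]; positivity)
    (fun u hu s hs hle => (hpast u hu a).cov_sub_le s hs hle m hm) ht' hs'

lemma abs_cov_mul_gamma_sub_le (h : S.IsSolution T (2 * N) ξ ℓ') (ht : t < T) (hK : 1 ≤ K)
    (hs : s ≤ t) (hS' : ∀ u < T, ∀ a, S'.BoundedAt N K u a)
    (hS : ∀ u < T, ∀ a, S.BoundedAt (2 * N) K u a) (hi : i < 2 * N) (hm : m < 2 * N)
    {t' s' : ℤ} (ht' : t' ∈ Finset.Ico (-1 : ℤ) t) (hs' : s' ∈ Finset.Icc (-1 : ℤ) s) {n : ℕ}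
    (hn : n < 2 * N)
    (hcov : |S'.cov t' s' b (n / 2) - S.cov t' s' b n| ≤ K / ((2 * N : ℕ) : ℝ))
    (hγ : |S'.gamma s s' a b (i / 2) (m / 2) - S.gamma s s' a b i m| ≤
      K * (1 / ((2 * N : ℕ) : ℝ) + nearDiag i m)) :
    |S'.cov t' s' b (n / 2) * S'.gamma s s' a b (i / 2) (m / 2) -
      S.cov t' s' b n * S.gamma s s' a b i m| ≤
        2 * K ^ 2 * (1 / ((2 * N : ℕ) : ℝ) + nearDiag i m) := by
  obtain ⟨ht'₁, ht't⟩ := Finset.mem_Ico.mp ht'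
  obtain ⟨hs'₁, hs's⟩ := Finset.mem_Icc.mp hs'
  have hcov_le : |S.cov t' s' b n| ≤ K := h.abs_cov_le_of_past hK hS
    (Finset.mem_Ico.mpr (by omega)) (Finset.mem_Ico.mpr (by omega)) hn
  have hγ_le : |S'.gamma s s' a b (i / 2) (m / 2)| ≤ K :=
    (hS' s (hs.trans_lt ht) a).gamma_le s' hs'₁ b _ (by omega) _ (by omega)
  refine (abs_mul_sub_mul_le hcov hγ hcov_le hγ_le).trans ?_
  rw [div_mul_eq_mul_div, ← mul_one_div]
  nlinarith [mul_nonneg (sq_nonneg K) (nearDiag_nonneg i m)]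

lemma abs_covWeight_sub_le (h' : S'.IsSolution T N ξ ℓ') (h : S.IsSolution T (2 * N) ξ ℓ')
    (ht : t < T) (hK : 1 ≤ K) (hs : s ≤ t) (hS' : ∀ u < T, ∀ a, S'.BoundedAt N K u a)
    (hS : ∀ u < T, ∀ a, S.BoundedAt (2 * N) K u a) (hpast : ∀ u < t, ∀ a, CloseAt S' S N K u a)
    (hi : i < 2 * N) (hm : m < 2 * N)
    (hγ : ∀ s' ∈ Finset.Icc (-1 : ℤ) s, |S'.gamma s s' a b (i / 2) (m / 2) - S.gamma s s' a b i m| ≤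
      K * (1 / ((2 * N : ℕ) : ℝ) + nearDiag i m))
    (hpresent : s = t → ∀ t' ∈ Finset.Ico (-1 : ℤ) t,
      |S'.cov t t' a (m / 2) - S.cov t t' a m| ≤ K / ((2 * N : ℕ) : ℝ))
    {t' s' : ℤ} (ht' : t' ∈ Finset.Ico (-1 : ℤ) t) (hs' : s' ∈ Finset.Icc (-1 : ℤ) s) :
    |S'.covWeight N t' s s' a b (i / 2) (m / 2) - S.covWeight (2 * N) t' s s' a b i m| ≤
      2 * K ^ 2 * (1 / ((2 * N : ℕ) : ℝ) + nearDiag i m) := by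
  have hnear := nearDiag_nonneg i m
  have ht't := (Finset.mem_Ico.mp ht').2
  obtain ⟨hs'₁, hs's⟩ := Finset.mem_Icc.mp hs'
  have hn : (if b = a then m else 2 * N - 1 - m) < 2 * N := by split_ifs <;> omega
  rw [covWeight, covWeight, orientedCov_half S' t' s' hm, orientedCov]
  generalize hn_eq : (if b = a then m else 2 * N - 1 - m) = n at hn
  have hproduct := abs_cov_mul_gamma_sub_le h ht hK hs hS' hS hi hm ht' hs' hn (hγ := hγ s' hs')
  obtain hs't | hs't : s' < t ∨ s' = t := by omega
  · exact hproduct (abs_cov_sub_le_of_past h' h hK hpast ht' (Finset.mem_Ico.mpr ⟨hs'₁, hs't⟩) hn)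
  obtain rfl : s = t := by omega
  subst hs't
  by_cases hb : b = a
  · subst hb
    rw [if_pos rfl] at hn_eq
    subst hn_eq
    refine hproduct ?_
    rw [h'.cov_symm, h.cov_symm]
    exact hpresent rfl t' ht'
  · rw [h'.gamma_self ht (by omega) (by omega), h.gamma_self ht hi.le hm]
    simp only [hb, false_and, if_false, mul_zero, sub_zero, abs_zero]
    positivity

lemma abs_covPast_sub_le {t' s' : ℤ} {w : ℝ} (hw0 : 0 ≤ w) (hK : 1 ≤ K)
    (hγ_le : ∀ m < 2 * N, |S.gamma t t' a b i m| ≤ K)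
    (hγ : ∀ m < 2 * N, |S'.gamma t t' a b (i / 2) (m / 2) - S.gamma t t' a b i m| ≤ w)
    (hW_le : ∀ m < N, |S'.covWeight N t' s s' a b (i / 2) m| ≤ K ^ 2)
    (hW : ∀ m < 2 * N,
      |S'.covWeight N t' s s' a b (i / 2) (m / 2) - S.covWeight (2 * N) t' s s' a b i m| ≤
        2 * K ^ 2 * (1 / ((2 * N : ℕ) : ℝ) + nearDiag i m)) :
    |S'.covPast N t t' s s' a b (i / 2) - S.covPast (2 * N) t t' s s' a b i| ≤
      K ^ 2 * w + 6 * K ^ 3 / ((2 * N : ℕ) : ℝ) := by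
  rw [covPast, covPast, average_half, ← mul_sub, ← Finset.sum_sub_distrib]
  have hterm : ∀ m < 2 * N, |S'.gamma t t' a b (i / 2) (m / 2) *
      S'.covWeight N t' s s' a b (i / 2) (m / 2) -
        S.gamma t t' a b i m * S.covWeight (2 * N) t' s s' a b i m| ≤
      1 * (w * K ^ 2 + K * (2 * K ^ 2 * (1 / ((2 * N : ℕ) : ℝ) + nearDiag i m))) := fun m hm => by
    rw [one_mul]
    exact abs_mul_sub_mul_le (hγ m hm) (hW m hm) (hγ_le m hm) (hW_le _ (by omega))
  refine (abs_one_div_mul_sum_le hterm).trans ?_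
  rw [Finset.sum_add_distrib, Finset.sum_const, Finset.card_range, nsmul_eq_mul, ← Finset.mul_sum,
    ← Finset.mul_sum]
  calc _ = ((2 * N : ℕ) : ℝ) / ((2 * N : ℕ) : ℝ) * (K ^ 2 * w) + K * (2 * K ^ 2 *
          ∑ m ∈ Finset.range (2 * N), (1 / ((2 * N : ℕ) : ℝ) + nearDiag i m)) /
            ((2 * N : ℕ) : ℝ) := by ring
    _ ≤ 1 * (K ^ 2 * w) + K * (2 * K ^ 2 * 3) / ((2 * N : ℕ) : ℝ) := by
        gcongr
        · exact div_self_le_one _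
        · exact sum_mesh_add_nearDiag_le le_rfl
    _ = K ^ 2 * w + 6 * K ^ 3 / ((2 * N : ℕ) : ℝ) := by ring

lemma abs_covPresent_sub_le {s' : ℤ} {v : ℕ → ℝ} (hv0 : ∀ m, 0 ≤ v m) (hK : 1 ≤ K)
    (hi : i < 2 * N)
    (hcov'_le : ∀ m < N, |S'.cov t s' a m| ≤ K) (hcov_le : ∀ m < 2 * N, |S.cov t s' a m| ≤ K)
    (hcov : ∀ m < i, |S'.cov t s' a (m / 2) - S.cov t s' a m| ≤ v m)
    (hγ'_le : ∀ m < N, |S'.gamma s s' a a (i / 2) m| ≤ K)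
    (hγ_le : ∀ m < 2 * N, |S.gamma s s' a a i m| ≤ K)
    (hγ : ∀ m < 2 * N, |S'.gamma s s' a a (i / 2) (m / 2) - S.gamma s s' a a i m| ≤
      K * (1 / ((2 * N : ℕ) : ℝ) + nearDiag i m)) :
    |S'.covPresent N t s s' a (i / 2) - S.covPresent (2 * N) t s s' a i| ≤
      K / ((2 * N : ℕ) : ℝ) * ∑ m ∈ Finset.range i, v m + 4 * K ^ 2 / ((2 * N : ℕ) : ℝ) := by
  have hsum := abs_sum_range_sub_sum_range_le (p := 2 * (i / 2)) (i := i) (by omega) (by omega)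
    (f := fun m => S'.cov t s' a (m / 2) * S'.gamma s s' a a (i / 2) (m / 2))
    (g := fun m => S.cov t s' a m * S.gamma s s' a a i m) (Z := K * K)
    (E := fun m => v m * K + K * (K * (1 / ((2 * N : ℕ) : ℝ) + nearDiag i m)))
    (fun m hm => abs_mul_le_mul (hcov'_le _ (by omega)) (hγ'_le _ (by omega)))
    (fun m hm => abs_mul_le_mul (hcov_le m (by omega)) (hγ_le m (by omega))) (by positivity)
    (fun m _ => by
      have := nearDiag_nonneg i m
      have := hv0 m
      positivity)
    (fun m hm _ => abs_mul_sub_mul_le (hcov m hm) (hγ m (by omega)) (hcov_le m (by omega))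
      (hγ'_le _ (by omega)))
  rw [Finset.sum_add_distrib, ← Finset.sum_mul, ← Finset.mul_sum, ← Finset.mul_sum] at hsum
  rw [covPresent, covPresent, average_half, ← mul_sub, one_div_mul_eq_div, abs_div, Nat.abs_cast]
  calc _ ≤ (K * K + ((∑ m ∈ Finset.range i, v m) * K + K * (K * 3))) / ((2 * N : ℕ) : ℝ) := by
        refine div_le_div_of_nonneg_right (hsum.trans ?_) (by positivity)
        gcongr
        exact sum_mesh_add_nearDiag_le hi.le
    _ = _ := by ring

lemma past_add_present_le_coupling {w V : ℝ} (hK : 1 ≤ K) (hV : 0 ≤ V) :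
    2 * ((t : ℝ) + 2) ^ 2 * (K ^ 2 * w + 6 * K ^ 3 / ((2 * N : ℕ) : ℝ) +
      (K / ((2 * N : ℕ) : ℝ) * V + 4 * K ^ 2 / ((2 * N : ℕ) : ℝ))) ≤
        10 * K * coupling t K / ((2 * N : ℕ) : ℝ) + coupling t K * w +
          coupling t K / ((2 * N : ℕ) : ℝ) * V := by
  have hcpl : 0 ≤ coupling t K := zero_le_one.trans (one_le_coupling hK)
  have hpow : 2 * ((t : ℝ) + 2) ^ 2 * K ≤ coupling t K :=
    mul_le_mul_of_nonneg_left (le_self_pow₀ hK two_ne_zero) (by positivity)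
  calc _ = coupling t K * w + 6 * K * coupling t K / ((2 * N : ℕ) : ℝ) +
          4 * 1 * coupling t K / ((2 * N : ℕ) : ℝ) +
            (2 * ((t : ℝ) + 2) ^ 2 * K) / ((2 * N : ℕ) : ℝ) * V := by
        rw [coupling]
        ring
    _ ≤ coupling t K * w + 6 * K * coupling t K / ((2 * N : ℕ) : ℝ) +
          4 * K * coupling t K / ((2 * N : ℕ) : ℝ) + coupling t K / ((2 * N : ℕ) : ℝ) * V := by
        gcongr
    _ = _ := by ring

lemma abs_cov_sub_le (h' : S'.IsSolution T N ξ ℓ') (h : S.IsSolution T (2 * N) ξ ℓ')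
    (ht : t < T) (hK : 1 ≤ K) (hs : s ≤ t) (hS' : ∀ u < T, ∀ a, S'.BoundedAt N K u a)
    (hS : ∀ u < T, ∀ a, S.BoundedAt (2 * N) K u a) (hpast : ∀ u < t, ∀ a, CloseAt S' S N K u a)
    (hi : i < 2 * N) {w : ℝ} {v : ℕ → ℝ} (hw0 : 0 ≤ w) (hv0 : ∀ m, 0 ≤ v m)
    (hw : ∀ t' ∈ Finset.Ico (-1 : ℤ) t, ∀ b, ∀ m < 2 * N,
      |S'.gamma t t' a b (i / 2) (m / 2) - S.gamma t t' a b i m| ≤ w)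
    (hγ : ∀ s' ∈ Finset.Icc (-1 : ℤ) s, ∀ b, ∀ m < 2 * N,
      |S'.gamma s s' a b (i / 2) (m / 2) - S.gamma s s' a b i m| ≤
        K * (1 / ((2 * N : ℕ) : ℝ) + nearDiag i m))
    (hv : ∀ s' ∈ Finset.Icc (-1 : ℤ) s, ∀ m < i,
      |S'.cov t s' a (m / 2) - S.cov t s' a m| ≤ v m)
    (hpresent : s = t → ∀ t' ∈ Finset.Ico (-1 : ℤ) t, ∀ m < 2 * N,
      |S'.cov t t' a (m / 2) - S.cov t t' a m| ≤ K / ((2 * N : ℕ) : ℝ)) :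
    |S'.cov t s a (i / 2) - S.cov t s a i| ≤
      10 * K * coupling t K / ((2 * N : ℕ) : ℝ) + coupling t K * w +
        coupling t K / ((2 * N : ℕ) : ℝ) * ∑ m ∈ Finset.range i, v m := by
  have hsT := hs.trans_lt ht
  have hvsum : 0 ≤ ∑ m ∈ Finset.range i, v m := Finset.sum_nonneg fun m _ => hv0 m
  have hi' : i / 2 < N := by omega
  rw [h'.cov_eq_sum_covPast_add_sum_covPresent ht hs hi',
    h.cov_eq_sum_covPast_add_sum_covPresent ht hs hi, add_sub_add_comm]
  simp only [← Finset.sum_sub_distrib]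
  have hW' {t' s' : ℤ} (b : Bool) (ht' : t' ∈ Finset.Ico (-1 : ℤ) t)
      (hs' : s' ∈ Finset.Icc (-1 : ℤ) s) (m : ℕ) (hm : m < N) :
      |S'.covWeight N t' s s' a b (i / 2) m| ≤ K ^ 2 :=
    h'.abs_covWeight_le ht hK hs hi'.le hm (fun u hu => hS' u (hu.trans ht))
      (fun s' hs' => (hS' s hsT a).gamma_le s' (Finset.mem_Icc.mp hs').1 b _ hi'.le m hm)
      (fun _ t' ht' => (hS' t ht a).cov_le t' (Finset.mem_Ico.mp ht').1
        (Finset.mem_Ico.mp ht').2.le m hm) ht' hs'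
  refine (abs_history_sum_le hs (B₁ := K ^ 2 * w + 6 * K ^ 3 / ((2 * N : ℕ) : ℝ))
    (B₂ := K / ((2 * N : ℕ) : ℝ) * ∑ m ∈ Finset.range i, v m + 4 * K ^ 2 / ((2 * N : ℕ) : ℝ))
    (by positivity) (by positivity)
    (fun t' ht' s' hs' b => abs_covPast_sub_le hw0 hK
      ((hS t ht a).gamma_le t' (Finset.mem_Ico.mp ht').1 b i hi.le) (hw t' ht' b) (hW' b ht' hs')
      fun m hm => abs_covWeight_sub_le h' h ht hK hs hS' hS hpast hi hm
        (fun s' hs' => hγ s' hs' b m hm) (fun hst t' ht' => hpresent hst t' ht' m hm) ht' hs')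
    (fun s' hs' => ?_)).trans ?_
  · obtain ⟨hs'₁, hs's⟩ := Finset.mem_Icc.mp hs'
    have hs't : s' ≤ t := by omega
    exact abs_covPresent_sub_le hv0 hK hi ((hS' t ht a).cov_le s' hs'₁ hs't)
      ((hS t ht a).cov_le s' hs'₁ hs't) (hv s' hs') ((hS' s hsT a).gamma_le s' hs'₁ a _ hi'.le)
      ((hS s hsT a).gamma_le s' hs'₁ a i hi.le) (hγ s' hs' a)
  exact past_add_present_le_coupling hK hvsum

lemma abs_gamma_sub_le_and_abs_cov_sub_le_of_lt (h' : S'.IsSolution T N ξ ℓ')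
    (h : S.IsSolution T (2 * N) ξ ℓ') (ht : t < T) (hK : 1 ≤ K)
    (hS' : ∀ u < T, ∀ a, S'.BoundedAt N K u a) (hS : ∀ u < T, ∀ a, S.BoundedAt (2 * N) K u a)
    (hpast : ∀ u < t, ∀ a, CloseAt S' S N K u a)
    (hin : |S'.input t a - S.input t a| ≤ K / ((2 * N : ℕ) : ℝ)) :
    (∀ r ∈ Finset.Ico (-1 : ℤ) t, ∀ b, ∀ i ≤ 2 * N, ∀ j ≤ N, NearLevel i j → ∀ m < 2 * N,
      |S'.gamma t r a b j (m / 2) - S.gamma t r a b i m| ≤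
        gronwallConst (coupling t K) * (10 * K * coupling t K) / ((2 * N : ℕ) : ℝ)) ∧
    ∀ s ∈ Finset.Ico (-1 : ℤ) t, ∀ m < 2 * N, |S'.cov t s a (m / 2) - S.cov t s a m| ≤
      gronwallConst (coupling t K) * (10 * K * coupling t K) / ((2 * N : ℕ) : ℝ) := by
  have hcpl : 0 ≤ coupling t K := zero_le_one.trans (one_le_coupling hK)
  obtain ⟨hsum, hcov⟩ := gronwall_gammaSup_covSup (S := compare S' S) (t := t) (a := a)
    (L := 2 * N) (A := 10 * K * coupling t K / ((2 * N : ℕ) : ℝ)) (by positivity) hcpl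
    (fun r hr b i hi m hm => abs_gamma_sub_le_add_sum h' h ht hK hS' hS hpast hin hr hi.le
      (by omega) (nearLevel_half i) hm)
    fun s hs i hi => by
      obtain ⟨hs₁, hst⟩ := Finset.mem_Ico.mp hs
      obtain rfl | ⟨s, rfl⟩ := eq_neg_one_or_natCast hs₁
      · simp only [compare, h'.cov_mixed t t.cast_nonneg, h.cov_mixed t t.cast_nonneg, sub_zero,
          abs_zero]
        exact add_nonneg (add_nonneg (by positivity) (mul_nonneg hcpl gammaSup_nonneg))
          (mul_nonneg (by positivity) (Finset.sum_nonneg fun _ _ => covSup_nonneg))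
      · have hst : s < t := by exact_mod_cast hst
        exact abs_cov_sub_le h' h ht hK hst.le hS' hS hpast hi gammaSup_nonneg
          (fun _ => covSup_nonneg)
          (fun t' ht' b m hm => abs_gamma_le_gammaSup (S := compare S' S) ht' hm)
          (fun s' hs' b m hm => (hpast s hst a).abs_gamma_sub_le h' h (hst.trans ht) hK hi.le
            (by omega) (nearLevel_half i) hm (Finset.mem_Icc.mp hs').1)
          (fun s' hs' m _ => abs_cov_le_covSup (S := compare S' S)
            (Finset.mem_Ico.mpr (by rw [Finset.mem_Icc] at hs'; omega)))
          (fun heq => absurd heq hst.ne)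
  simp only [mul_div_assoc] at hsum hcov ⊢
  exact ⟨fun r hr b i hi j hj hij m hm => (abs_gamma_sub_le_add_sum h' h ht hK hS' hS hpast hin hr
    hi hj hij hm).trans (by simpa only [mul_div_assoc] using hsum i hi), hcov⟩

lemma abs_cov_self_sub_le (h' : S'.IsSolution T N ξ ℓ')
    (h : S.IsSolution T (2 * N) ξ ℓ') (ht : t < T) (hK : 1 ≤ K)
    (hS' : ∀ u < T, ∀ a, S'.BoundedAt N K u a) (hS : ∀ u < T, ∀ a, S.BoundedAt (2 * N) K u a)
    (hpast : ∀ u < t, ∀ a, CloseAt S' S N K u a)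
    (hγ : ∀ r ∈ Finset.Ico (-1 : ℤ) t, ∀ b, ∀ i ≤ 2 * N, ∀ j ≤ N, NearLevel i j → ∀ m < 2 * N,
      |S'.gamma t r a b j (m / 2) - S.gamma t r a b i m| ≤ K / ((2 * N : ℕ) : ℝ))
    (hcov : ∀ s ∈ Finset.Ico (-1 : ℤ) t, ∀ m < 2 * N,
      |S'.cov t s a (m / 2) - S.cov t s a m| ≤ K / ((2 * N : ℕ) : ℝ)) (hm : m < 2 * N) :
    |S'.cov t t a (m / 2) - S.cov t t a m| ≤
      gronwallConst (coupling t K) * (12 * K * coupling t K) / ((2 * N : ℕ) : ℝ) := by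
  have hcpl : 0 ≤ coupling t K := zero_le_one.trans (one_le_coupling hK)
  refine (gronwall_of_le_add_sum_add (v := fun i => |S'.cov t t a (i / 2) - S.cov t t a i|)
    (A := 11 * K * coupling t K / ((2 * N : ℕ) : ℝ)) (B := K / ((2 * N : ℕ) : ℝ))
    (by positivity) (by positivity) hcpl (fun _ => abs_nonneg _) (fun i hi => ?_) m hm).trans_eq
    (by ring)
  have hlevel (b : Bool) (m : ℕ) (hm : m < 2 * N) (r : ℤ) (hr : r ∈ Finset.Ico (-1 : ℤ) t) :=
    hγ r hr b i hi.le (i / 2) (by omega) (nearLevel_half i) m hm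
  refine (abs_cov_sub_le h' h ht hK le_rfl hS' hS hpast hi (w := K / ((2 * N : ℕ) : ℝ))
    (v := fun l => K / ((2 * N : ℕ) : ℝ) + |S'.cov t t a (l / 2) - S.cov t t a l|) (by positivity)
    (fun _ => by positivity) (fun t' ht' b m hm => hlevel b m hm t' ht')
    (fun s' hs' b m hm => abs_gamma_sub_le_nearDiag h' h ht hK hi.le (by omega)
      (nearLevel_half i) hm (hlevel b m hm) (Finset.mem_Icc.mp hs').1)
    (fun s' hs' m hm => ?_) (fun _ => hcov)).trans_eq (by ring)
  obtain ⟨hs', hs't⟩ := Finset.mem_Icc.mp hs'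
  rcases hs't.eq_or_lt with rfl | hs't
  · exact le_add_of_nonneg_left (by positivity)
  · exact le_add_of_le_of_nonneg (hcov s' (Finset.mem_Ico.mpr ⟨hs', hs't⟩) m (hm.trans hi))
      (abs_nonneg _)

lemma exists_closeAt (t : ℕ) (hK : 1 ≤ K) : ∃ K' : ℝ, K ≤ K' ∧
    ∀ {S' S : SweepData} {T N : ℕ} {ξ : ℕ → ℝ} {ℓ' : ℕ → ℝ → ℝ} {a : Bool},
      S'.IsSolution T N ξ ℓ' → S.IsSolution T (2 * N) ξ ℓ' → t < T →
      (∀ u < T, ∀ a, S'.BoundedAt N K u a) → (∀ u < T, ∀ a, S.BoundedAt (2 * N) K u a) →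
      (∀ u < t, ∀ a, CloseAt S' S N K u a) →
      |S'.input t a - S.input t a| ≤ K / ((2 * N : ℕ) : ℝ) → CloseAt S' S N K' t a := by
  set K₁ := gronwallConst (coupling t K) * (10 * K * coupling t K)
  have hcpl := one_le_coupling (t := t) hK
  have hKK₁ : K ≤ K₁ := by
    have hG := one_le_gronwallConst (zero_le_one.trans hcpl)
    refine le_trans ?_ (le_mul_of_one_le_left (by positivity) hG)
    nlinarith
  have hK₁ : 1 ≤ K₁ := hK.trans hKK₁
  set K₂ := gronwallConst (coupling t K₁) * (12 * K₁ * coupling t K₁)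
  refine ⟨max K₁ K₂, hKK₁.trans (le_max_left _ _),
    fun {S' S T N ξ ℓ' a} h' h ht hS' hS hpast hin => ?_⟩
  have hdiv₁ : K₁ / ((2 * N : ℕ) : ℝ) ≤ max K₁ K₂ / ((2 * N : ℕ) : ℝ) := by
    gcongr
    exact le_max_left _ _
  have hdiv₂ : K₂ / ((2 * N : ℕ) : ℝ) ≤ max K₁ K₂ / ((2 * N : ℕ) : ℝ) := by
    gcongr
    exact le_max_right _ _
  obtain ⟨hγ, hcov⟩ :=
    abs_gamma_sub_le_and_abs_cov_sub_le_of_lt h' h ht hK hS' hS hpast hin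
  refine ⟨fun r hr b i hi j hj hij m hm => (hγ r hr b i hi j hj hij m hm).trans hdiv₁,
    fun s hs hst m hm => ?_⟩
  rcases hst.eq_or_lt with rfl | hst
  · exact (abs_cov_self_sub_le h' h ht hK₁ (fun u hu a => (hS' u hu a).mono hKK₁)
      (fun u hu a => (hS u hu a).mono hKK₁) (fun u hu a => (hpast u hu a).mono hKK₁) hγ hcov
      hm).trans hdiv₂
  · exact (hcov s (Finset.mem_Ico.mpr ⟨hs, hst⟩) m hm).trans hdiv₁

end Compare

lemma exists_forall_boundedAt (T : ℕ) (ξ : ℕ → ℝ) {ℓ' : ℕ → ℝ → ℝ}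
    (hℓ' : ∀ t, Continuous (ℓ' t)) (n : ℕ) :
    ∃ K : ℝ, 1 ≤ K ∧ ∀ {S : SweepData} {L : ℕ}, 1 ≤ L → S.IsSolution T L ξ ℓ' → n ≤ T →
      ∀ u < n, ∀ a, S.BoundedAt L K u a := by
  induction n with
  | zero => exact ⟨1, le_rfl, fun _ _ _ u hu => absurd hu u.not_lt_zero⟩
  | succ n ih =>
    obtain ⟨K, hK, hpast⟩ := ih
    obtain ⟨K₁, hKK₁, hforward⟩ := exists_boundedAt n (hK.trans (le_max_left K |ξ n|))
    obtain ⟨M, hM⟩ := (isCompact_Icc (a := -K₁) (b := K₁)).exists_bound_of_continuousOn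
      (hℓ' n).continuousOn
    have hK_le_K₁ : K ≤ K₁ := (le_max_left _ _).trans hKK₁
    have hK_le : K ≤ max K₁ M := hK_le_K₁.trans (le_max_left _ _)
    obtain ⟨K₂, hKK₂, hbackward⟩ := exists_boundedAt n (hK.trans hK_le)
    refine ⟨K₂, hK.trans (hK_le.trans hKK₂), fun {S L} hL h hn u hu a => ?_⟩
    have hpast : ∀ u < n, ∀ a, S.BoundedAt L K u a := hpast hL h (Nat.le_of_succ_le hn)
    rcases Nat.lt_succ_iff_lt_or_eq.mp hu with hu | rfl
    · exact (hpast u hu a).mono (hK_le.trans hKK₂)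
    have hfalse : S.BoundedAt L K₁ u false :=
      hforward h hn (fun v hv a => (hpast v hv a).mono (le_max_left _ _))
        (by rw [h.input_false u hn]; exact le_max_right _ _)
    cases a with
    | false => exact hfalse.mono ((le_max_left _ _).trans hKK₂)
    | true =>
      refine hbackward h hn (fun v hv a => (hpast v hv a).mono hK_le) ?_
      rw [h.input_true u hn]
      exact (hM _ (mem_Icc.mpr (abs_le.mp (hfalse.gamma_le (-1) le_rfl true L le_rfl (L - 1)
        (by omega))))).trans (le_max_right _ _)

lemma abs_input_true_sub_le {S' S : SweepData} {T N t : ℕ} {ξ : ℕ → ℝ} {ℓ' : ℕ → ℝ → ℝ} {B K : ℝ}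
    {M : NNReal} (hN : 1 ≤ N) (h' : S'.IsSolution T N ξ ℓ') (h : S.IsSolution T (2 * N) ξ ℓ')
    (ht : t < T) (hbounded' : S'.BoundedAt N B t false) (hbounded : S.BoundedAt (2 * N) B t false)
    (hclose : CloseAt S' S N K t false) (hM : LipschitzOnWith M (ℓ' t) (Icc (-B) B)) :
    |S'.input t true - S.input t true| ≤ M * K / ((2 * N : ℕ) : ℝ) := by
  have houtput : |S'.gamma t (-1) false true N (N - 1) -
      S.gamma t (-1) false true (2 * N) (2 * N - 1)| ≤ K / ((2 * N : ℕ) : ℝ) := by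
    have hlast := hclose.gamma_sub_le (-1) (Finset.mem_Ico.mpr ⟨le_rfl, by omega⟩) true
      (2 * N) le_rfl N le_rfl ⟨by omega, by omega⟩ (2 * N - 1) (by omega)
    rwa [show (2 * N - 1) / 2 = N - 1 by omega] at hlast
  have hmem' := abs_le.mp (hbounded'.gamma_le (-1) le_rfl true N le_rfl (N - 1) (by omega))
  have hmem := abs_le.mp
    (hbounded.gamma_le (-1) le_rfl true (2 * N) le_rfl (2 * N - 1) (by omega))
  rw [h'.input_true t ht, h.input_true t ht, mul_div_assoc, ← Real.dist_eq]
  refine (hM.dist_le_mul _ (mem_Icc.mpr hmem') _ (mem_Icc.mpr hmem)).trans ?_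
  rw [Real.dist_eq]
  gcongr

lemma exists_forall_closeAt (T : ℕ) (ξ : ℕ → ℝ) {ℓ' : ℕ → ℝ → ℝ}
    (hℓ' : ∀ t, LocallyLipschitz (ℓ' t)) (n : ℕ) :
    ∃ K : ℝ, 1 ≤ K ∧ ∀ {S' S : SweepData} {N : ℕ}, 1 ≤ N → S'.IsSolution T N ξ ℓ' →
      S.IsSolution T (2 * N) ξ ℓ' → n ≤ T → ∀ u < n, ∀ a, CloseAt S' S N K u a := by
  obtain ⟨B, hB, hbounded⟩ := exists_forall_boundedAt T ξ (fun t => (hℓ' t).continuous) T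
  suffices hclose : ∃ K : ℝ, B ≤ K ∧ ∀ {S' S : SweepData} {N : ℕ}, 1 ≤ N →
      S'.IsSolution T N ξ ℓ' → S.IsSolution T (2 * N) ξ ℓ' → n ≤ T →
      ∀ u < n, ∀ a, CloseAt S' S N K u a by
    obtain ⟨K, hBK, hclose⟩ := hclose
    exact ⟨K, hB.trans hBK, hclose⟩
  induction n with
  | zero => exact ⟨B, le_rfl, fun _ _ _ _ u hu => absurd hu u.not_lt_zero⟩
  | succ n ih =>
    obtain ⟨K, hBK, hpast⟩ := ih
    have hK : 1 ≤ K := hB.trans hBK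
    obtain ⟨K₁, hKK₁, hforward⟩ := exists_closeAt n hK
    obtain ⟨M, hM⟩ := (hℓ' n).locallyLipschitzOn.exists_lipschitzOnWith_of_compact
      (isCompact_Icc (a := -B) (b := B))
    have hK_le : K ≤ max K₁ (M * K₁) := hKK₁.trans (le_max_left _ _)
    obtain ⟨K₂, hKK₂, hbackward⟩ := exists_closeAt n (hK.trans hK_le)
    refine ⟨K₂, hBK.trans (hK_le.trans hKK₂), fun {S' S N} hN h' h hn u hu a => ?_⟩
    have hpast : ∀ u < n, ∀ a, CloseAt S' S N K u a := hpast hN h' h (Nat.le_of_succ_le hn)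
    have hS' := hbounded hN h' le_rfl
    have hS := hbounded (by omega) h le_rfl
    rcases Nat.lt_succ_iff_lt_or_eq.mp hu with hu | rfl
    · exact (hpast u hu a).mono (hK_le.trans hKK₂)
    have hfalse : CloseAt S' S N K₁ u false :=
      hforward h' h hn (fun v hv a => (hS' v hv a).mono hBK) (fun v hv a => (hS v hv a).mono hBK)
        hpast (by
          rw [h'.input_false u hn, h.input_false u hn, sub_self, abs_zero]
          positivity)
    cases a with
    | false => exact hfalse.mono ((le_max_left _ _).trans hKK₂)
    | true =>
      refine hbackward h' h hn (fun v hv a => (hS' v hv a).mono (hBK.trans hK_le))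
        (fun v hv a => (hS v hv a).mono (hBK.trans hK_le))
        (fun v hv a => (hpast v hv a).mono hK_le) ?_
      refine (abs_input_true_sub_le hN h' h hn (hS' u hn false) (hS u hn false) hfalse hM).trans ?_
      gcongr
      exact le_max_right _ _

end SweepData

/-! ### The partition into cells -/

/-- The `m`-th of the `L` cells of the uniform partition of `(0, 1]`. -/
def cell (L m : ℕ) : Set ℝ := Ioc ((m : ℝ) / L) (((m + 1 : ℕ) : ℝ) / L)

lemma mem_cell_iff_ceil_eq {L m : ℕ} (hL : 1 ≤ L) {q : ℝ} :
    q ∈ cell L m ↔ ⌈(L : ℝ) * q⌉ = ((m + 1 : ℕ) : ℤ) := by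
  have hLpos : (0 : ℝ) < L := Nat.cast_pos.mpr hL
  rw [cell, Set.mem_Ioc, div_lt_iff₀ hLpos, le_div_iff₀ hLpos, mul_comm q, Int.ceil_eq_iff]
  push_cast
  rw [add_sub_cancel_right]

lemma div_mem_cell {L : ℕ} (hL : 1 ≤ L) (m : ℕ) : ((m + 1 : ℕ) : ℝ) / L ∈ cell L m := by
  have hL_ne : (L : ℝ) ≠ 0 := Nat.cast_ne_zero.mpr (by omega)
  rw [mem_cell_iff_ceil_eq hL, mul_div_cancel₀ _ hL_ne, Int.ceil_natCast]

lemma cell_subset_Ioc {L m : ℕ} (hm : m < L) : cell L m ⊆ Ioc 0 1 :=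
  Ioc_subset_Ioc (by positivity) (div_le_one_of_le₀ (Nat.cast_le.mpr hm) L.cast_nonneg)

lemma exists_mem_cell {L : ℕ} (hL : 1 ≤ L) {q : ℝ} (hq : q ∈ Ioc (0 : ℝ) 1) :
    ∃ m < L, q ∈ cell L m := by
  have hLpos : (0 : ℝ) < L := Nat.cast_pos.mpr hL
  have hpos : 0 < ⌈(L : ℝ) * q⌉ := Int.ceil_pos.mpr (mul_pos hLpos hq.1)
  have hle : ⌈(L : ℝ) * q⌉ ≤ (L : ℤ) :=
    Int.ceil_le.mpr (mul_le_of_le_one_right hLpos.le hq.2)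
  refine ⟨(⌈(L : ℝ) * q⌉ - 1).toNat, by omega, (mem_cell_iff_ceil_eq hL).mpr (by omega)⟩

lemma cell_two_mul_subset (N m : ℕ) : cell (2 * N) m ⊆ cell N (m / 2) := by
  have hlower : ((m / 2 : ℕ) : ℝ) ≤ m / 2 := Nat.cast_div_le
  have hupper : ((m + 1 : ℕ) : ℝ) / 2 ≤ (m / 2 + 1 : ℕ) := by
    rw [div_le_iff₀ two_pos]
    exact_mod_cast (by omega : m + 1 ≤ (m / 2 + 1) * 2)
  refine Ioc_subset_Ioc ?_ ?_
  · rw [Nat.cast_mul, Nat.cast_ofNat, ← div_div]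
    gcongr
  · rw [Nat.cast_mul, Nat.cast_ofNat, ← div_div]
    gcongr

lemma setIntegral_Ioc_eq_average_of_cell {L : ℕ} (hL : 1 ≤ L) {F : ℝ → ℝ}
    (hF : ∀ m < L, ∀ q ∈ cell L m, F q = F (((m + 1 : ℕ) : ℝ) / L)) :
    ∫ q in Ioc (0 : ℝ) 1, F q =
      1 / (L : ℝ) * ∑ m ∈ Finset.range L, F (((m + 1 : ℕ) : ℝ) / L) := by
  have hmono : ∀ m : ℕ, (m : ℝ) / L ≤ ((m + 1 : ℕ) : ℝ) / L := fun m => by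
    gcongr
    exact m.le_succ
  have hintegrable : ∀ m < L,
      IntervalIntegrable F volume ((m : ℝ) / L) (((m + 1 : ℕ) : ℝ) / L) := fun m hm => by
    rw [intervalIntegrable_iff_integrableOn_Ioc_of_le (hmono m)]
    exact (integrableOn_const (C := F (((m + 1 : ℕ) : ℝ) / L)) (by simp)).congr_fun
      (fun q hq => (hF m hm q hq).symm) measurableSet_Ioc
  have hsum := intervalIntegral.sum_integral_adjacent_intervals
    (a := fun m : ℕ => (m : ℝ) / L) hintegrable
  rw [Nat.cast_zero, zero_div, div_self (Nat.cast_ne_zero.mpr (by omega))] at hsum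
  rw [← intervalIntegral.integral_of_le zero_le_one, ← hsum, Finset.mul_sum]
  refine Finset.sum_congr rfl fun m hm => ?_
  rw [intervalIntegral.integral_of_le (hmono m),
    setIntegral_congr_fun measurableSet_Ioc (hF m (Finset.mem_range.mp hm)), setIntegral_const,
    smul_eq_mul, Real.volume_real_Ioc_of_le (hmono m), ← sub_div, Nat.cast_succ,
    add_sub_cancel_left]

/-! ### Reading the recursion on the grid -/

/-- The level, in units of `1 / L`, that sweep `a` has reached after its first `i` layers. -/
def sweepLevel (L : ℕ) (a : Bool) (i : ℕ) : ℕ := if a then L - i else i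

/-- The index of the `m`-th cell visited by sweep `a`. -/
def sweepCell (L : ℕ) (a : Bool) (m : ℕ) : ℕ := if a then L - 1 - m else m

lemma sweepLevel_le {L : ℕ} (a : Bool) {i : ℕ} (hi : i ≤ L) : sweepLevel L a i ≤ L := by
  unfold sweepLevel
  split <;> omega

lemma sweepLevel_sweepLevel {L : ℕ} (a : Bool) {i : ℕ} (hi : i ≤ L) :
    sweepLevel L a (sweepLevel L a i) = i := by
  unfold sweepLevel
  split <;> omega

lemma sweepCell_lt {L : ℕ} (a : Bool) {m : ℕ} (hm : m < L) : sweepCell L a m < L := by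
  unfold sweepCell
  split <;> omega

lemma sweepCell_sweepCell {L : ℕ} (a : Bool) {m : ℕ} (hm : m < L) :
    sweepCell L a (sweepCell L a m) = m := by
  unfold sweepCell
  split <;> omega

lemma sweepCell_not {L : ℕ} (a : Bool) {m : ℕ} (hm : m < L) :
    sweepCell L (!a) (L - 1 - m) = sweepCell L a m := by
  cases a <;> simp [sweepCell]
  omega

lemma sweepCell_inj {L : ℕ} (a : Bool) {m i : ℕ} (hm : m < L) (hi : i < L) :
    sweepCell L a m = sweepCell L a i ↔ m = i := by
  unfold sweepCell
  split <;> omega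

lemma sweepCell_two_mul {N : ℕ} (a : Bool) {m : ℕ} (hm : m < 2 * N) :
    sweepCell (2 * N) a m / 2 = sweepCell N a (m / 2) := by
  unfold sweepCell
  split <;> omega

lemma sum_range_sweepCell (L : ℕ) (a : Bool) (F : ℕ → ℝ) :
    ∑ m ∈ Finset.range L, F (sweepCell L a m) = ∑ m ∈ Finset.range L, F m := by
  cases a with
  | false => rfl
  | true => exact Finset.sum_range_reflect F L

lemma nearLevel_sweepLevel {N : ℕ} (a : Bool) {i : ℕ} (hi : i ≤ 2 * N) :
    SweepData.NearLevel (sweepLevel (2 * N) a i) (sweepLevel N a ((i + 1) / 2)) := by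
  unfold SweepData.NearLevel sweepLevel
  split <;> omega

/-- The values of `Γ` and `C` on the grid of depth `L`, read off in each cell at its right end
point. -/
noncomputable def gridData (L : ℕ) (ξ χ : ℕ → ℝ) (Γ : ℕ → ℤ → Bool → Bool → ℝ → ℝ → ℝ)
    (C : ℤ → ℤ → Bool → ℝ → ℝ) : SweepData where
  input t a := if a then χ t else ξ t
  gamma t r a b i m :=
    Γ t r a b ((sweepLevel L a i : ℕ) / L) (((sweepCell L a m + 1 : ℕ) : ℝ) / L)
  cov t s a m := C t s a (((sweepCell L a m + 1 : ℕ) : ℝ) / L)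

lemma gridData_orientedCov {L : ℕ} {ξ χ : ℕ → ℝ} {Γ : ℕ → ℤ → Bool → Bool → ℝ → ℝ → ℝ}
    {C : ℤ → ℤ → Bool → ℝ → ℝ} {t s : ℤ} {a b : Bool} {m : ℕ} (hm : m < L) :
    (gridData L ξ χ Γ C).orientedCov L a t s b m =
      C t s b (((sweepCell L a m + 1 : ℕ) : ℝ) / L) := by
  have hcell : sweepCell L b (if b = a then m else L - 1 - m) = sweepCell L a m := by
    split_ifs with hba
    · rw [hba]
    · rw [Bool.eq_not_of_ne hba, sweepCell_not a hm]
  simp only [SweepData.orientedCov, gridData, hcell]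

namespace IsLinearTP

section

variable {T L : ℕ} {ξ : ℕ → ℝ} {ℓ' : ℕ → ℝ → ℝ} {Γ : ℕ → ℤ → Bool → Bool → ℝ → ℝ → ℝ}
  {C : ℤ → ℤ → Bool → ℝ → ℝ} {f χ : ℕ → ℝ} {t s i m : ℕ} {r : ℤ} {a b : Bool} {q q' : ℝ}

lemma Γ_sweepLevel_zero (h : IsLinearTP T L ξ ℓ' Γ C f χ) (hL : 1 ≤ L) (ht : t < T) (hr : -1 ≤ r)
    (hrt : r ≤ t) (hq : q ∈ Ioc (0 : ℝ) 1) :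
    Γ t r a b ((sweepLevel L a 0 : ℕ) / L) q =
      if r = -1 ∧ b = a then (if a then χ t else ξ t) else 0 := by
  cases a with
  | false => simpa [sweepLevel] using h.fwd_init t ht r hr hrt b q hq.1 hq.2
  | true =>
    have hL_ne : (L : ℝ) ≠ 0 := Nat.cast_ne_zero.mpr (by omega)
    simpa [sweepLevel, hL_ne] using h.bwd_init t ht r hr hrt b q hq.1 hq.2

lemma Γ_sweepLevel_succ (h : IsLinearTP T L ξ ℓ' Γ C f χ) (ht : t < T) (hr : -1 ≤ r)
    (hrt : r ≤ t) (hi : i < L) (hq : q ∈ Ioc (0 : ℝ) 1) :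
    Γ t r a b ((sweepLevel L a (i + 1) : ℕ) / L) q = Γ t r a b ((sweepLevel L a i : ℕ) / L) q
      + (if (t : ℤ) = r ∧ b = a ∧ ((sweepCell L a i + 1 : ℕ) : ℤ) = ⌈(L : ℝ) * q⌉ then 1 else 0)
      + 1 / (L : ℝ) * ∑ s ∈ Finset.range t,
          Γ s r (!a) b ((sweepLevel L (!a) (L - 1 - i) : ℕ) / L) q *
            (Γ t s a (!a) ((sweepLevel L a i : ℕ) / L) (((sweepCell L a i + 1 : ℕ) : ℝ) / L)
              - C t s a (((sweepCell L a i + 1 : ℕ) : ℝ) / L)) := by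
  have hL : (0 : ℝ) < L := Nat.cast_pos.mpr (by omega)
  cases a with
  | false =>
    have hstep := h.fwd_step t ht (i + 1) (by omega) (by omega) r hr hrt b ((i + 1 : ℕ) / L) q
      (by gcongr; linarith) le_rfl hq.1 hq.2
    rw [show ((i + 1 : ℕ) : ℝ) - 1 = i by push_cast; ring] at hstep
    have hlevel : L - (L - 1 - i) = i + 1 := by omega
    simpa only [sweepLevel, sweepCell, Bool.not_false, Bool.false_eq_true, if_false, if_true,
      hlevel] using hstep
  | true =>
    obtain ⟨j, rfl⟩ : ∃ j, L = i + 1 + j := ⟨L - (i + 1), by omega⟩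
    have hstep := h.bwd_step t ht (j + 1) (by omega) (by omega) r hr hrt b (j / (i + 1 + j : ℕ)) q
      (by gcongr; push_cast; linarith) (by simp) (by positivity) hq.1 hq.2
    rw [show ((j + 1 : ℕ) : ℝ) - 1 = j by push_cast; ring] at hstep
    have hvisited : i + 1 + j - (i + 1) = j := by omega
    have hlevel : i + 1 + j - i = j + 1 := by omega
    have hcell : i + 1 + j - 1 - i = j := by omega
    simpa only [sweepLevel, sweepCell, Bool.not_true, Bool.false_eq_true, if_false, if_true, hlevel,
      hcell, hvisited] using hstep

lemma C_eq_sum_of_mem_cell (h : IsLinearTP T L ξ ℓ' Γ C f χ) (ht : t < T) (hs : s ≤ t) (hi : i < L)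
    (hq : q ∈ cell L (sweepCell L a i)) :
    C t s a q = ∑ t' ∈ Finset.Icc (-1 : ℤ) t, ∑ s' ∈ Finset.Icc (-1 : ℤ) s, ∑ b : Bool,
      ∫ p in Ioc (0 : ℝ) 1, Γ t t' a b ((sweepLevel L a i : ℕ) / L) p * C t' s' b p *
        Γ s s' a b ((sweepLevel L a i : ℕ) / L) p := by
  obtain ⟨hlower, hupper⟩ := hq
  cases a with
  | false =>
    have hpred : ((i + 1 : ℕ) : ℝ) - 1 = i := by push_cast; ring
    have hC := h.fwd_C t ht s hs (i + 1) (by omega) (by omega) q (by rwa [hpred]) hupper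
    rwa [hpred] at hC
  | true =>
    simp only [sweepCell, sweepLevel, if_true] at hlower hupper ⊢
    refine h.bwd_C t ht s hs (L - i) (by omega) (by omega) q ?_ ?_
    · rwa [← Nat.cast_pred (by omega), show L - i - 1 = L - 1 - i by omega]
    · rwa [show L - 1 - i + 1 = L - i by omega] at hupper

lemma Γ_eq_of_ceil_eq (h : IsLinearTP T L ξ ℓ' Γ C f χ) (hL : 1 ≤ L) (hq : q ∈ Ioc (0 : ℝ) 1)
    (hq' : q' ∈ Ioc (0 : ℝ) 1) (hceil : ⌈(L : ℝ) * q⌉ = ⌈(L : ℝ) * q'⌉) (ht : t < T) (hr : -1 ≤ r)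
    (hi : i ≤ L) :
    Γ t r a b ((sweepLevel L a i : ℕ) / L) q = Γ t r a b ((sweepLevel L a i : ℕ) / L) q' := by
  induction t using Nat.strong_induction_on generalizing a i with
  | _ t ih_time =>
    rcases lt_or_ge (t : ℤ) r with hrt | hrt
    · rw [h.Γ_vanish t r hrt, h.Γ_vanish t r hrt]
    induction i with
    | zero => rw [h.Γ_sweepLevel_zero hL ht hr hrt hq, h.Γ_sweepLevel_zero hL ht hr hrt hq']
    | succ i ih_layer =>
      rw [h.Γ_sweepLevel_succ ht hr hrt hi hq, h.Γ_sweepLevel_succ ht hr hrt hi hq',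
        ih_layer (by omega), hceil]
      congr 2
      refine Finset.sum_congr rfl fun s hs => ?_
      have hs := Finset.mem_range.mp hs
      rw [ih_time s hs (by omega) (by omega)]

lemma Γ_eq_of_mem_cell (h : IsLinearTP T L ξ ℓ' Γ C f χ) (ht : t < T) (hr : -1 ≤ r) (hi : i ≤ L)
    (hm : m < L) (hq : q ∈ cell L m) :
    Γ t r a b ((i : ℝ) / L) q = Γ t r a b ((i : ℝ) / L) (((m + 1 : ℕ) : ℝ) / L) := by
  have hL : 1 ≤ L := by omega
  have hend := div_mem_cell hL m
  rw [← sweepLevel_sweepLevel a hi]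
  refine h.Γ_eq_of_ceil_eq hL (cell_subset_Ioc hm hq) (cell_subset_Ioc hm hend) ?_ ht hr
    (sweepLevel_le a hi)
  rw [(mem_cell_iff_ceil_eq hL).mp hq, (mem_cell_iff_ceil_eq hL).mp hend]

lemma C_eq_of_mem_cell (h : IsLinearTP T L ξ ℓ' Γ C f χ) {t s : ℤ} (ht : -1 ≤ t) (htT : t < T)
    (hs : -1 ≤ s) (hsT : s < T) (hm : m < L) (hq : q ∈ cell L m) :
    C t s a q = C t s a (((m + 1 : ℕ) : ℝ) / L) := by
  wlog hst : s ≤ t generalizing s t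
  · rw [h.C_symm t s, h.C_symm t s]
    exact this hs hsT ht htT (le_of_not_ge hst)
  obtain rfl | ⟨s, rfl⟩ := eq_neg_one_or_natCast hs
  · obtain rfl | ⟨t, rfl⟩ := eq_neg_one_or_natCast ht
    · rw [h.C_base, h.C_base]
    · rw [h.C_mixed t (by omega), h.C_mixed t (by omega)]
  · lift t to ℕ using by omega
    have hC : ∀ p ∈ cell L m, C t s a p = _ := fun p hp =>
      h.C_eq_sum_of_mem_cell (by omega) (by omega) (sweepCell_lt a hm)
        (by rwa [sweepCell_sweepCell a hm])
    rw [hC q hq, hC _ (div_mem_cell (by omega) m)]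

lemma integral_eq_average (h : IsLinearTP T L ξ ℓ' Γ C f χ) (ht : t < T) (hs : s ≤ t) (hi : i ≤ L)
    (hL : 1 ≤ L) {t' s' : ℤ} (ht' : t' ∈ Finset.Icc (-1 : ℤ) t)
    (hs' : s' ∈ Finset.Icc (-1 : ℤ) s) :
    ∫ q in Ioc (0 : ℝ) 1, Γ t t' a b ((i : ℝ) / L) q * C t' s' b q * Γ s s' a b ((i : ℝ) / L) q =
      1 / (L : ℝ) * ∑ m ∈ Finset.range L,
        Γ t t' a b ((i : ℝ) / L) (((m + 1 : ℕ) : ℝ) / L) * C t' s' b (((m + 1 : ℕ) : ℝ) / L) *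
          Γ s s' a b ((i : ℝ) / L) (((m + 1 : ℕ) : ℝ) / L) := by
  rw [Finset.mem_Icc] at ht' hs'
  refine setIntegral_Ioc_eq_average_of_cell hL fun m hm q hq => ?_
  rw [h.Γ_eq_of_mem_cell ht ht'.1 hi hm hq, h.Γ_eq_of_mem_cell (by omega) hs'.1 hi hm hq,
    h.C_eq_of_mem_cell ht'.1 (by omega) hs'.1 (by omega) hm hq]

lemma gridData_gamma_sweepLevel (h : IsLinearTP T L ξ ℓ' Γ C f χ) (ht : t < T) (hr : -1 ≤ r)
    (hi : i ≤ L) (hm : m < L) (hq : q ∈ cell L m) :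
    (gridData L ξ χ Γ C).gamma t r a b (sweepLevel L a i) (sweepCell L a m) =
      Γ t r a b ((i : ℝ) / L) q := by
  simp only [gridData]
  rw [sweepLevel_sweepLevel a hi, sweepCell_sweepCell a hm, h.Γ_eq_of_mem_cell ht hr hi hm hq]

lemma gridData_cov_sweepCell (h : IsLinearTP T L ξ ℓ' Γ C f χ) {t s : ℤ} (ht : -1 ≤ t)
    (htT : t < T) (hs : -1 ≤ s) (hsT : s < T) (hm : m < L) (hq : q ∈ cell L m) :
    (gridData L ξ χ Γ C).cov t s a (sweepCell L a m) = C t s a q := by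
  simp only [gridData]
  rw [sweepCell_sweepCell a hm, h.C_eq_of_mem_cell ht htT hs hsT hm hq]

lemma gridData_gamma_succ (h : IsLinearTP T L ξ ℓ' Γ C f χ) (ht : t < T) (hr : -1 ≤ r)
    (hrt : r ≤ t) (hi : i < L) (hm : m < L) :
    (gridData L ξ χ Γ C).gamma t r a b (i + 1) m = (gridData L ξ χ Γ C).gamma t r a b i m
      + (if (t : ℤ) = r ∧ b = a ∧ m = i then 1 else 0)
      + 1 / (L : ℝ) * ∑ s ∈ Finset.range t,
          (gridData L ξ χ Γ C).gamma s r (!a) b (L - 1 - i) (L - 1 - m) *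
            ((gridData L ξ χ Γ C).gamma t s a (!a) i i - (gridData L ξ χ Γ C).cov t s a i) := by
  have hend := div_mem_cell (show 1 ≤ L by omega) (sweepCell L a m)
  have hvisited : ((sweepCell L a i + 1 : ℕ) : ℤ) = ((sweepCell L a m + 1 : ℕ) : ℤ) ↔ m = i := by
    rw [Nat.cast_inj, Nat.succ_inj, sweepCell_inj a hi hm, eq_comm]
  simp only [gridData, sweepCell_not a hm]
  rw [h.Γ_sweepLevel_succ ht hr hrt hi (cell_subset_Ioc (sweepCell_lt a hm) hend),
    (mem_cell_iff_ceil_eq (by omega)).mp hend]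
  simp only [hvisited]

lemma gridData_cov_eq (h : IsLinearTP T L ξ ℓ' Γ C f χ) (ht : t < T) (hs : s ≤ t) (hi : i < L) :
    (gridData L ξ χ Γ C).cov t s a i =
      ∑ t' ∈ Finset.Icc (-1 : ℤ) t, ∑ s' ∈ Finset.Icc (-1 : ℤ) s, ∑ b : Bool,
        1 / (L : ℝ) * ∑ m ∈ Finset.range L,
          (gridData L ξ χ Γ C).gamma t t' a b i m * (gridData L ξ χ Γ C).orientedCov L a t' s' b m *
            (gridData L ξ χ Γ C).gamma s s' a b i m := by
  have hL : 1 ≤ L := by omega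
  refine (h.C_eq_sum_of_mem_cell ht hs hi (div_mem_cell hL _)).trans ?_
  refine Finset.sum_congr rfl fun t' ht' => Finset.sum_congr rfl fun s' hs' =>
    Finset.sum_congr rfl fun b _ => ?_
  rw [h.integral_eq_average ht hs (sweepLevel_le a hi.le) hL ht' hs', ← sum_range_sweepCell L a]
  congr 1
  refine Finset.sum_congr rfl fun m hm => ?_
  rw [gridData_orientedCov (Finset.mem_range.mp hm)]
  rfl

lemma isSolution_gridData (h : IsLinearTP T L ξ ℓ' Γ C f χ) (hL : 1 ≤ L) :
    (gridData L ξ χ Γ C).IsSolution T L ξ ℓ' where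
  input_false _ _ := rfl
  input_true t ht := by
    have hL_ne : (L : ℝ) ≠ 0 := Nat.cast_ne_zero.mpr (by omega)
    simp [gridData, sweepLevel, sweepCell, h.χ_def t ht, h.f_def t ht, hL, hL_ne]
  cov_symm t s a _ := h.C_symm t s a _
  cov_base a _ := h.C_base a _
  cov_mixed t ht a _ := h.C_mixed t ht a _
  gamma_of_lt t r hr a b _ _ := h.Γ_vanish t r hr a b _ _
  gamma_zero t ht r hr hrt a b m hm := h.Γ_sweepLevel_zero hL ht hr hrt
    (cell_subset_Ioc (sweepCell_lt a hm) (div_mem_cell hL _))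
  gamma_succ t ht r hr hrt a b i hi m hm := h.gridData_gamma_succ ht hr hrt hi hm
  cov_eq t ht s hs a i hi := h.gridData_cov_eq ht hs hi

end

section

variable {T N : ℕ} {ξ : ℕ → ℝ} {ℓ' : ℕ → ℝ → ℝ} {Γ' Γ : ℕ → ℤ → Bool → Bool → ℝ → ℝ → ℝ}
  {C' C : ℤ → ℤ → Bool → ℝ → ℝ} {f' χ' f χ : ℕ → ℝ} {t i : ℕ} {r : ℤ} {a b : Bool} {K q : ℝ}

lemma Γ_div_two_mul_eq (h : IsLinearTP T N ξ ℓ' Γ C f χ) (ht : t < T) (hr : -1 ≤ r) (hrt : r ≤ t)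
    (hi : i ≤ 2 * N) (hq : q ∈ Ioc (0 : ℝ) 1) :
    Γ t r a b ((i : ℝ) / (2 * N : ℕ)) q = Γ t r a b (((i + 1) / 2 : ℕ) / N) q := by
  cases i with
  | zero => simp
  | succ j =>
    obtain ⟨hlower, hupper⟩ := cell_two_mul_subset N j (div_mem_cell (by omega) j)
    rw [show (j + 1 + 1) / 2 = j / 2 + 1 by omega]
    refine h.Γ_const t ht r hr hrt a b (j / 2 + 1) (by omega) (by omega) _ q ?_ hupper hq.1 hq.2
    rwa [Nat.cast_succ, add_sub_cancel_right]

lemma abs_Γ_sub_le (h' : IsLinearTP T N ξ ℓ' Γ' C' f' χ') (h : IsLinearTP T (2 * N) ξ ℓ' Γ C f χ)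
    (hN : 1 ≤ N) (ht : t < T)
    (hclose : (gridData N ξ χ' Γ' C').CloseAt (gridData (2 * N) ξ χ Γ C) N K t a)
    (hr : -1 ≤ r) (hrt : r < t) (hi : i ≤ 2 * N) (hq : q ∈ Ioc (0 : ℝ) 1) :
    |Γ' t r a b ((i : ℝ) / (2 * N : ℕ)) q - Γ t r a b ((i : ℝ) / (2 * N : ℕ)) q| ≤
      K / (2 * N : ℕ) := by
  obtain ⟨m, hm, hqm⟩ := exists_mem_cell (L := 2 * N) (by omega) hq
  rw [h'.Γ_div_two_mul_eq ht hr hrt.le hi hq,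
    ← h'.gridData_gamma_sweepLevel ht hr (by omega) (by omega) (cell_two_mul_subset N m hqm),
    ← h.gridData_gamma_sweepLevel ht hr hi hm hqm, ← sweepCell_two_mul a hm]
  exact hclose.gamma_sub_le r (Finset.mem_Ico.mpr ⟨hr, hrt⟩) b _ (sweepLevel_le a hi) _
    (sweepLevel_le a (by omega)) (nearLevel_sweepLevel a hi) _ (sweepCell_lt a hm)

lemma abs_C_sub_le (h' : IsLinearTP T N ξ ℓ' Γ' C' f' χ') (h : IsLinearTP T (2 * N) ξ ℓ' Γ C f χ)
    (ht : t < T) (hclose : (gridData N ξ χ' Γ' C').CloseAt (gridData (2 * N) ξ χ Γ C) N K t a)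
    (hr : -1 ≤ r) (hrt : r ≤ t) (hi : 1 ≤ i) (hi' : i ≤ 2 * N) :
    |C' t r a ((i : ℝ) / (2 * N : ℕ)) - C t r a ((i : ℝ) / (2 * N : ℕ))| ≤ K / (2 * N : ℕ) := by
  obtain ⟨m, rfl⟩ := Nat.exists_eq_add_of_le' hi
  have hend := div_mem_cell (L := 2 * N) (by omega) m
  rw [← h'.gridData_cov_sweepCell (by omega) (by omega) hr (by omega) (by omega)
      (cell_two_mul_subset N m hend),
    ← h.gridData_cov_sweepCell (by omega) (by omega) hr (by omega) hi' hend,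
    ← sweepCell_two_mul a hi']
  exact hclose.cov_sub_le r hr hrt _ (sweepCell_lt a hi')

end

end IsLinearTP

theorem stmt_13_general
    (T : ℕ) (ξ : ℕ → ℝ) (ℓ : ℕ → ℝ → ℝ) (ℓ' : ℕ → ℝ → ℝ)
    (_hderiv : ∀ (t : ℕ) (x : ℝ), HasDerivAt (ℓ t) (ℓ' t x) x)
    (hlip : ∀ t : ℕ, LocallyLipschitz (ℓ' t))
    (Γ : ℕ → ℕ → ℤ → Bool → Bool → ℝ → ℝ → ℝ)
    (C : ℕ → ℤ → ℤ → Bool → ℝ → ℝ)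
    (f χ : ℕ → ℕ → ℝ)
    (hTP : ∀ L : ℕ, 1 ≤ L → IsLinearTP T L ξ ℓ' (Γ L) (C L) (f L) (χ L)) :
    ∃ c : ℝ, 0 < c ∧ ∀ N : ℕ, 1 ≤ N →
      ∀ t < T, ∀ r : ℤ, -1 ≤ r → r < t → ∀ a b : Bool, ∀ q ∈ Ioc (0 : ℝ) 1, ∀ i ≤ 2 * N,
        |Γ N t r a b ((i : ℝ) / (2 * N : ℕ)) q - Γ (2 * N) t r a b ((i : ℝ) / (2 * N : ℕ)) q| ≤
            c / (2 * N : ℕ) ∧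
          (1 ≤ i →
            |C N t r a ((i : ℝ) / (2 * N : ℕ)) - C (2 * N) t r a ((i : ℝ) / (2 * N : ℕ))| ≤
              c / (2 * N : ℕ)) := by
  obtain ⟨K, hK, hclose⟩ := SweepData.exists_forall_closeAt T ξ hlip T
  refine ⟨K, by positivity, fun N hN t ht r hr hrt a b q hq i hi => ?_⟩
  have hcoarse := hTP N hN
  have hfine := hTP (2 * N) (by omega)
  have hclose := hclose hN (hcoarse.isSolution_gridData hN)
    (hfine.isSolution_gridData (by omega)) le_rfl t ht a
  exact ⟨hcoarse.abs_Γ_sub_le hfine hN ht hclose hr hrt hi hq,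
    fun hi₁ => hcoarse.abs_C_sub_le hfine ht hclose hr hrt.le hi₁ hi⟩

/-- Dyadic-depth doubling estimate: for `L = 2^k`, `k ≥ k₀ + 1`,
`|Γ^{L/2}(p,q) − Γ^L(p,q)| ≤ c/L` and `|C^{L/2}(p) − C^L(p)| ≤ c/L` at grid points
`p ∈ {0, 1/L, …, 1}`; in particular the dyadic sequences converge at geometric rate. -/
theorem stmt_13
    (T : ℕ) (hT : 1 ≤ T) (ξ : ℕ → ℝ) (ℓ : ℕ → ℝ → ℝ) (ℓ' : ℕ → ℝ → ℝ)
    (hderiv : ∀ (t : ℕ) (x : ℝ), HasDerivAt (ℓ t) (ℓ' t x) x)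
    (hlip : ∀ t : ℕ, LocallyLipschitz (ℓ' t))
    (Γ : ℕ → ℕ → ℤ → Bool → Bool → ℝ → ℝ → ℝ)
    (C : ℕ → ℤ → ℤ → Bool → ℝ → ℝ)
    (f χ : ℕ → ℕ → ℝ)
    (hTP : ∀ L : ℕ, 1 ≤ L → IsLinearTP T L ξ ℓ' (Γ L) (C L) (f L) (χ L)) :
    ∃ c : ℝ, 0 < c ∧ ∃ k₀ : ℕ, ∀ k : ℕ, k₀ + 1 ≤ k →
      ∀ t : ℕ, t < T → ∀ r : ℤ, -1 ≤ r → r < (t : ℤ) → ∀ a b : Bool,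
        ∀ q : ℝ, 0 < q → q ≤ 1 →
          ∀ i : ℕ, i ≤ 2 ^ k →
            |Γ (2 ^ (k - 1)) t r a b ((i : ℝ) / (2 : ℝ) ^ k) q -
                Γ (2 ^ k) t r a b ((i : ℝ) / (2 : ℝ) ^ k) q| ≤ c / (2 : ℝ) ^ k ∧
            (1 ≤ i →
              |C (2 ^ (k - 1)) (t : ℤ) r a ((i : ℝ) / (2 : ℝ) ^ k) -
                  C (2 ^ k) (t : ℤ) r a ((i : ℝ) / (2 : ℝ) ^ k)| ≤ c / (2 : ℝ) ^ k) := by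
  obtain ⟨c, hc, hbound⟩ := stmt_13_general T ξ ℓ ℓ' hderiv hlip Γ C f χ hTP
  refine ⟨c, hc, 0, fun k hk t ht r hr hrt a b q hq hq₁ i hi => ?_⟩
  obtain ⟨n, rfl⟩ := Nat.exists_eq_add_of_le' hk
  have hdouble : 2 * 2 ^ n = 2 ^ (n + 1) := (pow_succ' 2 n).symm
  simpa [hdouble] using hbound (2 ^ n) Nat.one_le_two_pow t ht r hr hrt a b q ⟨hq, hq₁⟩ i
    (by rwa [hdouble])
end

section
/- With Γ^L and C^L as defined in the context, there exist a constant c > 0 and an integer k₀ such that for every L = 2^k with k ≥ k₀, every admissible index pair (s, r) with r < s ≤ T−1, and every grid point p ∈ {2/L, 3/L, …, (L−1)/L}: |Γ^L_{s,r,0,1}(p − 1/L, p + 1/L) − Γ^L_{s,r,0,1}(p − 1/L, p)| ≤ c/L and |Γ^L_{s,r,1,0}(p, p) − Γ^L_{s,r,1,0}(p, p − 1/L)| ≤ c/L; i.e., near the diagonal, Γ^L varies by at most O(1/L) when its second (base-variable) argument q is shifted by one grid step, uniformly in L. -/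
open MeasureTheory Set Finset Filter Topology

/-!
In the direction of its sweep the recursion is an explicit Euler scheme for `Γ` coupled to a
Volterra equation for `C`, so an exponential majorant bounds the sweep uniformly in `L` in terms
of its initial value and of earlier times. Induction on time closes the loop: the forward bound
confines `f t` to a compact interval, on which the continuous `ℓ' t` bounds the initial value
`χ t` of the backward sweep.

For `r < t` an increment of `Γ t r` in `q` obeys the same linear recursion with no source, and
each of the `L` steps adds only `1 / L` times increments from earlier times. The diagonal
coefficients `Γ t t` are step functions: their increment under `q ↦ q + 1 / L` is at most `1`
and lives at a single grid depth. Summed over all depths the increments thus stay bounded, and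
for `r < t` each of them is `O(1 / L)`.
-/

theorem abs_sum_le_card_mul_s14 {ι α : Type*} [Ring α] [LinearOrder α] [IsOrderedRing α]
    (s : Finset ι) {F : ι → α} {D : α} (hF : ∀ i ∈ s, |F i| ≤ D) : |∑ i ∈ s, F i| ≤ #s * D := by
  simpa only [nsmul_eq_mul] using
    (abs_sum_le_sum_abs F s).trans (sum_le_card_nsmul s _ D hF)

theorem abs_mul_mul_le {α : Type*} [CommRing α] [LinearOrder α] [IsStrictOrderedRing α]
    {x y z X Y Z : α} (hx : |x| ≤ X) (hy : |y| ≤ Y) (hz : |z| ≤ Z) :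
    |x * y * z| ≤ X * Y * Z := by
  have hX := (abs_nonneg x).trans hx
  have hY := (abs_nonneg y).trans hy
  rw [abs_mul, abs_mul]
  gcongr

namespace IsLinearTP

/-! ### Sweep coordinates -/

/-- The distance travelled by sweep `a` when it reaches depth `x`: the forward sweep
(`a = false`) starts at depth `0`, the backward sweep (`a = true`) at depth `1`. Being an
involution, it also returns the depth reached after a given distance. -/
def orient (a : Bool) (x : ℝ) : ℝ := bif a then 1 - x else x

/-- The depth at which sweep `a` stands after `j` of its `L` steps. -/
noncomputable def node (L : ℕ) (a : Bool) (j : ℕ) : ℝ := orient a (j / L)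

/-- The depth `l / L` of the layer `l` that sweep `a` crosses in going from `node L a j` to
`node L a (j + 1)`; thus `l = j + 1` in the forward and `l = L - j` in the backward sweep. -/
noncomputable def layer (L : ℕ) (a : Bool) (j : ℕ) : ℝ :=
  bif a then 1 - j / L else (j + 1) / L

/-- The number of steps that sweep `a` completes before it crosses the layer `⌈L q⌉` whose
cell `((l - 1) / L, l / L]` contains `q`. -/
noncomputable def step (L : ℕ) (a : Bool) (q : ℝ) : ℤ :=
  bif a then L - ⌈(L : ℝ) * q⌉ else ⌈(L : ℝ) * q⌉ - 1

section Coordinates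

variable {L j : ℕ} {q : ℝ}

theorem continuous_orient (a : Bool) : Continuous (orient a) := by
  cases a
  · exact continuous_id
  · exact continuous_const.sub continuous_id

theorem orient_mem_Icc (a : Bool) {x : ℝ} (hx : x ∈ Set.Icc 0 1) : orient a x ∈ Set.Icc 0 1 := by
  cases a
  · exact hx
  · exact ⟨sub_nonneg.2 hx.2, sub_le_self _ hx.1⟩

theorem div_mem_Icc (hj : j ≤ L) : (j / L : ℝ) ∈ Set.Icc 0 1 :=
  ⟨by positivity, div_le_one_of_le₀ (by exact_mod_cast hj) L.cast_nonneg⟩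

theorem node_mem_Icc (a : Bool) (hj : j ≤ L) : node L a j ∈ Set.Icc 0 1 :=
  orient_mem_Icc a (div_mem_Icc hj)

theorem node_zero (a : Bool) : node L a 0 = bif a then 1 else 0 := by
  cases a <;> simp [node, orient]

theorem layer_mem_Ioc (a : Bool) (hj : j < L) : layer L a j ∈ Set.Ioc 0 1 := by
  have hL : (0 : ℝ) < L := by exact_mod_cast j.zero_le.trans_lt hj
  have hj' : (j + 1 : ℝ) ≤ L := by exact_mod_cast hj
  cases a <;> simp only [layer, cond_true, cond_false, Set.mem_Ioc]
  · exact ⟨by positivity, (div_le_one hL).2 hj'⟩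
  · exact ⟨sub_pos.2 ((div_lt_one hL).2 (by linarith)), sub_le_self _ (by positivity)⟩

theorem step_layer (hL : 0 < L) (a : Bool) : step L a (layer L a j) = j := by
  have hL' : (L : ℝ) ≠ 0 := by exact_mod_cast hL.ne'
  cases a <;>
    simp only [step, layer, cond_true, cond_false, mul_sub, mul_div_cancel₀ _ hL', mul_one]
  · simp
  · rw [show (L - j : ℝ) = ((L - j : ℤ) : ℝ) by push_cast; rfl, Int.ceil_intCast]
    ring

theorem exists_step_eq (hL : 0 < L) (a : Bool) (hq : q ∈ Set.Ioc 0 1) :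
    ∃ j < L, step L a q = j := by
  have hL' : (0 : ℝ) < L := by exact_mod_cast hL
  have hpos : 0 < ⌈(L : ℝ) * q⌉ := Int.ceil_pos.2 (mul_pos hL' hq.1)
  have hle : ⌈(L : ℝ) * q⌉ ≤ L := Int.ceil_le.2 (mul_le_of_le_one_right hL'.le hq.2)
  refine ⟨(step L a q).toNat, ?_⟩
  cases a <;> simp only [step, cond_true, cond_false] <;> omega

theorem orient_le_of_step_lt (hL : 0 < L) {a : Bool} (h : step L a q < j) :
    orient a q ≤ j / L := by
  have hL' : (0 : ℝ) < L := by exact_mod_cast hL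
  rw [le_div_iff₀' hL']
  cases a <;> simp only [step, orient, cond_true, cond_false] at h ⊢
  · exact_mod_cast Int.ceil_le.1 (show ⌈(L : ℝ) * q⌉ ≤ (j : ℤ) by omega)
  · have := Int.lt_ceil.1 (show (L - j : ℤ) < ⌈(L : ℝ) * q⌉ by omega)
    push_cast at this
    linarith

theorem le_orient_of_step_eq (hL : 0 < L) {a : Bool} (h : step L a q = j) :
    j / L ≤ orient a q := by
  have hL' : (0 : ℝ) < L := by exact_mod_cast hL
  rw [div_le_iff₀' hL']
  cases a <;> simp only [step, orient, cond_true, cond_false] at h ⊢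
  · exact_mod_cast (Int.lt_ceil.1 (show (j : ℤ) < ⌈(L : ℝ) * q⌉ by omega)).le
  · have := Int.ceil_le.1 (show ⌈(L : ℝ) * q⌉ ≤ (L - j : ℤ) by omega)
    push_cast at this
    linarith

theorem abs_step_add_one_div_sub_step (hL : 0 < L) (a : Bool) (q : ℝ) :
    |step L a (q + 1 / L) - step L a q| = 1 := by
  have hL' : (L : ℝ) ≠ 0 := by exact_mod_cast hL.ne'
  cases a <;>
    simp only [step, cond_true, cond_false, mul_add, mul_one_div_cancel hL', Int.ceil_add_one] <;>
    ring_nf <;> rfl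

theorem sum_node (hL : 0 < L) (a : Bool) (g : ℝ → ℝ) :
    ∑ j ∈ range (L + 1), g (node L a j) = ∑ j ∈ range (L + 1), g (j / L) := by
  cases a
  · rfl
  · rw [← sum_range_reflect]
    refine sum_congr rfl fun j hj => ?_
    have hj : j ≤ L := Nat.lt_succ_iff.1 (Finset.mem_range.1 hj)
    have hL' : (L : ℝ) ≠ 0 := by exact_mod_cast hL.ne'
    rw [node, orient, cond_true, Nat.add_sub_cancel, Nat.cast_sub hj, sub_div, div_self hL',
      sub_sub_cancel]

theorem setIntegral_Ioc_comp_orient (a : Bool) (F : ℝ → ℝ) :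
    ∫ q in Set.Ioc (0 : ℝ) 1, F (orient a q) = ∫ q in Set.Ioc (0 : ℝ) 1, F q := by
  cases a
  · rfl
  · simp only [← intervalIntegral.integral_of_le zero_le_one, orient, cond_true,
      intervalIntegral.integral_comp_sub_left, sub_self, sub_zero]

theorem integral_exp_mul_le {c x : ℝ} (hc : 0 < c) :
    ∫ q in (0 : ℝ)..x, Real.exp (c * q) ≤ Real.exp (c * x) / c := by
  rw [intervalIntegral.integral_comp_mul_left Real.exp hc.ne', integral_exp, smul_eq_mul,
    inv_mul_eq_div]
  gcongr
  exact sub_le_self _ (Real.exp_pos _).le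

theorem abs_setIntegral_Ioc_le {f : ℝ → ℝ} {P R c x : ℝ} (a : Bool) (hc : 0 < c) (hR : 0 ≤ R)
    (hx : x ∈ Set.Icc 0 1)
    (hf : ∀ q ∈ Set.Ioc (0 : ℝ) 1, |f q| ≤
      P + (Set.Iic x).indicator (fun y => R * Real.exp (c * y)) (orient a q)) :
    |∫ q in Set.Ioc (0 : ℝ) 1, f q| ≤ P + R * Real.exp (c * x) / c := by
  set F : ℝ → ℝ := (Set.Iic x).indicator fun y => R * Real.exp (c * y) with hF
  have hF_int : IntegrableOn (fun q => F (orient a q)) (Set.Ioc 0 1) := by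
    have hcont : Continuous fun q => R * Real.exp (c * orient a q) := by
      have := continuous_orient a
      fun_prop
    exact (hcont.integrableOn_Ioc (a := 0) (b := 1)).indicator
      (measurableSet_le (continuous_orient a).measurable measurable_const)
  have hP_int : IntegrableOn (fun _ => P) (Set.Ioc (0 : ℝ) 1) := by simp
  calc |∫ q in Set.Ioc (0 : ℝ) 1, f q|
      ≤ ∫ q in Set.Ioc (0 : ℝ) 1, P + F (orient a q) :=
        norm_integral_le_of_norm_le (f := f) (hP_int.add hF_int)
          ((ae_restrict_mem measurableSet_Ioc).mono hf)
    _ = P + ∫ q in Set.Ioc (0 : ℝ) 1, F q := by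
        rw [integral_add hP_int hF_int, setIntegral_Ioc_comp_orient]
        simp
    _ = P + R * ∫ q in (0 : ℝ)..x, Real.exp (c * q) := by
        rw [hF, setIntegral_indicator measurableSet_Iic, Set.Ioc_inter_Iic, inf_eq_right.2 hx.2,
          ← intervalIntegral.integral_of_le hx.1, intervalIntegral.integral_const_mul]
    _ ≤ P + R * Real.exp (c * x) / c := by
        rw [mul_div_assoc]
        gcongr
        exact integral_exp_mul_le hc

end Coordinates

/-! ### Grönwall constants -/

section Constants

variable {T L j : ℕ} {M X : ℝ}

/-- The ratio by which the covariances `C t s a` of a sweep may exceed the coefficients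
`Γ t r a b` of the same sweep, when everything produced at earlier times is at most `M`. -/
noncomputable def covGain (T : ℕ) (M : ℝ) : ℝ := 4 * (T + 1) ^ 2 * M ^ 2

/-- The exponential rate at which the coefficients of a sweep may grow, when everything produced
at earlier times is at most `M`. It is large enough both for the explicit Euler step of `Γ` and
to absorb half of the Volterra equation satisfied by `C`. -/
noncomputable def growthRate (T : ℕ) (M : ℝ) : ℝ :=
  4 * (T + 1) ^ 2 * M + T * M * (1 + covGain T M)

/-- The Grönwall majorant, after distance `y`, of a sweep with initial value at most `X`. -/
noncomputable def envelope (T : ℕ) (M X y : ℝ) : ℝ := X * Real.exp (growthRate T M * y)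

/-- The majorant for the integrands that define `C t s a` at step `j` of sweep `a`: a constant,
plus a term seen only by the part `orient a q ≤ j / L` of the network already crossed. -/
noncomputable def integrandBound (T L j : ℕ) (M X : ℝ) (a : Bool) (q : ℝ) : ℝ :=
  M ^ 2 * envelope T M X (j / L) + (Set.Iic (j / L : ℝ)).indicator
    (fun y => M * (covGain T M * envelope T M X y)) (orient a q)

/-- The bound for the coefficients `Γ t r a b` with `r ≤ t` and the covariances `C t s a` with
`s < t` of a sweep with initial value at most `X`, when everything produced at earlier times is
at most `M`. -/
noncomputable def offDiagBound (T : ℕ) (M X : ℝ) : ℝ :=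
  max M (max (envelope T M X 1) (covGain T M * envelope T M X 1))

/-- The bound for all that a sweep with initial value at most `X` produces, the covariance
`C t t a` included, when everything produced at earlier times is at most `M`. -/
noncomputable def sweepBound (T : ℕ) (M X : ℝ) : ℝ :=
  max (offDiagBound T M X) (covGain T (offDiagBound T M X)
    * envelope T (offDiagBound T M X) (offDiagBound T M X) 1)

theorem covGain_nonneg : 0 ≤ covGain T M := by
  unfold covGain
  positivity

theorem growthRate_pos (hM : 0 < M) : 0 < growthRate T M := by
  have := covGain_nonneg (T := T) (M := M)
  unfold growthRate
  positivity

theorem envelope_nonneg (hX : 0 ≤ X) (y : ℝ) : 0 ≤ envelope T M X y := by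
  unfold envelope
  positivity

theorem envelope_mono (hM : 0 < M) (hX : 0 ≤ X) : Monotone (envelope T M X) := fun y z hyz => by
  have := (growthRate_pos (T := T) hM).le
  unfold envelope
  gcongr

theorem envelope_zero : envelope T M X 0 = X := by simp [envelope]

theorem envelope_add_step_le (hM : 0 < M) (hX : 0 ≤ X) :
    envelope T M X (j / L) + 1 / L * (T * (M * (envelope T M X (j / L)
      + covGain T M * envelope T M X (j / L)))) ≤ envelope T M X ((j + 1 : ℕ) / L) := by
  have hrate : T * M * (1 + covGain T M) ≤ growthRate T M :=
    le_add_of_nonneg_left (by positivity)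
  calc _ = envelope T M X (j / L) * (T * M * (1 + covGain T M) / L + 1) := by ring
    _ ≤ envelope T M X (j / L) * (growthRate T M / L + 1) := by
        have := envelope_nonneg (T := T) (M := M) hX (j / L)
        gcongr
    _ ≤ envelope T M X (j / L) * Real.exp (growthRate T M / L) :=
        mul_le_mul_of_nonneg_left (Real.add_one_le_exp _) (envelope_nonneg hX _)
    _ = envelope T M X ((j + 1 : ℕ) / L) := by
        rw [envelope, envelope, mul_assoc, ← Real.exp_add]
        push_cast
        ring_nf

theorem integrandBound_of_le {v q : ℝ} {a : Bool} (hM : 0 ≤ M) (hX : 0 ≤ X)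
    (hv : v ≤ M ^ 2 * envelope T M X (j / L)) : v ≤ integrandBound T L j M X a q := by
  refine hv.trans (le_add_of_nonneg_right (Set.indicator_nonneg (fun y _ => ?_) _))
  have := covGain_nonneg (T := T) (M := M)
  have := envelope_nonneg (T := T) (M := M) hX y
  positivity

theorem integrandBound_of_step_lt {v q : ℝ} {a : Bool} {i : ℕ} (hL : 0 < L) (hM : 0 < M)
    (hX : 0 ≤ X) (hi : step L a q = i) (hij : i < j)
    (hv : v ≤ M * (covGain T M * envelope T M X (i / L))) :
    v ≤ integrandBound T L j M X a q := by
  have hlt : step L a q < j := by omega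
  have := covGain_nonneg (T := T) (M := M)
  have := envelope_nonneg (T := T) (M := M) hX (j / L)
  rw [integrandBound, Set.indicator_of_mem (Set.mem_Iic.2 (orient_le_of_step_lt hL hlt))]
  refine hv.trans (le_add_of_nonneg_of_le (by positivity) ?_)
  gcongr
  exact envelope_mono hM hX (le_orient_of_step_eq hL hi)

theorem abs_setIntegral_le_of_integrandBound {g : ℝ → ℝ} {a : Bool} (hM : 0 < M) (hX : 0 ≤ X)
    (hj : j ≤ L) (hg : ∀ q ∈ Set.Ioc (0 : ℝ) 1, |g q| ≤ integrandBound T L j M X a q) :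
    2 * (T + 1) ^ 2 * |∫ q in Set.Ioc (0 : ℝ) 1, g q|
      ≤ covGain T M * envelope T M X (j / L) := by
  set A := covGain T M with hA
  set c := growthRate T M with hc
  set Y := envelope T M X (j / L) with hY
  have hA0 : 0 ≤ A := covGain_nonneg
  have hc0 : 0 < c := growthRate_pos hM
  have hY0 : 0 ≤ Y := envelope_nonneg hX _
  have hint : |∫ q in Set.Ioc (0 : ℝ) 1, g q| ≤ M ^ 2 * Y + M * A * Y / c := by
    have := abs_setIntegral_Ioc_le (f := g) (P := M ^ 2 * Y) (R := M * A * X) a hc0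
      (by positivity) (div_mem_Icc hj) fun q hq =>
        (hg q hq).trans_eq (by simp only [integrandBound, envelope, hY, hA, hc, mul_assoc])
    rwa [mul_assoc _ X] at this
  have hrate : 4 * (T + 1) ^ 2 * M ≤ c :=
    le_add_of_nonneg_right (by positivity)
  have hVolterra : 4 * (T + 1) ^ 2 * M * (A * Y) / c ≤ A * Y := by
    rw [div_le_iff₀' hc0]
    gcongr
  calc 2 * (T + 1) ^ 2 * |∫ q in Set.Ioc (0 : ℝ) 1, g q|
      ≤ 2 * (T + 1) ^ 2 * (M ^ 2 * Y + M * A * Y / c) := by gcongr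
    _ = (4 * (T + 1) ^ 2 * M ^ 2 * Y + 4 * (T + 1) ^ 2 * M * (A * Y) / c) / 2 := by ring
    _ ≤ (A * Y + A * Y) / 2 := by
        gcongr
        exact hA.ge
    _ = A * Y := add_self_div_two _

end Constants

/-! ### The common recursion of both sweeps -/

section Recursion

variable {T L : ℕ} {ξ : ℕ → ℝ} {ℓ' : ℕ → ℝ → ℝ} {Γ : ℕ → ℤ → Bool → Bool → ℝ → ℝ → ℝ}
  {C : ℤ → ℤ → Bool → ℝ → ℝ} {f χ : ℕ → ℝ} (h : IsLinearTP T L ξ ℓ' Γ C f χ) {t j : ℕ} {r : ℤ}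
  {a b : Bool} {q : ℝ}

include h

theorem Γ_node_zero (ht : t < T) (hr : -1 ≤ r) (hrt : r ≤ t) (hq : q ∈ Set.Ioc 0 1) :
    Γ t r a b (node L a 0) q = if r = -1 ∧ b = a then bif a then χ t else ξ t else 0 := by
  rw [node_zero]
  cases a
  · exact h.fwd_init t ht r hr hrt b q hq.1 hq.2
  · exact h.bwd_init t ht r hr hrt b q hq.1 hq.2

theorem Γ_node_succ (ht : t < T) (hr : -1 ≤ r) (hrt : r ≤ t) (hj : j < L)
    (hq : q ∈ Set.Ioc 0 1) :
    Γ t r a b (node L a (j + 1)) q =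
      Γ t r a b (node L a j) q + (if (t : ℤ) = r ∧ b = a ∧ step L a q = j then 1 else 0)
        + 1 / L * ∑ s ∈ range t, Γ s r (!a) b (node L a (j + 1)) q *
            (Γ t s a (!a) (node L a j) (layer L a j) - C t s a (layer L a j)) := by
  have hL : (0 : ℝ) < L := by exact_mod_cast j.zero_le.trans_lt hj
  cases a
  · have hrec := h.fwd_step t ht (j + 1) (by omega) hj r hr hrt b (node L false (j + 1)) q
      (by simp [node, orient, div_lt_div_iff_of_pos_right hL]) (by simp [node, orient]) hq.1 hq.2
    have hceil : (j + 1 : ℤ) = ⌈(L : ℝ) * q⌉ ↔ step L false q = j := by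
      simp only [step, cond_false]
      omega
    simpa only [node, layer, orient, cond_false, Bool.not_false, Nat.cast_add_one, hceil,
      add_sub_cancel_right] using hrec
  · have hdiv : ((L - j : ℕ) : ℝ) / L = 1 - j / L := by
      rw [Nat.cast_sub hj.le, sub_div, div_self hL.ne']
    have hdiv' : (((L - j : ℕ) : ℝ) - 1) / L = 1 - (j + 1 : ℕ) / L := by
      rw [sub_div, hdiv]
      push_cast
      ring
    have hrec := h.bwd_step t ht (L - j) (by omega) (by omega) r hr hrt b (node L true (j + 1)) q
      (by rw [node, orient, cond_true, ← hdiv']; gcongr; norm_num)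
      (by rw [node, orient, cond_true, hdiv']) (node_mem_Icc true hj).1 hq.1 hq.2
    have hceil : ((L - j : ℕ) : ℤ) = ⌈(L : ℝ) * q⌉ ↔ step L true q = j := by
      simp only [step, cond_true]
      omega
    simpa only [hceil, hdiv, hdiv', node, layer, orient, cond_true, Bool.not_true] using hrec

theorem Γ_node_succ_sub (ht : t < T) (hr : -1 ≤ r) (hrt : r < t) (hj : j < L)
    (hq : q ∈ Set.Ioc 0 1) {q' : ℝ} (hq' : q' ∈ Set.Ioc 0 1) :
    Γ t r a b (node L a (j + 1)) q' - Γ t r a b (node L a (j + 1)) q =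
      Γ t r a b (node L a j) q' - Γ t r a b (node L a j) q
        + 1 / L * ∑ s ∈ range t,
            (Γ s r (!a) b (node L a (j + 1)) q' - Γ s r (!a) b (node L a (j + 1)) q) *
              (Γ t s a (!a) (node L a j) (layer L a j) - C t s a (layer L a j)) := by
  have hdiag (q₀ : ℝ) : ¬((t : ℤ) = r ∧ b = a ∧ step L a q₀ = j) := fun hd => hrt.ne' hd.1
  rw [h.Γ_node_succ ht hr hrt.le hj hq, h.Γ_node_succ ht hr hrt.le hj hq', if_neg (hdiag q),
    if_neg (hdiag q')]
  simp only [sub_mul, sum_sub_distrib]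
  ring

theorem C_eq_sum (ht : t < T) {s : ℕ} (hs : s ≤ t) {p : ℝ} (hp : p ∈ Set.Ioc 0 1)
    (hL : 0 < L) (hj : step L a p = j) :
    C t s a p = ∑ t' ∈ Finset.Icc (-1 : ℤ) t, ∑ s' ∈ Finset.Icc (-1 : ℤ) s, ∑ b : Bool,
      ∫ q in Set.Ioc (0 : ℝ) 1,
        Γ t t' a b (node L a j) q * C t' s' b q * Γ s s' a b (node L a j) q := by
  have hL' : (0 : ℝ) < L := by exact_mod_cast hL
  obtain ⟨i, hi, hstep⟩ := exists_step_eq hL false hp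
  have hceil : ⌈(L : ℝ) * p⌉ = i + 1 := by
    simp only [step, cond_false] at hstep
    omega
  have hlo : ((i + 1 : ℕ) - 1 : ℝ) / L < p := by
    rw [div_lt_iff₀' hL', Nat.cast_add_one, add_sub_cancel_right]
    exact_mod_cast Int.lt_ceil.1 (show ((i : ℕ) : ℤ) < ⌈(L : ℝ) * p⌉ by omega)
  have hhi : p ≤ (i + 1 : ℕ) / L := by
    rw [le_div_iff₀' hL']
    exact_mod_cast Int.ceil_le.1 hceil.le
  cases a <;> simp only [step, cond_true, cond_false] at hj
  · obtain rfl : i = j := by omega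
    simpa [node, orient] using h.fwd_C t ht s hs (i + 1) (by omega) hi p hlo hhi
  · have hdiv : ((i + 1 : ℕ) : ℝ) / L = node L true j := by
      rw [show i + 1 = L - j by omega, node, orient, cond_true, Nat.cast_sub (by omega), sub_div,
        div_self hL'.ne']
    simpa only [hdiv] using h.bwd_C t ht s hs (i + 1) (by omega) hi p hlo hhi

theorem exists_eq_node (hL : 0 < L) (a : Bool) {x : ℝ} (hx : x ∈ Set.Icc 0 1) :
    ∃ j ≤ L, ∀ t < T, ∀ r : ℤ, -1 ≤ r → ∀ a' b, ∀ q ∈ Set.Ioc (0 : ℝ) 1,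
      Γ t r a' b x q = Γ t r a' b (node L a j) q := by
  have hL' : (0 : ℝ) < L := by exact_mod_cast hL
  obtain ⟨i, hi, hconst⟩ : ∃ i ≤ L, ∀ t < T, ∀ r : ℤ, -1 ≤ r → ∀ a' b, ∀ q ∈ Set.Ioc (0 : ℝ) 1,
      Γ t r a' b x q = Γ t r a' b (i / L) q := by
    obtain rfl | hx0 := hx.1.eq_or_lt
    · exact ⟨0, L.zero_le, by simp⟩
    · refine ⟨⌈(L : ℝ) * x⌉₊, Nat.ceil_le.2 (mul_le_of_le_one_right hL'.le hx.2),
        fun t ht r hr a' b q hq => ?_⟩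
      have hpos : 0 < (L : ℝ) * x := mul_pos hL' hx0
      obtain hrt | hrt := le_or_gt r t
      · refine h.Γ_const t ht r hr hrt a' b _ (Nat.ceil_pos.2 hpos)
          (Nat.ceil_le.2 (mul_le_of_le_one_right hL'.le hx.2)) x q ?_ ?_ hq.1 hq.2
        · rw [div_lt_iff₀' hL', sub_lt_iff_lt_add]
          exact Nat.ceil_lt_add_one hpos.le
        · rw [le_div_iff₀' hL']
          exact Nat.le_ceil _
      · rw [h.Γ_vanish t r hrt, h.Γ_vanish t r hrt]
  cases a
  · exact ⟨i, hi, hconst⟩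
  · refine ⟨L - i, L.sub_le i, ?_⟩
    rwa [node, orient, cond_true, Nat.cast_sub hi, sub_div, div_self hL'.ne', sub_sub_cancel]

theorem Γ_diag (hL : 0 < L) (ht : t < T) (hq : q ∈ Set.Ioc 0 1) (hj : j ≤ L) :
    Γ t t a b (node L a j) q = if b = a ∧ step L a q < j then 1 else 0 := by
  induction j with
  | zero =>
    obtain ⟨i, -, hi⟩ := exists_step_eq hL a hq
    rw [h.Γ_node_zero ht (by omega) le_rfl hq, if_neg (by omega), if_neg (by omega)]
  | succ j ih =>
    have hsum : ∑ s ∈ range t, Γ s t (!a) b (node L a (j + 1)) q *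
        (Γ t s a (!a) (node L a j) (layer L a j) - C t s a (layer L a j)) = 0 :=
      sum_eq_zero fun s hs => by
        rw [h.Γ_vanish s t (by exact_mod_cast Finset.mem_range.1 hs), zero_mul]
    rw [h.Γ_node_succ ht (by omega) le_rfl hj hq, ih (by omega), hsum, mul_zero, add_zero]
    by_cases hb : b = a
    · obtain hlt | heq | hgt := lt_trichotomy (step L a q) j
      · simp [hb, hlt, hlt.ne, hlt.trans (lt_add_one _)]
      · simp [hb, heq]
      · simp [hb, hgt.not_gt, hgt.ne', hgt]
    · simp [hb]

theorem abs_Γ_diag_le (hL : 0 < L) (ht : t < T) (hq : q ∈ Set.Ioc 0 1) (hj : j ≤ L) :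
    |Γ t t a b (node L a j) q| ≤ 1 := by
  rw [h.Γ_diag hL ht hq hj]
  split_ifs <;> simp

end Recursion

/-! ### Uniform bounds -/

/-- Everything that sweep `a` produces at time `t` is bounded by `M`. -/
structure IsSweepBound (L t : ℕ) (a : Bool) (M : ℝ) (Γ : ℕ → ℤ → Bool → Bool → ℝ → ℝ → ℝ)
    (C : ℤ → ℤ → Bool → ℝ → ℝ) : Prop where
  abs_Γ_le : ∀ r : ℤ, -1 ≤ r → ∀ b, ∀ x ∈ Set.Icc (0 : ℝ) 1, ∀ q ∈ Set.Ioc (0 : ℝ) 1,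
    |Γ t r a b x q| ≤ M
  abs_C_le : ∀ s : ℕ, s ≤ t → ∀ p ∈ Set.Ioc (0 : ℝ) 1, |C t s a p| ≤ M

theorem IsSweepBound.mono {L t : ℕ} {a : Bool} {M M' : ℝ}
    {Γ : ℕ → ℤ → Bool → Bool → ℝ → ℝ → ℝ} {C : ℤ → ℤ → Bool → ℝ → ℝ}
    (hB : IsSweepBound L t a M Γ C) (hM : M ≤ M') : IsSweepBound L t a M' Γ C :=
  ⟨fun r hr b x hx q hq => (hB.abs_Γ_le r hr b x hx q hq).trans hM,
    fun s hs p hp => (hB.abs_C_le s hs p hp).trans hM⟩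

section Bounds

variable {T L : ℕ} {ξ : ℕ → ℝ} {ℓ' : ℕ → ℝ → ℝ} {Γ : ℕ → ℤ → Bool → Bool → ℝ → ℝ → ℝ}
  {C : ℤ → ℤ → Bool → ℝ → ℝ} {f χ : ℕ → ℝ} (h : IsLinearTP T L ξ ℓ' Γ C f χ) {t j : ℕ}
  {a : Bool} {M X : ℝ}

include h

theorem abs_C_le_of_nat {t s : ℤ} (ht : -1 ≤ t) (hs : -1 ≤ s) (b : Bool) {p : ℝ} (hM : 1 ≤ M)
    (hC : ∀ m n : ℕ, (m = t ∧ n = s) ∨ (m = s ∧ n = t) → n ≤ m → |C m n b p| ≤ M) :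
    |C t s b p| ≤ M := by
  obtain rfl | ht := ht.eq_or_lt <;> obtain rfl | hs := hs.eq_or_lt
  · simpa [h.C_base] using hM
  · rw [h.C_symm, h.C_mixed s (by omega), abs_zero]
    exact zero_le_one.trans hM
  · rw [h.C_mixed t (by omega), abs_zero]
    exact zero_le_one.trans hM
  · lift t to ℕ using by omega
    lift s to ℕ using by omega
    obtain hst | hst := le_total s t
    · exact hC t s (.inl ⟨rfl, rfl⟩) hst
    · rw [h.C_symm]
      exact hC s t (.inr ⟨rfl, rfl⟩) hst

theorem abs_C_le_of_integrand (hL : 0 < L) (ht : t < T) {s : ℕ} (hs : s ≤ t) (hM : 0 < M)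
    (hX : 0 ≤ X) {p : ℝ} (hp : p ∈ Set.Ioc 0 1) (hj : step L a p = j)
    (hint : ∀ t' ∈ Finset.Icc (-1 : ℤ) t, ∀ s' ∈ Finset.Icc (-1 : ℤ) s, ∀ b,
      ∀ q ∈ Set.Ioc (0 : ℝ) 1,
        |Γ t t' a b (node L a j) q * C t' s' b q * Γ s s' a b (node L a j) q|
          ≤ integrandBound T L j M X a q) :
    |C t s a p| ≤ covGain T M * envelope T M X (j / L) := by
  obtain ⟨i, hi, hip⟩ := exists_step_eq hL a hp
  have hjL : j ≤ L := by omega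
  set D : ℝ := covGain T M * envelope T M X (j / L) / (2 * (T + 1) ^ 2) with hD
  have hD0 : 0 ≤ D :=
    div_nonneg (mul_nonneg covGain_nonneg (envelope_nonneg hX _)) (by positivity)
  have hterm : ∀ t' ∈ Finset.Icc (-1 : ℤ) t, ∀ s' ∈ Finset.Icc (-1 : ℤ) s, ∀ b,
      |∫ q in Set.Ioc (0 : ℝ) 1,
        Γ t t' a b (node L a j) q * C t' s' b q * Γ s s' a b (node L a j) q| ≤ D :=
    fun t' ht' s' hs' b => (le_div_iff₀' (by positivity)).2
      (abs_setIntegral_le_of_integrandBound hM hX hjL (hint t' ht' s' hs' b))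
  have hcard : ∀ n ≤ t, (#(Finset.Icc (-1 : ℤ) n) : ℝ) ≤ T + 1 := fun n hn => by
    rw [Int.card_Icc]
    exact_mod_cast (by omega : ((n : ℤ) + 1 - -1).toNat ≤ T + 1)
  rw [h.C_eq_sum ht hs hp hL hj]
  calc _ ≤ #(Finset.Icc (-1 : ℤ) t) * (#(Finset.Icc (-1 : ℤ) s) *
          (#(Finset.univ : Finset Bool) * D)) :=
        abs_sum_le_card_mul_s14 _ fun t' ht' => abs_sum_le_card_mul_s14 _ fun s' hs' =>
          abs_sum_le_card_mul_s14 _ fun b _ => hterm t' ht' s' hs' b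
    _ ≤ (T + 1) * ((T + 1) * (2 * D)) := by
        gcongr
        · exact hcard t le_rfl
        · exact hcard s hs
        · simp
    _ = covGain T M * envelope T M X (j / L) := by
        rw [hD]
        field_simp

section PriorBounds

variable (hM : 1 ≤ M) (hB : ∀ s < t, ∀ a, IsSweepBound L s a M Γ C)

include hM hB

theorem abs_C_lt_le {t' s' : ℤ} (ht' : -1 ≤ t') (htt' : t' < t) (hs' : -1 ≤ s') (hst' : s' < t)
    (b : Bool) {p : ℝ} (hp : p ∈ Set.Ioc 0 1) : |C t' s' b p| ≤ M :=
  h.abs_C_le_of_nat ht' hs' b hM fun m n hmn hnm =>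
    (hB m (by omega) b).abs_C_le n hnm p hp

variable (hL : 0 < L) (ht : t < T)

include hL ht

theorem abs_C_le_of_step_eq (hX : 0 ≤ X) (hj : j ≤ L)
    (hΓ : ∀ r : ℤ, -1 ≤ r → r < t → ∀ b, ∀ q ∈ Set.Ioc (0 : ℝ) 1,
      |Γ t r a b (node L a j) q| ≤ envelope T M X (j / L))
    (hC : ∀ i < j, ∀ s < t, ∀ p ∈ Set.Ioc (0 : ℝ) 1, step L a p = i →
      |C t s a p| ≤ covGain T M * envelope T M X (i / L)) :
    ∀ s < t, ∀ p ∈ Set.Ioc (0 : ℝ) 1, step L a p = j →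
      |C t s a p| ≤ covGain T M * envelope T M X (j / L) := by
  have hM0 : 0 < M := one_pos.trans_le hM
  have hY := fun i : ℕ => envelope_nonneg (T := T) (M := M) hX (i / L)
  have hA := covGain_nonneg (T := T) (M := M)
  intro s hs p hp hpj
  refine h.abs_C_le_of_integrand hL ht hs.le hM0 hX hp hpj fun t' ht' s' hs' b q hq => ?_
  obtain ⟨ht', htt'⟩ := Finset.mem_Icc.1 ht'
  obtain ⟨hs', hss'⟩ := Finset.mem_Icc.1 hs'
  have hΓs : |Γ s s' a b (node L a j) q| ≤ M :=
    (hB s hs a).abs_Γ_le s' hs' b _ (node_mem_Icc a hj) q hq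
  obtain htt' | rfl := htt'.lt_or_eq
  · refine integrandBound_of_le hM0.le hX ?_
    refine (abs_mul_mul_le (hΓ t' ht' htt' b q hq)
      (h.abs_C_lt_le hM hB ht' htt' hs' (by omega) b hq) hΓs).trans_eq (by ring)
  · by_cases hactive : b = a ∧ step L a q < j
    · obtain ⟨i, -, hi⟩ := exists_step_eq hL a hq
      refine integrandBound_of_step_lt hL hM0 hX hi (by omega) ?_
      have hCs : |C t s' b q| ≤ covGain T M * envelope T M X (i / L) := by
        obtain rfl | hs' := hs'.eq_or_lt
        · rw [h.C_mixed t (by omega), abs_zero]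
          exact mul_nonneg hA (hY i)
        · lift s' to ℕ using by omega
          rw [hactive.1]
          exact hC i (by omega) s' (by omega) q hq hi
      exact (abs_mul_mul_le (h.abs_Γ_diag_le hL ht hq hj) hCs hΓs).trans_eq (by ring)
    · rw [h.Γ_diag hL ht hq hj, if_neg hactive, zero_mul, zero_mul, abs_zero]
      exact integrandBound_of_le hM0.le hX (mul_nonneg (sq_nonneg M) (hY j))

theorem abs_Γ_node_succ_le (hX : 0 ≤ X) (hj : j < L)
    (hΓ : ∀ r : ℤ, -1 ≤ r → r < t → ∀ b, ∀ q ∈ Set.Ioc (0 : ℝ) 1,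
      |Γ t r a b (node L a j) q| ≤ envelope T M X (j / L))
    (hC : ∀ s < t, ∀ p ∈ Set.Ioc (0 : ℝ) 1, step L a p = j →
      |C t s a p| ≤ covGain T M * envelope T M X (j / L))
    {r : ℤ} (hr : -1 ≤ r) (hrt : r < t) (b : Bool) {q : ℝ} (hq : q ∈ Set.Ioc 0 1) :
    |Γ t r a b (node L a (j + 1)) q| ≤ envelope T M X ((j + 1 : ℕ) / L) := by
  have hM0 : 0 < M := one_pos.trans_le hM
  set Y := envelope T M X (j / L)
  have hY0 : 0 ≤ Y := envelope_nonneg hX _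
  have hA := covGain_nonneg (T := T) (M := M)
  rw [h.Γ_node_succ ht hr hrt.le hj hq, if_neg fun hdiag => hrt.ne' hdiag.1, add_zero]
  set S : ℝ := ∑ s ∈ range t, Γ s r (!a) b (node L a (j + 1)) q *
    (Γ t s a (!a) (node L a j) (layer L a j) - C t s a (layer L a j))
  have hS : |S| ≤ T * (M * (Y + covGain T M * Y)) := by
    refine (abs_sum_le_card_mul_s14 _ (D := M * (Y + covGain T M * Y)) fun s hs => ?_).trans ?_
    · have hs := Finset.mem_range.1 hs
      have hp := layer_mem_Ioc a hj
      rw [abs_mul]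
      gcongr
      · exact (hB s hs _).abs_Γ_le r hr b _ (node_mem_Icc a hj) q hq
      · exact (abs_sub _ _).trans (add_le_add (hΓ s (by omega) (by omega) _ _ hp)
          (hC s hs _ hp (step_layer hL a)))
    · rw [card_range]
      gcongr
  calc |Γ t r a b (node L a j) q + 1 / L * S|
      ≤ |Γ t r a b (node L a j) q| + 1 / L * |S| := by
        refine (abs_add_le _ _).trans_eq ?_
        rw [abs_mul, abs_of_nonneg (show (0 : ℝ) ≤ 1 / L by positivity)]
    _ ≤ Y + 1 / L * (T * (M * (Y + covGain T M * Y))) := by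
        gcongr
        exact hΓ r hr hrt b q hq
    _ ≤ envelope T M X ((j + 1 : ℕ) / L) := envelope_add_step_le hM0 hX

theorem abs_Γ_le_envelope_and_abs_C_le (hinit : |bif a then χ t else ξ t| ≤ X) (hj : j ≤ L) :
    (∀ r : ℤ, -1 ≤ r → r < t → ∀ b, ∀ q ∈ Set.Ioc (0 : ℝ) 1,
      |Γ t r a b (node L a j) q| ≤ envelope T M X (j / L)) ∧
    ∀ i < j, ∀ s < t, ∀ p ∈ Set.Ioc (0 : ℝ) 1, step L a p = i →
      |C t s a p| ≤ covGain T M * envelope T M X (i / L) := by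
  have hX : 0 ≤ X := (abs_nonneg _).trans hinit
  induction j with
  | zero =>
    refine ⟨fun r hr hrt b q hq => ?_, fun i hi => absurd hi i.not_lt_zero⟩
    rw [h.Γ_node_zero ht hr hrt.le hq, Nat.cast_zero, zero_div, envelope_zero]
    split_ifs
    · exact hinit
    · rwa [abs_zero]
  | succ j ih =>
    obtain ⟨hΓ, hC⟩ := ih (by omega)
    have hCj := h.abs_C_le_of_step_eq hM hB hL ht hX (by omega) hΓ hC
    refine ⟨fun r hr hrt b q hq => h.abs_Γ_node_succ_le hM hB hL ht hX hj hΓ hCj hr hrt b hq,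
      fun i hi => ?_⟩
    obtain hi | rfl := (Nat.lt_succ_iff.1 hi).lt_or_eq
    · exact hC i hi
    · exact hCj

theorem abs_integrand_le_of_not_diag (hj : j ≤ L)
    (hΓ : ∀ r : ℤ, -1 ≤ r → r ≤ t → ∀ b, ∀ q ∈ Set.Ioc (0 : ℝ) 1,
      |Γ t r a b (node L a j) q| ≤ M)
    (hC : ∀ s < t, ∀ p ∈ Set.Ioc (0 : ℝ) 1, |C t s a p| ≤ M)
    {t' s' : ℤ} (ht' : -1 ≤ t') (htt' : t' ≤ t) (hs' : -1 ≤ s') (hst' : s' ≤ t)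
    (hdiag : ¬(t' = t ∧ s' = t)) {b : Bool} {q : ℝ} (hq : q ∈ Set.Ioc 0 1) :
    |Γ t t' a b (node L a j) q * C t' s' b q * Γ t s' a b (node L a j) q| ≤ M * M * M := by
  have : 0 < M := one_pos.trans_le hM
  have of_C_le (hC_le : |C t' s' b q| ≤ M) :=
    abs_mul_mul_le (hΓ t' ht' htt' b q hq) hC_le (hΓ s' hs' hst' b q hq)
  obtain hlt | heq : (t' < t ∧ s' < t) ∨ (t' = t ∨ s' = t) := by omega
  · exact of_C_le (h.abs_C_lt_le hM hB ht' hlt.1 hs' hlt.2 b hq)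
  by_cases hb : b = a
  · refine of_C_le (h.abs_C_le_of_nat ht' hs' b hM fun m n hmn hnm => ?_)
    obtain rfl : m = t := by omega
    exact hb ▸ hC n (by omega) q hq
  · have hzero := h.Γ_diag (a := a) (b := b) hL ht hq hj
    rw [if_neg fun hba => hb hba.1] at hzero
    obtain rfl | rfl := heq <;> simp only [hzero, zero_mul, mul_zero, abs_zero] <;> positivity

theorem abs_C_diag_le
    (hΓ : ∀ r : ℤ, -1 ≤ r → r ≤ t → ∀ b, ∀ j ≤ L, ∀ q ∈ Set.Ioc (0 : ℝ) 1,
      |Γ t r a b (node L a j) q| ≤ M)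
    (hC : ∀ s < t, ∀ p ∈ Set.Ioc (0 : ℝ) 1, |C t s a p| ≤ M)
    {p : ℝ} (hp : p ∈ Set.Ioc 0 1) (hpj : step L a p = j) :
    |C t t a p| ≤ covGain T M * envelope T M M (j / L) := by
  have hM0 : 0 < M := one_pos.trans_le hM
  induction j using Nat.strong_induction_on generalizing p with | _ j ih =>
  obtain ⟨i, hi, hpi⟩ := exists_step_eq hL a hp
  have hj : j ≤ L := by omega
  refine h.abs_C_le_of_integrand hL ht le_rfl hM0 hM0.le hp hpj fun t' ht' s' hs' b q hq => ?_
  obtain ⟨ht', htt'⟩ := Finset.mem_Icc.1 ht'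
  obtain ⟨hs', hst'⟩ := Finset.mem_Icc.1 hs'
  by_cases hdiag : t' = t ∧ s' = t
  · obtain ⟨rfl, rfl⟩ := hdiag
    by_cases hactive : b = a ∧ step L a q < j
    · obtain ⟨rfl, hstep⟩ := hactive
      obtain ⟨i, -, hi⟩ := exists_step_eq hL b hq
      have hΓ_one := h.abs_Γ_diag_le (a := b) (b := b) hL ht hq hj
      refine integrandBound_of_step_lt hL hM0 hM0.le hi (by omega)
        ((abs_mul_mul_le hΓ_one (ih i (by omega) hq hi) hΓ_one).trans ?_)
      rw [one_mul, mul_one]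
      exact le_mul_of_one_le_left (mul_nonneg covGain_nonneg (envelope_nonneg hM0.le _)) hM
    · rw [h.Γ_diag hL ht hq hj, if_neg hactive, mul_zero, abs_zero]
      exact integrandBound_of_le hM0.le hM0.le
        (mul_nonneg (sq_nonneg M) (envelope_nonneg hM0.le _))
  · refine integrandBound_of_le hM0.le hM0.le ((h.abs_integrand_le_of_not_diag hM hB hL ht hj
      (fun r hr hrt b => hΓ r hr hrt b j hj) hC ht' htt' hs' hst' hdiag hq).trans ?_)
    rw [← sq]
    gcongr
    simpa only [envelope_zero] using
      envelope_mono (T := T) hM0 hM0.le (div_mem_Icc hj).1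

theorem abs_Γ_node_le_offDiagBound (hinit : |bif a then χ t else ξ t| ≤ X) {r : ℤ}
    (hr : -1 ≤ r) (hrt : r ≤ t) (b : Bool) (hj : j ≤ L) {q : ℝ} (hq : q ∈ Set.Ioc 0 1) :
    |Γ t r a b (node L a j) q| ≤ offDiagBound T M X := by
  have hX : 0 ≤ X := (abs_nonneg _).trans hinit
  obtain hrt | rfl := hrt.lt_or_eq
  · calc |Γ t r a b (node L a j) q|
        ≤ envelope T M X (j / L) :=
          (h.abs_Γ_le_envelope_and_abs_C_le hM hB hL ht hinit hj).1 r hr hrt b q hq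
      _ ≤ envelope T M X 1 := envelope_mono (one_pos.trans_le hM) hX (div_mem_Icc hj).2
      _ ≤ offDiagBound T M X := (le_max_left _ _).trans (le_max_right _ _)
  · exact (h.abs_Γ_diag_le hL ht hq hj).trans (hM.trans (le_max_left _ _))

theorem abs_C_le_offDiagBound (hinit : |bif a then χ t else ξ t| ≤ X) {s : ℕ} (hs : s < t)
    {p : ℝ} (hp : p ∈ Set.Ioc 0 1) : |C t s a p| ≤ offDiagBound T M X := by
  have hX : 0 ≤ X := (abs_nonneg _).trans hinit
  obtain ⟨i, hi, hpi⟩ := exists_step_eq hL a hp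
  calc |C t s a p|
      ≤ covGain T M * envelope T M X (i / L) :=
        (h.abs_Γ_le_envelope_and_abs_C_le hM hB hL ht hinit le_rfl).2 i hi s hs p hp hpi
    _ ≤ covGain T M * envelope T M X 1 :=
        mul_le_mul_of_nonneg_left
          (envelope_mono (one_pos.trans_le hM) hX (div_mem_Icc hi.le).2) covGain_nonneg
    _ ≤ offDiagBound T M X := (le_max_right _ _).trans (le_max_right _ _)

theorem isSweepBound_sweepBound (hinit : |bif a then χ t else ξ t| ≤ X) :
    IsSweepBound L t a (sweepBound T M X) Γ C := by
  have hM_le : M ≤ offDiagBound T M X := le_max_left _ _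
  have hM₁ : 1 ≤ offDiagBound T M X := hM.trans hM_le
  have hΓ := fun (r : ℤ) hr hrt b j hj q hq =>
    h.abs_Γ_node_le_offDiagBound (r := r) (j := j) (q := q) hM hB hL ht hinit hr hrt b hj hq
  refine ⟨fun r hr b x hx q hq => ?_, fun s hs p hp => ?_⟩
  · obtain ⟨j, hj, hxj⟩ := h.exists_eq_node hL a hx
    obtain hrt | hrt := le_or_gt r t
    · rw [hxj t ht r hr a b q hq]
      exact (hΓ r hr hrt b j hj q hq).trans (le_max_left _ _)
    · rw [h.Γ_vanish t r hrt, abs_zero]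
      exact (zero_le_one.trans hM₁).trans (le_max_left _ _)
  · obtain hs | rfl := hs.lt_or_eq
    · exact (h.abs_C_le_offDiagBound hM hB hL ht hinit hs hp).trans (le_max_left _ _)
    · obtain ⟨i, hi, hpi⟩ := exists_step_eq hL a hp
      refine (h.abs_C_diag_le hM₁ (fun u hu a => (hB u hu a).mono hM_le) hL ht hΓ
        (fun u hu p hp => h.abs_C_le_offDiagBound hM hB hL ht hinit hu hp) hp hpi).trans ?_
      refine (mul_le_mul_of_nonneg_left ?_ covGain_nonneg).trans (le_max_right _ _)
      have hM₁ := one_pos.trans_le hM₁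
      exact envelope_mono hM₁ hM₁.le (div_mem_Icc hi.le).2

end PriorBounds

end Bounds

theorem exists_uniform_bound (T : ℕ) (ξ : ℕ → ℝ) {ℓ' : ℕ → ℝ → ℝ}
    (hℓ' : ∀ t, Continuous (ℓ' t)) {n : ℕ} (hn : n ≤ T) :
    ∃ M, 1 ≤ M ∧ ∀ L, 0 < L → ∀ Γ C f χ, IsLinearTP T L ξ ℓ' Γ C f χ →
      ∀ t < n, ∀ a, IsSweepBound L t a M Γ C := by
  induction n with
  | zero => exact ⟨1, le_rfl, fun _ _ _ _ _ _ _ t ht => absurd ht t.not_lt_zero⟩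
  | succ n ih =>
    obtain ⟨M, hM, hB⟩ := ih (by omega)
    set B₀ := sweepBound T M |ξ n|
    obtain ⟨D, hD⟩ := (isCompact_Icc (a := -B₀) (b := B₀)).exists_bound_of_continuousOn
      (hℓ' n).continuousOn
    set B₁ := sweepBound T M D
    refine ⟨max M (max B₀ B₁), hM.trans (le_max_left _ _),
      fun L hL Γ C f χ h t ht => ?_⟩
    have hprior := hB L hL Γ C f χ h
    obtain ht | rfl := (Nat.lt_succ_iff.1 ht).lt_or_eq
    · exact fun a => (hprior t ht a).mono (le_max_left _ _)
    have hfwd : IsSweepBound L t false B₀ Γ C :=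
      h.isSweepBound_sweepBound hM hprior hL hn le_rfl
    have hχ : |χ t| ≤ D := by
      have hf : |f t| ≤ B₀ := by
        rw [h.f_def t hn]
        exact hfwd.abs_Γ_le (-1) le_rfl true 1 (by simp) 1 (by simp)
      rw [h.χ_def t hn]
      exact hD (f t) (abs_le.1 hf)
    have hbwd : IsSweepBound L t true B₁ Γ C :=
      h.isSweepBound_sweepBound hM hprior hL hn hχ
    rintro (_ | _)
    · exact hfwd.mono ((le_max_left _ _).trans (le_max_right _ _))
    · exact hbwd.mono ((le_max_right _ _).trans (le_max_right _ _))

/-! ### Increments in the base variable -/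

/-- The total increment, over all grid depths, of `Γ t r a b` when its base variable moves from
`q` to `q + 1 / L`. -/
noncomputable def baseVariation (L : ℕ) (Γ : ℕ → ℤ → Bool → Bool → ℝ → ℝ → ℝ) (t : ℕ) (r : ℤ)
    (a b : Bool) (q : ℝ) : ℝ :=
  ∑ j ∈ range (L + 1), |Γ t r a b (j / L) (q + 1 / L) - Γ t r a b (j / L) q|

theorem baseVariation_nonneg {L : ℕ} {Γ : ℕ → ℤ → Bool → Bool → ℝ → ℝ → ℝ} {t : ℕ} {r : ℤ}
    {a b : Bool} {q : ℝ} : 0 ≤ baseVariation L Γ t r a b q :=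
  sum_nonneg fun _ _ => abs_nonneg _

theorem baseVariation_eq_sum_node {L : ℕ} (hL : 0 < L) (Γ : ℕ → ℤ → Bool → Bool → ℝ → ℝ → ℝ)
    (t : ℕ) (r : ℤ) (a b : Bool) (q : ℝ) (a' : Bool) :
    baseVariation L Γ t r a b q =
      ∑ j ∈ range (L + 1), |Γ t r a b (node L a' j) (q + 1 / L) - Γ t r a b (node L a' j) q| :=
  (sum_node hL a' fun x => |Γ t r a b x (q + 1 / L) - Γ t r a b x q|).symm

section Increments

variable {T L : ℕ} {ξ : ℕ → ℝ} {ℓ' : ℕ → ℝ → ℝ} {Γ : ℕ → ℤ → Bool → Bool → ℝ → ℝ → ℝ}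
  {C : ℤ → ℤ → Bool → ℝ → ℝ} {f χ : ℕ → ℝ} (h : IsLinearTP T L ξ ℓ' Γ C f χ) {t j : ℕ} {r : ℤ}
  {a b : Bool} {M q : ℝ} (hL : 0 < L) (ht : t < T) (hq : q ∈ Set.Ioc 0 1)
  (hq' : q + 1 / L ∈ Set.Ioc 0 1)

include h hL ht hq hq'

theorem baseVariation_diag_le : baseVariation L Γ t t a b q ≤ 1 := by
  set J : ℕ := (max (step L a q) (step L a (q + 1 / L))).toNat
  have hadj := (abs_eq zero_le_one).1 (abs_step_add_one_div_sub_step hL a q)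
  rw [baseVariation_eq_sum_node hL _ _ _ _ _ _ a]
  calc ∑ j ∈ range (L + 1), |Γ t t a b (node L a j) (q + 1 / L) - Γ t t a b (node L a j) q|
      ≤ ∑ j ∈ range (L + 1), if j = J then (1 : ℝ) else 0 := sum_le_sum fun j hj => by
        have hj : j ≤ L := Nat.lt_succ_iff.1 (Finset.mem_range.1 hj)
        rw [h.Γ_diag hL ht hq' hj, h.Γ_diag hL ht hq hj]
        by_cases hb : b = a
        · simp only [hb, true_and]
          split_ifs <;> first | omega | norm_num
        · simp only [hb, false_and, if_false, sub_self, abs_zero]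
          split_ifs <;> norm_num
    _ ≤ 1 := by
        rw [sum_ite_eq']
        split_ifs <;> norm_num

variable (hM : 1 ≤ M) (hB : ∀ t < T, ∀ a, IsSweepBound L t a M Γ C)

include hM hB

theorem abs_increment_node_le_sum_range (hr : -1 ≤ r) (hrt : r < t) (hj : j ≤ L) :
    |Γ t r a b (node L a j) (q + 1 / L) - Γ t r a b (node L a j) q|
      ≤ 2 * M / L * ∑ i ∈ range (j + 1), ∑ u ∈ range t,
        |Γ u r (!a) b (node L a i) (q + 1 / L) - Γ u r (!a) b (node L a i) q| := by
  set Δ : ℕ → ℕ → ℝ := fun u i =>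
    Γ u r (!a) b (node L a i) (q + 1 / L) - Γ u r (!a) b (node L a i) q
  induction j with
  | zero =>
    rw [h.Γ_node_zero ht hr hrt.le hq, h.Γ_node_zero ht hr hrt.le hq', sub_self, abs_zero]
    positivity
  | succ j ih =>
    set K : ℕ → ℝ := fun u => Γ t u a (!a) (node L a j) (layer L a j) - C t u a (layer L a j)
    have hK : ∀ u ∈ range t, |K u| ≤ 2 * M := fun u hu => by
      have hp := layer_mem_Ioc a hj
      rw [two_mul]
      exact (abs_sub _ _).trans (add_le_add
        ((hB t ht a).abs_Γ_le u (by omega) _ _ (node_mem_Icc a (by omega)) _ hp)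
        ((hB t ht a).abs_C_le u (Finset.mem_range.1 hu).le _ hp))
    have hsum : |1 / L * ∑ u ∈ range t, Δ u (j + 1) * K u|
        ≤ 2 * M / L * ∑ u ∈ range t, |Δ u (j + 1)| := by
      calc _ = 1 / L * |∑ u ∈ range t, Δ u (j + 1) * K u| := by
            rw [abs_mul, abs_of_nonneg (show (0 : ℝ) ≤ 1 / L by positivity)]
        _ ≤ 1 / L * ∑ u ∈ range t, |Δ u (j + 1)| * (2 * M) := by
            gcongr
            refine (abs_sum_le_sum_abs _ _).trans (sum_le_sum fun u hu => ?_)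
            rw [abs_mul]
            exact mul_le_mul_of_nonneg_left (hK u hu) (abs_nonneg _)
        _ = 2 * M / L * ∑ u ∈ range t, |Δ u (j + 1)| := by
            rw [← sum_mul]
            ring
    rw [h.Γ_node_succ_sub ht hr hrt hj hq hq', sum_range_succ _ (j + 1), mul_add]
    exact (abs_add_le _ _).trans (add_le_add (ih (by omega)) hsum)

theorem abs_increment_node_le (hr : -1 ≤ r) (hrt : r < t) (hj : j ≤ L) :
    |Γ t r a b (node L a j) (q + 1 / L) - Γ t r a b (node L a j) q|
      ≤ 2 * M / L * ∑ u ∈ range t, baseVariation L Γ u r (!a) b q := by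
  refine (h.abs_increment_node_le_sum_range hL ht hq hq' hM hB hr hrt hj).trans ?_
  simp only [fun u => baseVariation_eq_sum_node hL Γ u r (!a) b q a]
  rw [sum_comm]
  gcongr

theorem baseVariation_le (hr : -1 ≤ r) : baseVariation L Γ t r a b q ≤ (1 + 4 * M) ^ t := by
  have : 0 < M := one_pos.trans_le hM
  induction t using Nat.strong_induction_on generalizing a with | _ t ih =>
  obtain hrt | rfl | hrt := lt_trichotomy r t
  · have hL' : (L + 1 : ℝ) ≤ 2 * L := by
      have : (1 : ℝ) ≤ L := by exact_mod_cast hL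
      linarith
    set V : ℝ := ∑ u ∈ range t, baseVariation L Γ u r (!a) b q
    calc baseVariation L Γ t r a b q
        ≤ (L + 1) * (2 * M / L * V) := by
          rw [baseVariation_eq_sum_node hL _ _ _ _ _ _ a]
          refine (sum_le_card_nsmul _ _ _ fun j hj => h.abs_increment_node_le hL ht hq hq' hM hB
            hr hrt (Nat.lt_succ_iff.1 (Finset.mem_range.1 hj))).trans_eq ?_
          rw [nsmul_eq_mul, card_range, Nat.cast_add_one]
      _ ≤ 2 * L * (2 * M / L * V) := by
          have hV : 0 ≤ V := sum_nonneg fun _ _ => baseVariation_nonneg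
          gcongr
      _ = 4 * M * V := by
          field_simp
          ring
      _ ≤ 4 * M * ∑ u ∈ range t, (1 + 4 * M) ^ u := by
          refine mul_le_mul_of_nonneg_left (sum_le_sum fun u hu => ?_) (by positivity)
          have hu := Finset.mem_range.1 hu
          exact ih u hu (hu.trans ht)
      _ ≤ (1 + 4 * M) ^ t := by
          have := mul_geom_sum (1 + 4 * M) t
          rw [add_sub_cancel_left] at this
          linarith
  · exact (h.baseVariation_diag_le hL ht hq hq').trans (one_le_pow₀ (by linarith))
  · simp only [baseVariation, h.Γ_vanish t r hrt, sub_self, abs_zero, sum_const_zero]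
    positivity

theorem abs_increment_le (hr : -1 ≤ r) (hrt : r < t) {x : ℝ} (hx : x ∈ Set.Icc 0 1) :
    |Γ t r a b x (q + 1 / L) - Γ t r a b x q| ≤ (1 + 4 * M) ^ T / L := by
  have : 0 < M := one_pos.trans_le hM
  obtain ⟨j, hj, hxj⟩ := h.exists_eq_node hL a hx
  rw [hxj t ht r hr a b q hq, hxj t ht r hr a b _ hq']
  calc _ ≤ 2 * M / L * ∑ u ∈ range t, baseVariation L Γ u r (!a) b q :=
        h.abs_increment_node_le hL ht hq hq' hM hB hr hrt hj
    _ ≤ 2 * M / L * ∑ u ∈ range t, (1 + 4 * M) ^ u := by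
        gcongr with u hu
        exact h.baseVariation_le hL ((Finset.mem_range.1 hu).trans ht) hq hq' hM hB hr
    _ = ((1 + 4 * M) ^ t - 1) / 2 / L := by
        rw [← mul_geom_sum]
        ring
    _ ≤ (1 + 4 * M) ^ T / L := by
        gcongr
        have : (1 + 4 * M) ^ t ≤ (1 + 4 * M) ^ T := pow_le_pow_right₀ (by linarith) ht.le
        linarith [pow_nonneg (show 0 ≤ 1 + 4 * M by linarith) t]

end Increments

end IsLinearTP

theorem stmt_14_general (T : ℕ) (ξ : ℕ → ℝ) (ℓ : ℕ → ℝ → ℝ) (hℓ : ∀ t, ContDiff ℝ 1 (ℓ t))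
    (Γ : ℕ → ℕ → ℤ → Bool → Bool → ℝ → ℝ → ℝ) (C : ℕ → ℤ → ℤ → Bool → ℝ → ℝ) (f χ : ℕ → ℕ → ℝ)
    (hTP : ∀ L : ℕ, 1 ≤ L → IsLinearTP T L ξ (fun t => deriv (ℓ t)) (Γ L) (C L) (f L) (χ L)) :
    ∃ c : ℝ, 0 < c ∧ ∀ L : ℕ, 1 ≤ L → ∀ s : ℕ, s < T → ∀ r : ℤ, -1 ≤ r → r < (s : ℤ) →
      ∀ a b : Bool, ∀ x ∈ Set.Icc (0 : ℝ) 1, ∀ q : ℝ, 0 < q → q + 1 / L ≤ 1 →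
        |Γ L s r a b x (q + 1 / L) - Γ L s r a b x q| ≤ c / L := by
  obtain ⟨M, hM, hB⟩ := IsLinearTP.exists_uniform_bound T ξ
    (fun t => (hℓ t).continuous_deriv le_rfl) le_rfl
  refine ⟨(1 + 4 * M) ^ T, by positivity, fun L hL s hs r hr hrs a b x hx q hq hq' => ?_⟩
  have hq₁ : q ∈ Set.Ioc 0 1 := ⟨hq, (le_add_of_nonneg_right (by positivity)).trans hq'⟩
  have hq₂ : q + 1 / L ∈ Set.Ioc 0 1 := ⟨by positivity, hq'⟩
  exact (hTP L hL).abs_increment_le hL hs hq₁ hq₂ hM (hB L hL _ _ _ _ (hTP L hL)) hr hrs hx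

/-- Near-diagonal increments in the second argument: for `L = 2^k`,
`k ≥ k₀`, grid points `p = i/L` with `2 ≤ i ≤ L − 1`, and `r < s ≤ T − 1`:
`|Γ^L_{s,r,0,1}(p − 1/L, p + 1/L) − Γ^L_{s,r,0,1}(p − 1/L, p)| ≤ c/L` and
`|Γ^L_{s,r,1,0}(p, p) − Γ^L_{s,r,1,0}(p, p − 1/L)| ≤ c/L`. -/
theorem stmt_14
    (T : ℕ) (hT : 1 ≤ T) (ξ : ℕ → ℝ) (ℓ : ℕ → ℝ → ℝ) (ℓ' : ℕ → ℝ → ℝ)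
    (hderiv : ∀ (t : ℕ) (x : ℝ), HasDerivAt (ℓ t) (ℓ' t x) x)
    (hlip : ∀ t : ℕ, LocallyLipschitz (ℓ' t))
    (Γ : ℕ → ℕ → ℤ → Bool → Bool → ℝ → ℝ → ℝ)
    (C : ℕ → ℤ → ℤ → Bool → ℝ → ℝ)
    (f χ : ℕ → ℕ → ℝ)
    (hTP : ∀ L : ℕ, 1 ≤ L → IsLinearTP T L ξ ℓ' (Γ L) (C L) (f L) (χ L)) :
    ∃ c : ℝ, 0 < c ∧ ∃ k₀ : ℕ, ∀ k : ℕ, k₀ ≤ k →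
      ∀ s : ℕ, s < T → ∀ r : ℤ, -1 ≤ r → r < (s : ℤ) →
        ∀ i : ℕ, 2 ≤ i → i ≤ 2 ^ k - 1 →
          |Γ (2 ^ k) s r false true ((i : ℝ) / (2 : ℝ) ^ k - 1 / (2 : ℝ) ^ k)
                ((i : ℝ) / (2 : ℝ) ^ k + 1 / (2 : ℝ) ^ k) -
              Γ (2 ^ k) s r false true ((i : ℝ) / (2 : ℝ) ^ k - 1 / (2 : ℝ) ^ k)
                ((i : ℝ) / (2 : ℝ) ^ k)| ≤ c / (2 : ℝ) ^ k ∧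
          |Γ (2 ^ k) s r true false ((i : ℝ) / (2 : ℝ) ^ k) ((i : ℝ) / (2 : ℝ) ^ k) -
              Γ (2 ^ k) s r true false ((i : ℝ) / (2 : ℝ) ^ k)
                ((i : ℝ) / (2 : ℝ) ^ k - 1 / (2 : ℝ) ^ k)| ≤ c / (2 : ℝ) ^ k := by
  obtain rfl : ℓ' = fun t => deriv (ℓ t) := funext₂ fun t x => (hderiv t x).deriv.symm
  obtain ⟨c, hc, hincr⟩ := stmt_14_general T ξ ℓ
    (fun t => contDiff_one_iff_deriv.2
      ⟨fun x => (hderiv t x).differentiableAt, (hlip t).continuous⟩) Γ C f χ hTP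
  refine ⟨c, hc, 0, fun k _ s hs r hr hrs i hi hiL => ?_⟩
  have hL : (0 : ℝ) < 2 ^ k := by positivity
  have hi' : (2 : ℝ) ≤ i := by exact_mod_cast hi
  have hiL' : (i : ℝ) + 1 ≤ 2 ^ k := by exact_mod_cast (by omega : i + 1 ≤ 2 ^ k)
  have hlo : 0 < (i : ℝ) / 2 ^ k - 1 / 2 ^ k := by
    rw [← sub_div]
    exact div_pos (by linarith) hL
  have hhi : (i : ℝ) / 2 ^ k + 1 / 2 ^ k ≤ 1 := by rwa [← add_div, div_le_one hL]
  have hstep : (0 : ℝ) < 1 / 2 ^ k := by positivity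
  have hincr := hincr (2 ^ k) Nat.one_le_two_pow s hs r hr hrs
  push_cast at hincr
  constructor
  · exact hincr false true _ ⟨hlo.le, by linarith⟩ _ (by linarith) hhi
  · simpa only [sub_add_cancel] using
      hincr true false _ ⟨by linarith, by linarith⟩ _ hlo (by rw [sub_add_cancel]; linarith)
end
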